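/- arXiv:2105.14228 — 7 statements merged into one kernel-verified Lean document; each statement's English description precedes it below -/
import Mathlib

section
/- Let f : 2^N → ℝ ∪ {-∞} be a set function whose effective domain contains the empty set. Then f is M♮-concave if and only if it satisfies (P1): for any X, Y ⊆ N with |X| < |Y|, f(X) + f(Y) ≤ max_{j ∈ Y \ X} { f(X ∪ {j}) + f(Y \ {j}) }. -/
/-- M♮-concavity of a set function with values in ℝ ∪ {-∞}. -/
def MnatConcave {α : Type*} [DecidableEq α] (f : Finset α → WithBot ℝ) : Prop :=
  ∀ X Y : Finset α, ∀ i ∈ X \ Y,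
    f X + f Y ≤
      max (f (X.erase i) + f (insert i Y))
        ((Y \ X).sup fun j => f (insert j (X.erase i)) + f ((insert i Y).erase j))

namespace MN

variable {α : Type*} [DecidableEq α]

def Mex (D : Finset α → Prop) (v : Finset α → ℝ) : Prop :=
  ∀ X Y, D X → D Y → ∀ i ∈ X, i ∉ Y →
    (D (X.erase i) ∧ D (insert i Y) ∧ v X + v Y ≤ v (X.erase i) + v (insert i Y)) ∨
    ∃ j ∈ Y, j ∉ X ∧ D (insert j (X.erase i)) ∧ D ((insert i Y).erase j) ∧
      v X + v Y ≤ v (insert j (X.erase i)) + v ((insert i Y).erase j)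

def Pex (D : Finset α → Prop) (v : Finset α → ℝ) : Prop :=
  ∀ X Y, D X → D Y → X.card < Y.card →
    ∃ j ∈ Y, j ∉ X ∧ D (insert j X) ∧ D (Y.erase j) ∧
      v X + v Y ≤ v (insert j X) + v (Y.erase j)

def pr (v : Finset α → ℝ) (p : α → ℝ) (Z : Finset α) : ℝ := v Z - ∑ j ∈ Z, p j

lemma pr_insert (v : Finset α → ℝ) (p : α → ℝ) {Z : Finset α} {j : α} (h : j ∉ Z) :
    pr v p (insert j Z) = pr v p Z + (v (insert j Z) - v Z) - p j := by
  unfold pr; rw [Finset.sum_insert h]; ring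

lemma pr_erase (v : Finset α → ℝ) (p : α → ℝ) {Z : Finset α} {j : α} (h : j ∈ Z) :
    pr v p (Z.erase j) = pr v p Z + (v (Z.erase j) - v Z) + p j := by
  unfold pr; rw [← Finset.add_sum_erase Z p h]; ring

lemma Mex.pr {D : Finset α → Prop} {v : Finset α → ℝ} (h : Mex D v) (p : α → ℝ) :
    Mex D (pr v p) := by
  intro X Y hX hY i hi hi'
  have e1 := pr_erase v p hi
  have e2 := pr_insert v p hi'
  rcases h X Y hX hY i hi hi' with ⟨a, b, c⟩ | ⟨j, hj, hj', a, b, c⟩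
  · left
    refine ⟨a, b, ?_⟩
    linarith
  · right
    refine ⟨j, hj, hj', a, b, ?_⟩
    have e3 := pr_insert v p (Z := X.erase i) (j := j) (by grind)
    have e4 := pr_erase v p (Z := insert i Y) (j := j) (by grind)
    linarith

lemma Pex.pr {D : Finset α → Prop} {v : Finset α → ℝ} (h : Pex D v) (p : α → ℝ) :
    Pex D (pr v p) := by
  intro X Y hX hY hc
  obtain ⟨j, hj, hj', a, b, c⟩ := h X Y hX hY hc
  refine ⟨j, hj, hj', a, b, ?_⟩
  have e1 := pr_erase v p hj
  have e2 := pr_insert v p hj'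
  linarith

lemma between {P Q : Prop} {a b : ℝ} (h : P → Q → a < b) :
    ∃ p : ℝ, (P → a < p) ∧ (Q → p < b) := by
  by_cases hP : P
  · by_cases hQ : Q
    · obtain ⟨p, h1, h2⟩ := exists_between (h hP hQ)
      exact ⟨p, fun _ => h1, fun _ => h2⟩
    · exact ⟨a + 1, fun _ => by linarith, fun h => absurd h hQ⟩
  · exact ⟨b - 1, fun h => absurd h hP, fun _ => by linarith⟩

/-- Submodularity on the domain. -/
lemma Mex.sub {D : Finset α → Prop} {v : Finset α → ℝ} (h : Mex D v) {Y : Finset α} {i k : α}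
    (hi : i ∈ Y) (_hk : k ∈ Y) (hik : i ≠ k) (hY : D Y) (hY' : D ((Y.erase i).erase k)) :
    D (Y.erase i) ∧ D (Y.erase k) ∧
      v Y + v ((Y.erase i).erase k) ≤ v (Y.erase i) + v (Y.erase k) := by
  rcases h Y _ hY hY' i hi (by simp) with ⟨a, b, c⟩ | ⟨j, hj, hj', -⟩
  · have e : insert i ((Y.erase i).erase k) = Y.erase k := by ext; grind
    rw [e] at b c
    exact ⟨a, b, c⟩
  · grind

set_option maxHeartbeats 2000000 in
lemma fwd (D : Finset α → Prop) (n : ℕ) : ∀ v : Finset α → ℝ, Mex D v → ∀ X Y, D X → D Y →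
    X.card < Y.card → (X \ Y).card ≤ n →
    ∃ j ∈ Y, j ∉ X ∧ D (insert j X) ∧ D (Y.erase j) ∧
      v X + v Y ≤ v (insert j X) + v (Y.erase j) := by
  induction n with
  | zero =>
    intro v hv X Y hX hY hc hn
    obtain ⟨i, hi, hi'⟩ : ∃ i ∈ Y, i ∉ X := Finset.exists_mem_notMem_of_card_lt_card hc
    have hXY : X \ Y = ∅ := by simpa using hn
    rcases hv Y X hY hX i hi hi' with ⟨a, b, c⟩ | ⟨j, hj, hj', -⟩
    · exact ⟨i, hi, hi', b, a, by linarith⟩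
    · have : j ∈ X \ Y := by simp [hj, hj']
      simp [hXY] at this
  | succ n ih =>
    intro v hv X Y hX hY hc hn
    by_contra hcon
    have hp : ∀ j, ∃ p : ℝ, (j ∈ Y ∧ j ∉ X ∧ D (insert j X) → v (insert j X) - v X < p) ∧
        (j ∈ Y ∧ j ∉ X ∧ D (Y.erase j) → p < v Y - v (Y.erase j)) := by
      intro j
      apply between
      rintro ⟨h1, h2, h3⟩ ⟨-, -, h4⟩
      by_contra h5
      exact hcon ⟨j, h1, h2, h3, h4, by linarith⟩
    choose p hp1 hp2 using hp
    have hw := hv.pr p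
    have A : ∀ j ∈ Y, j ∉ X → D (insert j X) → pr v p (insert j X) < pr v p X := by
      intro j h1 h2 h3
      have := hp1 j ⟨h1, h2, h3⟩
      rw [pr_insert v p h2]; linarith
    have B : ∀ j ∈ Y, j ∉ X → D (Y.erase j) → pr v p (Y.erase j) < pr v p Y := by
      intro j h1 h2 h3
      have := hp2 j ⟨h1, h2, h3⟩
      rw [pr_erase v p h1]; linarith
    generalize pr v p = w at hw A B
    clear hp1 hp2 hcon
    clear hv p v
    obtain ⟨i0, hi0, hi0'⟩ : ∃ i ∈ Y, i ∉ X := Finset.exists_mem_notMem_of_card_lt_card hc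
    rcases hw Y X hY hX i0 hi0 hi0' with ⟨a, b, c⟩ | ⟨j, hj, hj', hD, -, -⟩
    · have := A i0 hi0 hi0' b
      have := B i0 hi0 hi0' a
      linarith
    classical
    obtain ⟨i, hiS, hmax⟩ := Finset.exists_max_image
      ((Y \ X).filter fun i => D (insert j (Y.erase i))) (fun i => w (insert j (Y.erase i)))
      ⟨i0, by simp [hi0, hi0', hD]⟩
    simp only [Finset.mem_filter, Finset.mem_sdiff] at hiS hmax
    obtain ⟨⟨hi, hi'⟩, hDi⟩ := hiS
    have hcard : (insert j (Y.erase i)).card = Y.card := by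
      rw [Finset.card_insert_of_notMem (by simp [hj']), Finset.card_erase_add_one hi]
    have hsd : X \ insert j (Y.erase i) = (X \ Y).erase j := by
      clear * - hi' hj hj'
      ext; grind
    have hjm : j ∈ X \ Y := by simp [hj, hj']
    obtain ⟨k, hk, hk', hDk, hDk', hle⟩ := ih w hw X (insert j (Y.erase i)) hX hDi (by omega)
      (by rw [hsd, Finset.card_erase_of_mem hjm]; omega)
    clear ih hcard hsd hc hn hD hjm
    have hkY : k ∈ Y := by grind
    have hki : i ≠ k := by grind
    have hkj : k ≠ j := by grind
    have hij : i ≠ j := by grind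
    have hlt := A k hkY hk' hDk
    have M := hw _ Y hDk' hY j (by grind) hj'
    have e1 : ((insert j (Y.erase i)).erase k).erase j = (Y.erase i).erase k := by
          clear * - hkY hki hkj hij hi hi' hj hj' hk'
          ext; grind
    rw [e1] at M
    rcases M with ⟨a, b, c⟩ | ⟨l, hl, hl', a, b, c⟩
    · obtain ⟨s1, s2, s3⟩ := hw.sub hi hkY hki hY a
      have b1 := B i hi hi' s1
      have b2 := B k hkY hk' s2
      have e2 : (insert j Y).erase i = insert j (Y.erase i) := by
          clear * - hkY hki hkj hij hi hi' hj hj' hk'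
          ext; grind
      have e3 : (insert j Y).erase k = insert j (Y.erase k) := by
          clear * - hkY hki hkj hij hi hi' hj hj' hk'
          ext; grind
      obtain ⟨t1, t2, t3⟩ := hw.sub (Y := insert j Y) (i := i) (k := k) (by grind) (by grind) hki b
        (by rw [e2]; exact hDk')
      rw [e2, e3] at t3
      rw [e3] at t2
      have := hmax k ⟨⟨hkY, hk'⟩, t2⟩
      linarith
    · have hl2 : l = i ∨ l = k := by grind
      rcases hl2 with rfl | rfl
      · have e2 : insert l ((Y.erase l).erase k) = Y.erase k := by
          clear * - hkY hki hkj hij hi hi' hj hj' hk'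
          ext; grind
        have e3 : (insert j Y).erase l = insert j (Y.erase l) := by
          clear * - hkY hki hkj hij hi hi' hj hj' hk'
          ext; grind
        rw [e2] at a c
        rw [e3] at c
        have := B k hkY hk' a
        linarith
      · have e2 : insert l ((Y.erase i).erase l) = Y.erase i := by
          clear * - hkY hki hkj hij hi hi' hj hj' hk'
          ext; grind
        have e3 : (insert j Y).erase l = insert j (Y.erase l) := by
          clear * - hkY hki hkj hij hi hi' hj hj' hk'
          ext; grind
        rw [e2] at a c
        rw [e3] at b c
        have := B i hi hi' a
        have := hmax l ⟨⟨hkY, hk'⟩, b⟩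
        linarith

/-- The domain is closed under taking subsets. -/
lemma Pex.erase {D : Finset α → Prop} {v : Finset α → ℝ} (h : Pex D v) (h0 : D ∅) (n : ℕ) :
    ∀ Y, D Y → Y.card = n → ∀ i ∈ Y, D (Y.erase i) := by
  induction n with
  | zero =>
    intro Y _ hc i hi
    rw [Finset.card_eq_zero] at hc
    simp [hc] at hi
  | succ n ih =>
    intro Y hY hc i hi
    obtain ⟨j, hj, -, -, hD, -⟩ := h ∅ Y h0 hY (by rw [Finset.card_empty, hc]; omega)
    by_cases hij : i = j
    · rwa [hij]
    have h2 := ih (Y.erase j) hD (by rw [Finset.card_erase_of_mem hj]; omega) i (by grind)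
    have hlt : ((Y.erase j).erase i).card < Y.card :=
      Finset.card_lt_card ⟨by grind, fun hs => by have := hs hi; grind⟩
    obtain ⟨k, hk, hk', a, b, -⟩ := h _ Y h2 hY hlt
    have : k = i ∨ k = j := by grind
    rcases this with rfl | rfl
    · exact b
    · have e : insert k ((Y.erase k).erase i) = Y.erase i := by ext; grind
      rwa [e] at a

lemma Pex.subset {D : Finset α → Prop} {v : Finset α → ℝ} (h : Pex D v) (h0 : D ∅)
    {X Y : Finset α} (hY : D Y) (hXY : X ⊆ Y) : D X := by
  induction hn : (Y \ X).card generalizing Y with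
  | zero =>
    have : Y \ X = ∅ := by simpa using hn
    have : X = Y := Finset.Subset.antisymm hXY (by simpa using this)
    rwa [this]
  | succ n ih =>
    obtain ⟨j, hj⟩ : (Y \ X).Nonempty := by rw [← Finset.card_pos]; omega
    have hj' := Finset.mem_sdiff.1 hj
    refine ih (h.erase h0 _ Y hY rfl j hj'.1) (by grind) ?_
    have : Y.erase j \ X = (Y \ X).erase j := by ext; grind
    rw [this, Finset.card_erase_of_mem hj]; omega

/-- Augmentation. -/
lemma Pex.aug {D : Finset α → Prop} {v : Finset α → ℝ} (h : Pex D v)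
    {X Y : Finset α} (hX : D X) (hY : D Y) (hc : X.card ≤ Y.card) :
    ∃ W, D W ∧ X ⊆ W ∧ W ⊆ X ∪ Y ∧ W.card = Y.card := by
  induction hn : Y.card - X.card generalizing X with
  | zero => exact ⟨X, hX, by simp, by simp, by omega⟩
  | succ n ih =>
    obtain ⟨j, hj, hj', a, -, -⟩ := h X Y hX hY (by omega)
    have e := Finset.card_insert_of_notMem hj'
    obtain ⟨W, w1, w2, w3, w4⟩ := ih a (by omega) (by omega)
    exact ⟨W, w1, by grind, by grind, w4⟩

/-- Submodularity. -/
lemma Pex.sub {D : Finset α → Prop} {v : Finset α → ℝ} (h : Pex D v) (h0 : D ∅)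
    {Z : Finset α} {a b : α}
    (ha : a ∉ Z) (hb : b ∉ Z) (hab : a ≠ b) (hD : D (insert a (insert b Z))) :
    v Z + v (insert a (insert b Z)) ≤ v (insert a Z) + v (insert b Z) := by
  have hZ : D Z := h.subset h0 hD (by grind)
  obtain ⟨j, hj, hj', -, -, c⟩ := h Z _ hZ hD
    (Finset.card_lt_card ⟨by grind, fun hs => by have := @hs a (by grind); grind⟩)
  have : j = a ∨ j = b := by grind
  rcases this with rfl | rfl
  · have e : (insert j (insert b Z)).erase j = insert b Z := by ext; grind
    rw [e] at c; exact c
  · have e : (insert a (insert j Z)).erase j = insert a Z := by ext; grind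
    rw [e] at c; linarith

/-- Three-element exchange. -/
lemma Pex.three {D : Finset α → Prop} {v : Finset α → ℝ} (h : Pex D v)
    {Z : Finset α} {a b c : α}
    (ha : a ∉ Z) (hb : b ∉ Z) (hc : c ∉ Z) (hab : a ≠ b) (hac : a ≠ c) (hbc : b ≠ c)
    (hD : D (insert a (insert b Z))) (hD' : D (insert c Z)) :
    (D (insert a (insert c Z)) ∧
      v (insert c Z) + v (insert a (insert b Z)) ≤ v (insert a (insert c Z)) + v (insert b Z)) ∨
    (D (insert b (insert c Z)) ∧
      v (insert c Z) + v (insert a (insert b Z)) ≤ v (insert b (insert c Z)) + v (insert a Z)) := by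
  obtain ⟨j, hj, hj', d, -, c⟩ := h _ _ hD' hD (by
    rw [Finset.card_insert_of_notMem hc, Finset.card_insert_of_notMem (by grind),
      Finset.card_insert_of_notMem hb]; omega)
  have : j = a ∨ j = b := by grind
  rcases this with rfl | rfl
  · have e : (insert j (insert b Z)).erase j = insert b Z := by ext; grind
    rw [e] at c; exact Or.inl ⟨d, c⟩
  · have e : (insert a (insert j Z)).erase j = insert a Z := by ext; grind
    rw [e] at c; exact Or.inr ⟨d, c⟩

/-- Four-point condition. -/
lemma Pex.four {D : Finset α → Prop} {v : Finset α → ℝ} (h : Pex D v) (h0 : D ∅)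
    {Z : Finset α} {a b c d : α}
    (ha : a ∉ Z) (hb : b ∉ Z) (hc : c ∉ Z) (hd : d ∉ Z)
    (hab : a ≠ b) (hac : a ≠ c) (had : a ≠ d) (hbc : b ≠ c) (hbd : b ≠ d) (hcd : c ≠ d)
    (hD : D (insert a (insert b Z))) (hD' : D (insert c (insert d Z))) :
    (D (insert a (insert c Z)) ∧ D (insert b (insert d Z)) ∧
      v (insert a (insert b Z)) + v (insert c (insert d Z)) ≤
        v (insert a (insert c Z)) + v (insert b (insert d Z))) ∨
    (D (insert a (insert d Z)) ∧ D (insert b (insert c Z)) ∧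
      v (insert a (insert b Z)) + v (insert c (insert d Z)) ≤
        v (insert a (insert d Z)) + v (insert b (insert c Z))) := by
  have Da : D (insert a Z) := h.subset h0 hD (by grind)
  have Db : D (insert b Z) := h.subset h0 hD (by grind)
  have Dc : D (insert c Z) := h.subset h0 hD' (by grind)
  have Dd : D (insert d Z) := h.subset h0 hD' (by grind)
  have t1 := h.three ha hb hc hab hac hbc hD Dc
  have t2 := h.three ha hb hd hab had hbd hD Dd
  have t3 := h.three hc hd ha hcd hac.symm had.symm hD' Da
  have t4 := h.three hc hd hb hcd hbc.symm hbd.symm hD' Db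
  rw [Finset.insert_comm c a, Finset.insert_comm d a] at t3
  rw [Finset.insert_comm c b, Finset.insert_comm d b] at t4
  rcases le_total (v (insert a (insert b Z)) + v (insert c Z) + v (insert d Z))
    (v (insert c (insert d Z)) + v (insert a Z) + v (insert b Z)) with t | t <;>
  rcases t1 with ⟨t1, t1'⟩ | ⟨t1, t1'⟩ <;> rcases t2 with ⟨t2, t2'⟩ | ⟨t2, t2'⟩ <;>
  rcases t3 with ⟨t3, t3'⟩ | ⟨t3, t3'⟩ <;> rcases t4 with ⟨t4, t4'⟩ | ⟨t4, t4'⟩ <;>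
  first
  | exact Or.inl ⟨by assumption, by assumption, by linarith⟩
  | exact Or.inr ⟨by assumption, by assumption, by linarith⟩

lemma Pex.exch {D : Finset α → Prop} {v : Finset α → ℝ} (h : Pex D v) (h0 : D ∅)
    {X Y : Finset α} {k : α} (hX : D X) (hY : D Y) (hk : k ∈ X) (hk' : k ∉ Y) :
    ∃ W, D W ∧ (W = insert k Y ∨ ∃ l ∈ Y, l ∉ X ∧ W = (insert k Y).erase l) := by
  by_cases hs : Y ⊆ X
  · exact ⟨insert k Y, h.subset h0 hX (by grind), Or.inl rfl⟩
  · have hlt : (X ∩ Y).card < Y.card :=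
      Finset.card_lt_card ⟨by grind, fun h => hs (fun x hx => by have := h hx; grind)⟩
    have hc1 : (insert k (X ∩ Y)).card = (X ∩ Y).card + 1 :=
      Finset.card_insert_of_notMem (by grind)
    have hc2 : (insert k Y).card = Y.card + 1 := Finset.card_insert_of_notMem hk'
    obtain ⟨W, w1, w2, w3, w4⟩ := h.aug (X := insert k (X ∩ Y)) (Y := Y)
      (h.subset h0 hX (by grind)) hY (by omega)
    have hW : W ⊆ insert k Y := by
      intro x hx
      have := w3 hx
      grind
    have h1 : (insert k Y \ W).card = 1 := by
      rw [Finset.card_sdiff_of_subset hW]; omega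
    obtain ⟨l, hl⟩ := Finset.card_eq_one.1 h1
    have hl1 : l ∈ insert k Y \ W := by simp [hl]
    have hmem : ∀ x, x ∈ insert k Y → x ∉ W → x = l := by
      intro x hx hx'
      have : x ∈ insert k Y \ W := by simp only [Finset.mem_sdiff]; exact ⟨hx, hx'⟩
      rw [hl] at this; simpa using this
    rw [Finset.mem_sdiff] at hl1
    have hkW : k ∈ W := w2 (by simp)
    have hlk : l ≠ k := by rintro rfl; exact hl1.2 hkW
    have hlY : l ∈ Y := by grind
    refine ⟨W, w1, Or.inr ⟨l, hlY, ?_, ?_⟩⟩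
    · intro hlX
      exact hl1.2 (w2 (by grind))
    · ext x
      constructor
      · intro hx
        have := hW hx
        grind
      · intro hx
        by_contra hx'
        have := hmem x (by grind) hx'
        grind

/-- Wrapper that keeps quantified hypotheses out of automation. -/
def Hold (P : Prop) : Prop := P

def Concl (D : Finset α → Prop) (v : Finset α → ℝ) (X Y : Finset α) (i : α) : Prop :=
    (D (X.erase i) ∧ D (insert i Y) ∧ v X + v Y ≤ v (X.erase i) + v (insert i Y)) ∨
    ∃ j ∈ Y, j ∉ X ∧ D (insert j (X.erase i)) ∧ D ((insert i Y).erase j) ∧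
      v X + v Y ≤ v (insert j (X.erase i)) + v ((insert i Y).erase j)

set_option maxHeartbeats 1000000 in
lemma case1 {D : Finset α → Prop} {w : Finset α → ℝ} (h : Pex D w) (h0 : D ∅)
    {X Y : Finset α} {i k : α} (hX : D X) (hY : D Y) (hi : i ∈ X) (hi' : i ∉ Y)
    (hk : k ∈ X) (hk' : k ∉ Y) (hik : i ≠ k)
    (ih : Hold (∀ W, D W → i ∉ W → (X \ W).card < (X \ Y).card → (W \ X).card ≤ (Y \ X).card →
      Concl D w X W i))
    (A0 : w (X.erase i) < w X) (B0 : D (insert i Y) → w (insert i Y) < w Y)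
    (A : Hold (∀ j ∈ Y, j ∉ X → D (insert j (X.erase i)) → w (insert j (X.erase i)) < w X))
    (B : Hold (∀ j ∈ Y, j ∉ X → D ((insert i Y).erase j) → w ((insert i Y).erase j) < w Y)) :
    False := by
  classical
  obtain ⟨W0, hW0, hW0'⟩ := h.exch h0 hX hY hk hk'
  obtain ⟨W, hWS, hmax⟩ := Finset.exists_max_image
    ((insert (insert k Y) ((Y \ X).image fun j => (insert k Y).erase j)).filter D) w
    ⟨W0, by
      rw [Finset.mem_filter, Finset.mem_insert, Finset.mem_image]
      refine ⟨?_, hW0⟩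
      rcases hW0' with e | ⟨l, l1, l2, e⟩
      · exact Or.inl e
      · exact Or.inr ⟨l, by simp [l1, l2], e.symm⟩⟩
  rw [Finset.mem_filter, Finset.mem_insert, Finset.mem_image] at hWS
  obtain ⟨hWc, hDW⟩ := hWS
  have m1 : D (insert k Y) → w (insert k Y) ≤ w W := by
    intro hD
    apply hmax
    rw [Finset.mem_filter, Finset.mem_insert]
    exact ⟨Or.inl rfl, hD⟩
  have m2 : Hold (∀ l ∈ Y, l ∉ X → D ((insert k Y).erase l) →
      w ((insert k Y).erase l) ≤ w W) := by
    intro l l1 l2 hD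
    apply hmax
    rw [Finset.mem_filter, Finset.mem_insert, Finset.mem_image]
    exact ⟨Or.inr ⟨l, by simp [l1, l2], rfl⟩, hD⟩
  clear hmax hW0' hW0
  have hkm : k ∈ X \ Y := by simp [hk, hk']
  have T : Hold (∀ j ∈ Y, j ∉ X → D (insert i (insert k (Y.erase j))) →
      w W < w (insert i (insert k (Y.erase j))) → False) := by
    intro j j1 j2 hD hlt
    have eY : insert j (Y.erase j) = Y := Finset.insert_erase j1
    have ei : insert i (Y.erase j) = (insert i Y).erase j := by ext; grind
    have ek : insert k (Y.erase j) = (insert k Y).erase j := by ext; grind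
    have t := h.three (Z := Y.erase j) (a := i) (b := k) (c := j) (by grind) (by grind)
      (by grind) hik (by grind) (by grind) hD (by rwa [eY])
    have di : D ((insert i Y).erase j) := h.subset h0 hD (by grind)
    have dk : D ((insert k Y).erase j) := h.subset h0 hD (by grind)
    rw [eY, ei] at t
    have b := B j j1 j2 di
    have m := m2 j j1 j2 dk
    rw [← ek] at m
    rcases t with ⟨d, t⟩ | ⟨d, t⟩
    · have := B0 d
      linarith
    · have := m1 d
      linarith
  rcases hWc with rfl | ⟨l, hl, rfl⟩
  · have s1 : X \ insert k Y = (X \ Y).erase k := by ext; grind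
    have s2 : insert k Y \ X = Y \ X := by ext; grind
    rcases ih (insert k Y) hDW (by grind) (by rw [s1]; exact Finset.card_erase_lt_of_mem hkm)
      (by rw [s2]) with ⟨a, b, c⟩ | ⟨j, hj, hj', a, b, c⟩
    · have := h.sub h0 hi' hk' hik b
      have := B0 (h.subset h0 b (by grind))
      linarith
    · have e : (insert i (insert k Y)).erase j = insert i (insert k (Y.erase j)) := by ext; grind
      have hjY : j ∈ Y := by grind
      rw [e] at b c
      have := A j hjY hj' a
      exact T j hjY hj' b (by linarith)
  · rw [Finset.mem_sdiff] at hl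
    obtain ⟨l1, l2⟩ := hl
    have s1 : X \ (insert k Y).erase l = (X \ Y).erase k := by ext; grind
    have s2 : (insert k Y).erase l \ X ⊆ Y \ X := by intro x; grind
    rcases ih _ hDW (by grind) (by rw [s1]; exact Finset.card_erase_lt_of_mem hkm)
      (Finset.card_le_card s2) with ⟨a, b, c⟩ | ⟨j, hj, hj', a, b, c⟩
    · have e : insert i ((insert k Y).erase l) = insert i (insert k (Y.erase l)) := by ext; grind
      rw [e] at b c
      exact T l l1 l2 b (by linarith)
    · have hjY : j ∈ Y := by grind
      have hjl : j ≠ l := by grind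
      have hjk : j ≠ k := by grind
      have hji : j ≠ i := by grind
      have hlk : l ≠ k := by grind
      have hli : l ≠ i := by grind
      have := A j hjY hj' a
      have e : (insert i ((insert k Y).erase l)).erase j =
        insert i (insert k ((Y.erase l).erase j)) := by ext; grind
      rw [e] at b c
      have eY : insert l (insert j ((Y.erase l).erase j)) = Y := by ext; grind
      have t := h.four h0 (Z := (Y.erase l).erase j) (a := i) (b := k) (c := l) (d := j)
        (by grind) (by grind) (by grind) (by grind) hik hli.symm hji.symm hlk.symm hjk.symm
        hjl.symm b (by rwa [eY])
      have e1 : insert i (insert l ((Y.erase l).erase j)) = (insert i Y).erase j := by ext; grind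
      have e2 : insert k (insert l ((Y.erase l).erase j)) = (insert k Y).erase j := by ext; grind
      have e3 : insert i (insert j ((Y.erase l).erase j)) = (insert i Y).erase l := by ext; grind
      have e4 : insert k (insert j ((Y.erase l).erase j)) = (insert k Y).erase l := by ext; grind
      rw [eY, e1, e2, e3, e4] at t
      rcases t with ⟨d1, d2, t⟩ | ⟨d1, d2, t⟩
      · have := B j hjY hj' d1
        linarith
      · have := B l l1 l2 d1
        have := m2 j hjY hj' d2
        linarith

set_option maxHeartbeats 1000000 in
lemma case2 {D : Finset α → Prop} {w : Finset α → ℝ} (h : Pex D w) (h0 : D ∅)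
    {X Y : Finset α} {i : α} (hX : D X) (hY : D Y) (hi : i ∈ X) (hi' : i ∉ Y)
    (huniq : ∀ k ∈ X, k ∉ Y → k = i)
    (ih1 : Hold (∀ j ∈ Y, j ∉ X → D (Y.erase j) → Concl D w X (Y.erase j) i))
    (ih2 : Hold (∀ j ∈ Y, j ∉ X → D (insert j X) → Concl D w (insert j X) Y i))
    (A0 : w (X.erase i) < w X) (B0 : D (insert i Y) → w (insert i Y) < w Y)
    (A : Hold (∀ j ∈ Y, j ∉ X → D (insert j (X.erase i)) → w (insert j (X.erase i)) < w X))
    (B : Hold (∀ j ∈ Y, j ∉ X → D ((insert i Y).erase j) → w ((insert i Y).erase j) < w Y)) :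
    False := by
  classical
  by_cases hne : ∃ d ∈ Y, d ∉ X
  swap
  · push Not at hne
    have e1 : X.erase i = Y := by ext; grind
    have e2 : insert i Y = X := by ext; grind
    rw [e2] at B0
    rw [e1] at A0
    have := B0 hX
    linarith
  obtain ⟨d, hd, hd'⟩ := hne
  by_cases hne2 : ∃ e ∈ Y, e ∉ X ∧ e ≠ d
  swap
  · push Not at hne2
    have e1 : insert d (X.erase i) = Y := by ext; grind
    have e2 : (insert i Y).erase d = X := by ext; grind
    have a := A d hd hd'
    have b := B d hd hd'
    rw [e1] at a
    rw [e2] at b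
    have := a hY
    have := b hX
    linarith
  obtain ⟨e, he, he', hed⟩ := hne2
  have hcard : X.card < Y.card := by
    have h1 : X.card ≤ ((Y.erase d).erase e).card + 1 := by
      rw [← Finset.card_erase_add_one hi]
      have : X.erase i ⊆ (Y.erase d).erase e := by intro x; grind
      have := Finset.card_le_card this
      omega
    have h2 : ((Y.erase d).erase e).card + 1 = (Y.erase d).card :=
      Finset.card_erase_add_one (by grind)
    have h3 := Finset.card_erase_add_one hd
    omega
  by_cases hj : ∃ j ∈ Y, j ∉ X ∧ w Y ≤ w (Y.erase j)
  · obtain ⟨j0, j01, j02, hj0⟩ := hj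
    obtain ⟨j, hjS, hmax⟩ := Finset.exists_max_image (Y \ X) (fun j => w (Y.erase j))
      ⟨j0, by simp [j01, j02]⟩
    simp only [Finset.mem_sdiff] at hjS hmax
    replace hmax : Hold _ := hmax
    obtain ⟨j1, j2⟩ := hjS
    have hj := hmax j0 ⟨j01, j02⟩
    rcases ih1 j j1 j2 (h.subset h0 hY (by grind)) with ⟨a, b, c⟩ | ⟨l, hl, hl', a, b, c⟩
    · have e : insert i (Y.erase j) = (insert i Y).erase j := by ext; grind
      rw [e] at b c
      have := B j j1 j2 b
      linarith
    · have hlY : l ∈ Y := by grind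
      have hlj : l ≠ j := by grind
      have hli : l ≠ i := by grind
      have hji : j ≠ i := by grind
      have := A l hlY hl' a
      have e : (insert i (Y.erase j)).erase l = insert i ((Y.erase j).erase l) := by ext; grind
      have eY : insert j (insert l ((Y.erase j).erase l)) = Y := by ext; grind
      rw [e] at b c
      have t := h.three (Z := (Y.erase j).erase l) (a := j) (b := l) (c := i) (by grind)
        (by grind) (by grind) hlj.symm hji hli (by rwa [eY]) b
      have e1 : insert j (insert i ((Y.erase j).erase l)) = (insert i Y).erase l := by ext; grind
      have e2 : insert l (insert i ((Y.erase j).erase l)) = (insert i Y).erase j := by ext; grind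
      have e3 : insert l ((Y.erase j).erase l) = Y.erase j := by ext; grind
      have e4 : insert j ((Y.erase j).erase l) = Y.erase l := by ext; grind
      rw [eY, e1, e2, e3, e4] at t
      rcases t with ⟨d, t⟩ | ⟨d, t⟩
      · have := B l hlY hl' d
        linarith
      · have := B j j1 j2 d
        have := hmax l ⟨hlY, hl'⟩
        linarith
  · push Not at hj
    obtain ⟨j0, j01, j02, hD0, -, hle⟩ := h X Y hX hY hcard
    have hlt := hj j0 j01 j02
    obtain ⟨j, hjS, hmax⟩ := Finset.exists_max_image ((Y \ X).filter fun j => D (insert j X))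
      (fun j => w (insert j X)) ⟨j0, by simp [j01, j02, hD0]⟩
    simp only [Finset.mem_sdiff, Finset.mem_filter] at hjS hmax
    replace hmax : Hold _ := hmax
    replace hj : Hold _ := hj
    obtain ⟨⟨j1, j2⟩, hDj⟩ := hjS
    have hj' := hmax j0 ⟨⟨j01, j02⟩, hD0⟩
    have hji : j ≠ i := by grind
    rcases ih2 j j1 j2 hDj with ⟨a, b, c⟩ | ⟨l, hl, hl', a, b, c⟩
    · have e : (insert j X).erase i = insert j (X.erase i) := by ext; grind
      rw [e] at a c
      have := A j j1 j2 a
      have := B0 b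
      linarith
    · have hlX : l ∉ X := by grind
      have hlj : l ≠ j := by grind
      have hli : l ≠ i := by grind
      have := B l hl hlX b
      have e : insert l ((insert j X).erase i) = insert j (insert l (X.erase i)) := by ext; grind
      have eX : insert i (X.erase i) = X := Finset.insert_erase hi
      rw [e] at a c
      have t := h.three (Z := X.erase i) (a := j) (b := l) (c := i) (by grind)
        (by grind) (by grind) hlj.symm hji hli a (by rwa [eX])
      rw [eX] at t
      have := A j j1 j2 (h.subset h0 a (by grind))
      have := A l hl hlX (h.subset h0 a (by grind))
      rcases t with ⟨d, t⟩ | ⟨d, t⟩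
      · linarith
      · have := hmax l ⟨⟨hl, hlX⟩, d⟩
        linarith

lemma bwd (D : Finset α → Prop) (h0 : D ∅) (n : ℕ) : ∀ v : Finset α → ℝ, Pex D v →
    ∀ X Y, D X → D Y → ∀ i ∈ X, i ∉ Y → (X \ Y).card + (Y \ X).card < n →
    Concl D v X Y i := by
  induction n with
  | zero => intro v hv X Y hX hY i hi hi' hn; omega
  | succ n ih =>
    replace ih : Hold _ := ih
    intro v hv X Y hX hY i hi hi' hn
    by_contra hcon
    have hcon1 : ∀ _ : D (X.erase i), ∀ _ : D (insert i Y),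
        v (insert i Y) - v Y < v X - v (X.erase i) := by
      intro h1 h2
      by_contra h3
      exact hcon (Or.inl ⟨h1, h2, by linarith⟩)
    have hDi : D (X.erase i) := hv.subset h0 hX (by grind)
    obtain ⟨q, hq1, hq2⟩ := between (P := D (insert i Y)) (Q := True)
      (fun h _ => hcon1 hDi h)
    have hp : ∀ j, ∃ p : ℝ, (j ∈ Y ∧ j ∉ X ∧ D (insert j (X.erase i)) →
          v (insert j (X.erase i)) - v X + q < p) ∧
        (j ∈ Y ∧ j ∉ X ∧ D ((insert i Y).erase j) → p < v Y - v ((insert i Y).erase j) + q) := by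
      intro j
      apply between
      rintro ⟨h1, h2, h3⟩ ⟨-, -, h4⟩
      by_contra h5
      exact hcon (Or.inr ⟨j, h1, h2, h3, h4, by linarith⟩)
    choose p0 hp1 hp2 using hp
    obtain ⟨p, hpi, hpj⟩ : ∃ p : α → ℝ, p i = q ∧ ∀ j, j ≠ i → p j = p0 j :=
      ⟨Function.update p0 i q, by simp, fun j hj => by simp [hj]⟩
    have hw := hv.pr p
    have A0 : pr v p (X.erase i) < pr v p X := by
      have := hq2 trivial
      rw [pr_erase v p hi]; linarith
    have B0 : D (insert i Y) → pr v p (insert i Y) < pr v p Y := by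
      intro hD
      have := hq1 hD
      rw [pr_insert v p hi']; linarith
    replace hpj : Hold _ := hpj
    replace hp1 : Hold _ := hp1
    replace hp2 : Hold _ := hp2
    have A : Hold (∀ j ∈ Y, j ∉ X → D (insert j (X.erase i)) →
        pr v p (insert j (X.erase i)) < pr v p X) := by
      intro j h1 h2 h3
      have := hp1 j ⟨h1, h2, h3⟩
      have := hpj j (by grind)
      rw [pr_insert v p (by grind), pr_erase v p hi]; linarith
    have B : Hold (∀ j ∈ Y, j ∉ X → D ((insert i Y).erase j) →
        pr v p ((insert i Y).erase j) < pr v p Y) := by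
      intro j h1 h2 h3
      have := hp2 j ⟨h1, h2, h3⟩
      have := hpj j (by grind)
      rw [pr_erase v p (by grind), pr_insert v p hi']; linarith
    by_cases hk : ∃ k ∈ X, k ∉ Y ∧ i ≠ k
    · obtain ⟨k, hk, hk', hik⟩ := hk
      exact case1 hw h0 hX hY hi hi' hk hk' hik
        (fun W hW hiW c1 c2 => ih _ hw X W hX hW i hi hiW (by omega)) A0 B0 A B
    · push Not at hk
      refine case2 hw h0 hX hY hi hi' (fun k h1 h2 => (hk k h1 h2).symm) ?_ ?_ A0 B0 A B
      · intro j h1 h2 h3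
        refine ih _ hw X _ hX h3 i hi (by grind) ?_
        have e1 : X \ Y.erase j = X \ Y := by ext; grind
        have e2 : Y.erase j \ X = (Y \ X).erase j := by ext; grind
        have := Finset.card_erase_lt_of_mem (s := Y \ X) (a := j) (by simp [h1, h2])
        rw [e1, e2]; omega
      · intro j h1 h2 h3
        refine ih _ hw _ Y h3 hY i (by grind) hi' ?_
        have e1 : insert j X \ Y = X \ Y := by ext; grind
        have e2 : Y \ insert j X = (Y \ X).erase j := by ext; grind
        have := Finset.card_erase_lt_of_mem (s := Y \ X) (a := j) (by simp [h1, h2])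
        rw [e1, e2]; omega

lemma add_le_iff (a b c d : WithBot ℝ) (ha : a ≠ ⊥) (hb : b ≠ ⊥) :
    a + b ≤ c + d ↔ c ≠ ⊥ ∧ d ≠ ⊥ ∧ a.unbotD 0 + b.unbotD 0 ≤ c.unbotD 0 + d.unbotD 0 := by
  induction a <;> induction b <;> induction c <;> induction d <;>
    simp_all [← WithBot.coe_add]

lemma Mex_iff (f : Finset α → WithBot ℝ) :
    MnatConcave f ↔ Mex (fun Z => f Z ≠ ⊥) (fun Z => (f Z).unbotD 0) := by
  unfold MnatConcave Mex
  refine forall_congr' fun X => forall_congr' fun Y => ?_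
  by_cases hX : f X = ⊥
  · simp [hX]
  by_cases hY : f Y = ⊥
  · simp [hY]
  have hb : ⊥ < f X + f Y := by
    rw [bot_lt_iff_ne_bot, Ne, WithBot.add_eq_bot]; tauto
  simp only [Finset.mem_sdiff, le_max_iff, Finset.le_sup_iff hb, add_le_iff _ _ _ _ hX hY]
  simp only [ne_eq, hX, hY, not_false_eq_true, forall_const, and_imp, and_assoc]

lemma Pex_iff (f : Finset α → WithBot ℝ) :
    (∀ X Y : Finset α, X.card < Y.card →
        f X + f Y ≤ (Y \ X).sup fun j => f (insert j X) + f (Y.erase j)) ↔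
      Pex (fun Z => f Z ≠ ⊥) (fun Z => (f Z).unbotD 0) := by
  unfold Pex
  refine forall_congr' fun X => forall_congr' fun Y => ?_
  by_cases hX : f X = ⊥
  · simp [hX]
  by_cases hY : f Y = ⊥
  · simp [hY]
  have hb : ⊥ < f X + f Y := by
    rw [bot_lt_iff_ne_bot, Ne, WithBot.add_eq_bot]; tauto
  simp only [Finset.mem_sdiff, Finset.le_sup_iff hb, add_le_iff _ _ _ _ hX hY]
  simp only [ne_eq, hX, hY, not_false_eq_true, forall_const, and_assoc]

end MN

theorem stmt_1 {α : Type*} [Fintype α] [DecidableEq α] (f : Finset α → WithBot ℝ)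
    (h0 : f ∅ ≠ ⊥) :
    MnatConcave f ↔
      ∀ X Y : Finset α, X.card < Y.card →
        f X + f Y ≤ (Y \ X).sup fun j => f (insert j X) + f (Y.erase j) := by
  rw [MN.Mex_iff, MN.Pex_iff]
  constructor
  · intro h X Y hX hY hc
    exact MN.fwd _ _ _ h X Y hX hY hc le_rfl
  · intro h X Y hX hY i hi hi'
    exact MN.bwd (fun Z => f Z ≠ ⊥) h0 _ _ h X Y hX hY i hi hi' (Nat.lt_succ_self _)
end

section
/- A set function f : 2^N → ℝ ∪ {-∞} with nonempty effective domain is M♮-concave if and only if it satisfies both (P1): for all X, Y with |X| < |Y|, f(X) + f(Y) ≤ max_{j ∈ Y\X} { f(X+j) + f(Y−j) }, and (P2): for all X, Y with |X| = |Y| and all i ∈ X \ Y, f(X) + f(Y) ≤ max_{j ∈ Y\X} { f(X−i+j) + f(Y+i−j) }. -/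
namespace MnatAux

variable {α : Type*} [DecidableEq α]

def P1 (f : Finset α → WithBot ℝ) : Prop :=
  ∀ X Y : Finset α, X.card < Y.card → f X ≠ ⊥ → f Y ≠ ⊥ →
    ∃ j, j ∈ Y ∧ j ∉ X ∧ f X + f Y ≤ f (insert j X) + f (Y.erase j)

def P2 (f : Finset α → WithBot ℝ) : Prop :=
  ∀ X Y : Finset α, X.card = Y.card → ∀ i, i ∈ X → i ∉ Y → f X ≠ ⊥ → f Y ≠ ⊥ →
    ∃ j, j ∈ Y ∧ j ∉ X ∧ f X + f Y ≤ f (insert j (X.erase i)) + f ((insert i Y).erase j)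

def M (f : Finset α → WithBot ℝ) : Prop :=
  ∀ X Y : Finset α, ∀ i, i ∈ X → i ∉ Y → f X ≠ ⊥ → f Y ≠ ⊥ →
    f X + f Y ≤ f (X.erase i) + f (insert i Y) ∨
    ∃ j, j ∈ Y ∧ j ∉ X ∧ f X + f Y ≤ f (insert j (X.erase i)) + f ((insert i Y).erase j)

def Loc2 (f : Finset α → WithBot ℝ) : Prop :=
  ∀ S : Finset α, ∀ a b c d, a ∉ S → b ∉ S → c ∉ S → d ∉ S → a ≠ b → a ≠ c → a ≠ d →
    b ≠ c → b ≠ d → c ≠ d →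
    f (insert a (insert b S)) + f (insert c (insert d S)) ≤
      max (f (insert a (insert c S)) + f (insert b (insert d S)))
        (f (insert a (insert d S)) + f (insert b (insert c S)))

theorem ne_bot_of_le {a b c d : WithBot ℝ} (ha : a ≠ ⊥) (hb : b ≠ ⊥) (h : a + b ≤ c + d) :
    c ≠ ⊥ ∧ d ≠ ⊥ := by
  constructor <;> rintro rfl <;> simp_all

theorem ne_bot_of_lt {a b c : WithBot ℝ} (h : c < a + b) : a ≠ ⊥ ∧ b ≠ ⊥ := by
  constructor <;> rintro rfl <;> simp_all

theorem arith4 {p q a1 b1 acd bcd ac ad bc bd : WithBot ℝ} (hp : p ≠ ⊥) (hq : q ≠ ⊥)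
    (h1 : p + q ≤ b1 + acd) (h2 : p + q ≤ a1 + bcd)
    (h3 : a1 + acd ≤ ac + ad) (h4 : b1 + bcd ≤ bc + bd) :
    p + q ≤ max (ac + bd) (ad + bc) := by
  obtain ⟨hb1, hacd⟩ := ne_bot_of_le hp hq h1
  obtain ⟨ha1, hbcd⟩ := ne_bot_of_le hp hq h2
  obtain ⟨hac, had⟩ := ne_bot_of_le ha1 hacd h3
  obtain ⟨hbc, hbd⟩ := ne_bot_of_le hb1 hbcd h4
  lift p to ℝ using hp
  lift q to ℝ using hq
  lift a1 to ℝ using ha1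
  lift b1 to ℝ using hb1
  lift acd to ℝ using hacd
  lift bcd to ℝ using hbcd
  lift ac to ℝ using hac
  lift ad to ℝ using had
  lift bc to ℝ using hbc
  lift bd to ℝ using hbd
  rw [le_max_iff]
  norm_cast at *
  by_contra! h
  linarith [h.1, h.2]

theorem exists_w {a b : WithBot ℝ} {x y : ℝ} (h : a + b < (x : WithBot ℝ) + y) :
    ∃ w : ℝ, a + w ≤ x ∧ b < (w : WithBot ℝ) + y := by
  induction a using WithBot.recBotCoe with
  | bot =>
    induction b using WithBot.recBotCoe with
    | bot => exact ⟨0, by simp, by norm_cast; exact WithBot.bot_lt_coe _⟩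
    | coe b => exact ⟨b - y + 1, by simp, by norm_cast; linarith⟩
  | coe a =>
    induction b using WithBot.recBotCoe with
    | bot => exact ⟨x - a, by norm_cast; linarith, by norm_cast; exact WithBot.bot_lt_coe _⟩
    | coe b =>
      norm_cast at h
      exact ⟨x - a, by norm_cast; linarith, by norm_cast; linarith⟩

theorem lt_aux {a d : WithBot ℝ} {x y c w : ℝ} (ha : a + w ≤ x)
    (hd : (y : WithBot ℝ) + d < ((y + c + w : ℝ) : WithBot ℝ)) :
    a + d < (x : WithBot ℝ) + c := by
  induction a using WithBot.recBotCoe with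
  | bot => rw [WithBot.bot_add]; norm_cast; exact WithBot.bot_lt_coe _
  | coe a =>
    induction d using WithBot.recBotCoe with
    | bot => rw [WithBot.add_bot]; norm_cast; exact WithBot.bot_lt_coe _
    | coe d =>
      norm_cast at *
      linarith

theorem lt_aux1 {b : WithBot ℝ} {y c w : ℝ} (hb : b < (w : WithBot ℝ) + y) :
    b + c < ((y + c + w : ℝ) : WithBot ℝ) := by
  induction b using WithBot.recBotCoe with
  | bot => rw [WithBot.bot_add]; exact WithBot.bot_lt_coe _
  | coe b =>
    norm_cast at *
    linarith

theorem lt_aux2 {b d : WithBot ℝ} {y c w w' : ℝ} (hb : b < (w : WithBot ℝ) + y)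
    (hd : d + (-w' : ℝ) ≤ (c : WithBot ℝ) + (-w : ℝ)) :
    b + d < ((y + c + w' : ℝ) : WithBot ℝ) := by
  induction b using WithBot.recBotCoe with
  | bot => rw [WithBot.bot_add]; exact WithBot.bot_lt_coe _
  | coe b =>
    induction d using WithBot.recBotCoe with
    | bot => rw [WithBot.add_bot]; exact WithBot.bot_lt_coe _
    | coe d =>
      norm_cast at *
      linarith

/-- The key descent lemma. -/
theorem key {β : Type*} (T : Finset β) (A B C : β → WithBot ℝ) (D : β → β → WithBot ℝ)
    (R : β → β → Prop) (x y : WithBot ℝ) (hx : x ≠ ⊥) (hy : y ≠ ⊥)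
    (h : ∀ v ∈ T, A v + B v < x + y) (hC : ∃ v ∈ T, C v ≠ ⊥)
    (hloc : ∀ v ∈ T, ∀ k ∈ T, R v k → y + D v k ≤ max (B k + C v) (B v + C k)) :
    ∃ v ∈ T, C v ≠ ⊥ ∧ ∀ k ∈ T, R v k → A k + D v k < x + C v := by
  lift x to ℝ using hx
  lift y to ℝ using hy
  have hw : ∀ v, ∃ w : ℝ, v ∈ T → A v + w ≤ x ∧ B v < (w : WithBot ℝ) + y := by
    intro v
    by_cases hv : v ∈ T
    · obtain ⟨w, hw⟩ := exists_w (h v hv)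
      exact ⟨w, fun _ => hw⟩
    · exact ⟨0, fun h => absurd h hv⟩
  choose w hw using hw
  obtain ⟨v1, hv1, hCv1⟩ := hC
  obtain ⟨v, hv, hmax⟩ := Finset.exists_max_image T (fun v => C v + ((-w v : ℝ) : WithBot ℝ)) ⟨v1, hv1⟩
  have hCv : C v ≠ ⊥ := by
    intro hb
    have := hmax v1 hv1
    simp [hb, hCv1] at this
  refine ⟨v, hv, hCv, ?_⟩
  intro k hk hR
  have hl := hloc v hv k hk hR
  have hm := hmax k hk
  have hBk := (hw k hk).2
  have hBv := (hw v hv).2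
  have hAk := (hw k hk).1
  generalize C v = c at *
  lift c to ℝ using hCv
  refine lt_aux (y := y) hAk (lt_of_le_of_lt hl (max_lt (lt_aux1 hBk) (lt_aux2 hBv hm)))

theorem P1_iff (f : Finset α → WithBot ℝ) : P1 f ↔ (∀ X Y : Finset α, X.card < Y.card →
          f X + f Y ≤ (Y \ X).sup fun j => f (insert j X) + f (Y.erase j)) := by
  refine forall₃_congr fun X Y _ => ?_
  by_cases hX : f X = ⊥
  · simp [hX]
  by_cases hY : f Y = ⊥
  · simp [hY]
  rw [Finset.le_sup_iff (bot_lt_iff_ne_bot.2 (by simp [hX, hY]))]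
  simp [hX, hY, and_assoc]

theorem P2_iff (f : Finset α → WithBot ℝ) : P2 f ↔
    (∀ X Y : Finset α, X.card = Y.card → ∀ i ∈ X \ Y,
          f X + f Y ≤
            (Y \ X).sup fun j => f (insert j (X.erase i)) + f ((insert i Y).erase j)) := by
  refine forall₄_congr fun X Y _ i => ?_
  by_cases hX : f X = ⊥
  · simp [hX]
  by_cases hY : f Y = ⊥
  · simp [hY]
  rw [Finset.le_sup_iff (bot_lt_iff_ne_bot.2 (by simp [hX, hY]))]
  simp [hX, hY, and_assoc]

theorem M_iff (f : Finset α → WithBot ℝ) : M f ↔ MnatConcave f := by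
  refine forall₃_congr fun X Y i => ?_
  by_cases hX : f X = ⊥
  · simp [hX]
  by_cases hY : f Y = ⊥
  · simp [hY]
  rw [le_max_iff, Finset.le_sup_iff (bot_lt_iff_ne_bot.2 (by simp [hX, hY]))]
  simp [hX, hY, and_assoc]

theorem loc2_of_M {f : Finset α → WithBot ℝ} (hM : M f) : Loc2 f := by
  intro S a b c d ha hb hc hd hab hac had hbc hbd hcd
  by_cases hX : f (insert a (insert b S)) = ⊥
  · simp [hX]
  by_cases hY : f (insert c (insert d S)) = ⊥
  · simp [hY]
  rcases hM _ _ a (by simp) (by grind) hX hY with h1 | ⟨j, hj, hj', h1⟩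
  swap
  · have : j = c ∨ j = d := by grind
    rw [le_max_iff]
    rcases this with rfl | rfl
    · right
      have e1 : insert j ((insert a (insert b S)).erase a) = insert b (insert j S) := by grind
      have e2 : (insert a (insert j (insert d S))).erase j = insert a (insert d S) := by grind
      rw [e1, e2, add_comm (f (insert b _))] at h1
      exact h1
    · left
      have e1 : insert j ((insert a (insert b S)).erase a) = insert b (insert j S) := by grind
      have e2 : (insert a (insert c (insert j S))).erase j = insert a (insert c S) := by grind
      rw [e1, e2, add_comm (f (insert b _))] at h1
      exact h1
  rcases hM _ _ b (by simp) (by grind) hX hY with h2 | ⟨j, hj, hj', h2⟩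
  swap
  · have : j = c ∨ j = d := by grind
    rw [le_max_iff]
    rcases this with rfl | rfl
    · left
      have e1 : insert j ((insert a (insert b S)).erase b) = insert a (insert j S) := by grind
      have e2 : (insert b (insert j (insert d S))).erase j = insert b (insert d S) := by grind
      rw [e1, e2] at h2
      exact h2
    · right
      have e1 : insert j ((insert a (insert b S)).erase b) = insert a (insert j S) := by grind
      have e2 : (insert b (insert c (insert j S))).erase j = insert b (insert c S) := by grind
      rw [e1, e2] at h2
      exact h2
  have e1 : (insert a (insert b S)).erase a = insert b S := by grind
  have e2 : (insert a (insert b S)).erase b = insert a S := by grind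
  rw [e1] at h1
  rw [e2] at h2
  have n1 := ne_bot_of_le hX hY h1
  have n2 := ne_bot_of_le hX hY h2
  have sub : ∀ a, a ∉ S → a ≠ c → a ≠ d → f (insert a S) ≠ ⊥ →
      f (insert a (insert c (insert d S))) ≠ ⊥ →
      f (insert a S) + f (insert a (insert c (insert d S))) ≤
      f (insert a (insert c S)) + f (insert a (insert d S)) := by
    intro a ha hac had n1 n2
    rcases hM _ _ c (by simp) (by grind) n2 n1 with h | ⟨j, hj, hj', h⟩
    · have e1 : (insert a (insert c (insert d S))).erase c = insert a (insert d S) := by grind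
      have e2 : insert c (insert a S) = insert a (insert c S) := by grind
      rw [e1, e2, add_comm, add_comm (f (insert a (insert d S)))] at h
      exact h
    · grind
  have h3 := sub a ha hac had n2.1 n1.2
  have h4 := sub b hb hbc hbd n1.1 n2.2
  exact arith4 hX hY h1 h2 h3 (h4)

theorem loc2_of_P2 {f : Finset α → WithBot ℝ} (hP : P2 f) : Loc2 f := by
  intro S a b c d ha hb hc hd hab hac had hbc hbd hcd
  by_cases hX : f (insert a (insert b S)) = ⊥
  · simp [hX]
  by_cases hY : f (insert c (insert d S)) = ⊥
  · simp [hY]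
  obtain ⟨j, hj, hj', h1⟩ := hP _ _ (by grind) a (by simp) (by grind) hX hY
  have : j = c ∨ j = d := by grind
  rw [le_max_iff]
  rcases this with rfl | rfl
  · right
    have e1 : insert j ((insert a (insert b S)).erase a) = insert b (insert j S) := by grind
    have e2 : (insert a (insert j (insert d S))).erase j = insert a (insert d S) := by grind
    rw [e1, e2, add_comm (f (insert b _))] at h1
    exact h1
  · left
    have e1 : insert j ((insert a (insert b S)).erase a) = insert b (insert j S) := by grind
    have e2 : (insert a (insert c (insert j S))).erase j = insert a (insert c S) := by grind
    rw [e1, e2, add_comm (f (insert b _))] at h1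
    exact h1

theorem loc2_use {f : Finset α → WithBot ℝ} (hL : Loc2 f) (Y : Finset α) {v k i u : α}
    (hv : v ∈ Y) (hk : k ∈ Y) (hi : i ∉ Y) (hu : u ∉ Y) (hvk : v ≠ k) (hiu : i ≠ u) :
    f Y + f ((insert i ((insert u Y).erase v)).erase k) ≤
      max (f ((insert i Y).erase k) + f ((insert u Y).erase v))
        (f ((insert i Y).erase v) + f ((insert u Y).erase k)) := by
  have h := hL ((Y.erase v).erase k) v k i u (by grind) (by grind) (by grind) (by grind)
    (by grind) (by grind) (by grind) (by grind) (by grind) (by grind)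
  have e0 : insert v (insert k ((Y.erase v).erase k)) = Y := by grind
  have e1 : insert i (insert u ((Y.erase v).erase k)) =
    (insert i ((insert u Y).erase v)).erase k := by grind
  have e2 : insert v (insert i ((Y.erase v).erase k)) = (insert i Y).erase k := by grind
  have e3 : insert k (insert u ((Y.erase v).erase k)) = (insert u Y).erase v := by grind
  have e4 : insert v (insert u ((Y.erase v).erase k)) = (insert u Y).erase k := by grind
  have e5 : insert k (insert i ((Y.erase v).erase k)) = (insert i Y).erase v := by grind
  rw [e0, e1, e2, e3, e4, e5, add_comm (f ((insert u Y).erase k))] at h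
  exact h

theorem P1_of_M {f : Finset α → WithBot ℝ} (hM : M f) : P1 f := by
  intro X Y
  induction hn : (Y \ X).card generalizing Y with
  | zero =>
    intro hc
    have : Y ⊆ X := by
      rw [Finset.card_eq_zero, Finset.sdiff_eq_empty_iff_subset] at hn
      exact hn
    have := Finset.card_le_card this
    omega
  | succ n ih =>
    intro hc hX hY
    by_contra! hcon
    obtain ⟨j, hj⟩ : (Y \ X).Nonempty := Finset.card_pos.1 (by omega)
    rw [Finset.mem_sdiff] at hj
    rcases hM Y X j hj.1 hj.2 hY hX with h | ⟨u, hu, hu', h⟩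
    · have := hcon j hj.1 hj.2
      rw [add_comm, add_comm (f (Y.erase j))] at h
      exact absurd h (not_le.2 this)
    have hb := (ne_bot_of_le hY hX h).1
    obtain ⟨v, hv, hCv, hk⟩ := key (Y \ X) (fun v => f (insert v X)) (fun v => f (Y.erase v))
      (fun v => f (insert u (Y.erase v))) (fun v k => f ((insert u (Y.erase v)).erase k))
      (fun v k => k ≠ v) (f X) (f Y) hX hY
      (fun v hv => hcon v (Finset.mem_sdiff.1 hv).1 (Finset.mem_sdiff.1 hv).2)
      ⟨j, Finset.mem_sdiff.2 hj, hb⟩ (by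
        intro v hv k hk hkv
        rw [Finset.mem_sdiff] at hv hk
        clear hn hcon ih
        clear hc hb h hj
        by_cases hD : f ((insert u (Y.erase v)).erase k) = ⊥
        · simp [hD]
        rw [le_max_iff]
        rcases hM _ _ v hv.1 (by grind) hY hD with h | ⟨u', h1, h2, h⟩
        · right
          have e : insert v ((insert u (Y.erase v)).erase k) = insert u (Y.erase k) := by grind
          rw [e] at h
          exact h
        · left
          have : u' = u := by grind
          subst this
          have e : (insert v ((insert u' (Y.erase v)).erase k)).erase u' = Y.erase k := by grind
          rw [e, add_comm (f (insert _ _))] at h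
          exact h)
    rw [Finset.mem_sdiff] at hv
    obtain ⟨k, hk1, hk2, hk3⟩ := ih (insert u (Y.erase v)) (by
        have : insert u (Y.erase v) \ X = (Y \ X).erase v := by
          clear hn hcon ih hk hc
          grind
        rw [this, Finset.card_erase_of_mem (by grind)]; omega) (by
        rw [Finset.card_insert_of_notMem (by grind), Finset.card_erase_of_mem hv.1]; omega) hX hCv
    exact absurd hk3 (not_le.2 (hk k (by grind) (by grind)))

theorem P2_of_M {f : Finset α → WithBot ℝ} (hM : M f) : P2 f := by
  have hP1 := P1_of_M hM
  have hL := loc2_of_M hM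
  intro X Y
  induction hn : (Y \ X).card generalizing Y with
  | zero =>
    intro hc i hi hi'
    have : Y ⊆ X := by
      rw [Finset.card_eq_zero, Finset.sdiff_eq_empty_iff_subset] at hn
      exact hn
    have := Finset.eq_of_subset_of_card_le this hc.le
    grind
  | succ n ih =>
    intro hc i hi hi' hX hY
    by_contra! hcon
    have hcard := Finset.card_sdiff_comm hc
    obtain ⟨u, huX, huY, hui⟩ : ∃ u, u ∈ X ∧ u ∉ Y ∧ u ≠ i := by
      by_contra! hall
      have hs : X \ Y = {i} := by grind
      rw [hs] at hcard
      simp only [Finset.card_singleton] at hcard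
      obtain ⟨j, hj⟩ := Finset.card_eq_one.1 hcard.symm
      have hj1 : j ∈ Y \ X := by rw [hj]; simp
      rw [Finset.mem_sdiff] at hj1
      have := hcon j hj1.1 hj1.2
      have e1 : insert j (X.erase i) = Y := by
        ext a
        have h1 : a ∈ X \ Y ↔ a = i := by rw [hs]; simp
        have h2 : a ∈ Y \ X ↔ a = j := by rw [hj]; simp
        grind
      have e2 : (insert i Y).erase j = X := by
        ext a
        have h1 : a ∈ X \ Y ↔ a = i := by rw [hs]; simp
        have h2 : a ∈ Y \ X ↔ a = j := by rw [hj]; simp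
        grind
      rw [e1, e2, add_comm] at this
      exact lt_irrefl _ this
    have hdom : ∃ v ∈ Y \ X, f ((insert u Y).erase v) ≠ ⊥ := by
      rcases hM X Y u huX huY hX hY with h | ⟨v, h1, h2, h⟩
      · have hb := (ne_bot_of_le hX hY h).2
        obtain ⟨v, h1, h2, h3⟩ := hP1 X (insert u Y)
          (by rw [Finset.card_insert_of_notMem huY]; omega) hX hb
        exact ⟨v, by grind, (ne_bot_of_le hX hb h3).2⟩
      · exact ⟨v, by grind, (ne_bot_of_le hX hY h).2⟩
    obtain ⟨v, hv, hCv, hk⟩ := key (Y \ X) (fun v => f (insert v (X.erase i)))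
      (fun v => f ((insert i Y).erase v))
      (fun v => f ((insert u Y).erase v))
      (fun v k => f ((insert i ((insert u Y).erase v)).erase k))
      (fun v k => k ≠ v) (f X) (f Y) hX hY
      (fun v hv => hcon v (Finset.mem_sdiff.1 hv).1 (Finset.mem_sdiff.1 hv).2)
      hdom (by
        intro v hv k hk hkv
        rw [Finset.mem_sdiff] at hv hk
        exact loc2_use hL Y hv.1 hk.1 hi' huY hkv.symm hui.symm)
    rw [Finset.mem_sdiff] at hv
    obtain ⟨k, hk1, hk2, hk3⟩ := ih ((insert u Y).erase v) (by
        have : (insert u Y).erase v \ X = (Y \ X).erase v := by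
          clear hn hcon ih hk hc
          grind
        rw [this, Finset.card_erase_of_mem (by grind)]; omega) (by
        rw [Finset.card_erase_of_mem (by grind), Finset.card_insert_of_notMem huY]; omega)
        i hi (by grind) hX hCv
    exact absurd hk3 (not_le.2 (hk k (by grind) (by grind)))

/-- The exchange property for `|X| ≤ |Y|`. -/
theorem exch_le {f : Finset α → WithBot ℝ} (hP1 : P1 f) (hP2 : P2 f) (X Y : Finset α)
    (hc : X.card ≤ Y.card) (i : α) (hi : i ∈ X) (hi' : i ∉ Y) (hX : f X ≠ ⊥) (hY : f Y ≠ ⊥) :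
    ∃ j, j ∈ Y ∧ j ∉ X ∧ f X + f Y ≤ f (insert j (X.erase i)) + f ((insert i Y).erase j) := by
  induction hn : Y.card generalizing Y with
  | zero =>
    have := Finset.card_pos.2 ⟨i, hi⟩
    omega
  | succ n ih =>
    rcases hc.eq_or_lt with hc | hc
    · exact hP2 X Y hc i hi hi' hX hY
    by_contra! hcon
    obtain ⟨j, hj, hj', hj3⟩ := hP1 X Y hc hX hY
    obtain ⟨v, hv, hCv, hk⟩ := key (Y \ X) (fun v => f (insert v (X.erase i)))
      (fun v => f ((insert i Y).erase v))
      (fun v => f (Y.erase v))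
      (fun v k => f ((insert i (Y.erase v)).erase k))
      (fun v k => k ≠ v) (f X) (f Y) hX hY
      (fun v hv => hcon v (Finset.mem_sdiff.1 hv).1 (Finset.mem_sdiff.1 hv).2)
      ⟨j, by grind, (ne_bot_of_le hX hY hj3).2⟩ (by
        intro v hv k hk hkv
        rw [Finset.mem_sdiff] at hv hk
        clear hn hcon ih
        by_cases hD : f ((insert i (Y.erase v)).erase k) = ⊥
        · simp [hD]
        rw [le_max_iff]
        obtain ⟨j, h1, h2, h⟩ := hP1 _ Y (by
          rw [Finset.card_erase_of_mem (by grind), Finset.card_insert_of_notMem (by grind),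
            Finset.card_erase_of_mem (by grind)]
          omega) hD hY
        have : j = v ∨ j = k := by grind
        rcases this with rfl | rfl
        · left
          have e : insert j ((insert i (Y.erase j)).erase k) = (insert i Y).erase k := by grind
          rw [e, add_comm] at h
          exact h
        · right
          have e : insert j ((insert i (Y.erase v)).erase j) = (insert i Y).erase v := by grind
          rw [e, add_comm] at h
          exact h)
    rw [Finset.mem_sdiff] at hv
    have hcd : (Y.erase v).card = n := by rw [Finset.card_erase_of_mem hv.1]; omega
    obtain ⟨k, hk1, hk2, hk3⟩ := ih (Y.erase v) (by omega) (by grind) hCv hcd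
    exact absurd hk3 (not_le.2 (hk k (by grind) (by grind)))

/-- Remove an optional element. -/
def er (Y : Finset α) : Option α → Finset α
  | none => Y
  | some v => Y.erase v

/-- Insert an optional element. -/
def ins (Y : Finset α) : Option α → Finset α
  | none => Y
  | some v => insert v Y

theorem M_ge {f : Finset α → WithBot ℝ} (hP1 : P1 f) (hP2 : P2 f) (X Y : Finset α)
    (hc : Y.card ≤ X.card) (i : α) (hi : i ∈ X) (hi' : i ∉ Y) (hX : f X ≠ ⊥) (hY : f Y ≠ ⊥) :
    f X + f Y ≤ f (X.erase i) + f (insert i Y) ∨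
    ∃ j, j ∈ Y ∧ j ∉ X ∧ f X + f Y ≤ f (insert j (X.erase i)) + f ((insert i Y).erase j) := by
  have hL := loc2_of_P2 hP2
  induction hn : (X \ Y).card generalizing Y with
  | zero =>
    have := Finset.card_pos.2 ⟨i, Finset.mem_sdiff.2 ⟨hi, hi'⟩⟩
    omega
  | succ n ih =>
    rcases hc.eq_or_lt with hc | hc
    · exact Or.inr (hP2 X Y hc.symm i hi hi' hX hY)
    by_contra! hcon
    obtain ⟨hcon0, hcon⟩ := hcon
    -- a second element
    obtain ⟨u, huX, huY, hui⟩ : ∃ u, u ∈ X ∧ u ∉ Y ∧ u ≠ i := by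
      by_contra! hall
      have hs : X.erase i ⊆ Y := by grind
      have hs' := Finset.eq_of_subset_of_card_le hs (by rw [Finset.card_erase_of_mem hi]; omega)
      have e : insert i Y = X := by rw [← hs', Finset.insert_erase hi]
      rw [hs', e, add_comm] at hcon0
      exact lt_irrefl _ hcon0
    obtain ⟨u, huX, huY, hui, hdom⟩ : ∃ u, u ∈ X ∧ u ∉ Y ∧ u ≠ i ∧
        ∃ v ∈ Finset.insertNone (Y \ X), f (er (insert u Y) v) ≠ ⊥ := by
      obtain ⟨j, h1, h2, h3⟩ := hP1 Y X hc hY hX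
      obtain ⟨hb1, hb2⟩ := ne_bot_of_le hY hX h3
      by_cases hji : j = i
      · subst hji
        have hcd := Finset.card_erase_of_mem hi
        by_cases hc' : Y.card = (X.erase j).card
        · obtain ⟨v, hv1, hv2, hv3⟩ := hP2 _ _ hc'.symm u (by grind) huY hb2 hY
          exact ⟨u, huX, huY, hui, some v, by simp; grind, (ne_bot_of_le hb2 hY hv3).2⟩
        · obtain ⟨v, hv1, hv2, hv3⟩ := hP1 _ _ (by omega : Y.card < (X.erase j).card) hY hb2
          exact ⟨v, by grind, by grind, by grind, none, by simp, (ne_bot_of_le hY hb2 hv3).1⟩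
      · exact ⟨j, h1, h2, hji, none, by simp, hb1⟩
    have mem_T : ∀ v, some v ∈ Finset.insertNone (Y \ X) → v ∈ Y ∧ v ∉ X := by
      intro v hv
      simpa using hv
    have T_mem : ∀ v, v ∈ Y → v ∉ X → some v ∈ Finset.insertNone (Y \ X) := by
      intro v hv hv'
      simp [hv, hv']
    have hcu : (insert u Y).card = Y.card + 1 := Finset.card_insert_of_notMem huY
    have hloc1 : ∀ v, v ∈ Y → f Y + f (insert i ((insert u Y).erase v)) ≤
        max (f (insert i Y) + f ((insert u Y).erase v)) (f ((insert i Y).erase v) + f (insert u Y)) := by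
      intro v hv
      by_cases hD : f (insert i ((insert u Y).erase v)) = ⊥
      · simp [hD]
      rw [le_max_iff]
      obtain ⟨j, h1, h2, h⟩ := hP1 Y _ (by
        rw [Finset.card_insert_of_notMem (by grind), Finset.card_erase_of_mem (by grind)]
        omega) hY hD
      have : j = i ∨ j = u := by
        clear hcon hcon0 ih hn hc h hdom hcu
        grind
      rcases this with rfl | rfl
      · left
        have e : (insert j ((insert u Y).erase v)).erase j = (insert u Y).erase v := by
          clear hcon hcon0 ih hn hc h hdom hcu
          grind
        rw [e] at h
        exact h
      · right
        have e : (insert i ((insert j Y).erase v)).erase j = (insert i Y).erase v := by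
          clear hcon hcon0 ih hn hc h hdom hcu
          grind
        rw [e, add_comm (f (insert _ _))] at h
        exact h
    have hloc0 : f Y + f (insert i (insert u Y)) ≤ f (insert i Y) + f (insert u Y) := by
      by_cases hD : f (insert i (insert u Y)) = ⊥
      · simp [hD]
      obtain ⟨j, h1, h2, h⟩ := hP1 Y _ (by
        rw [Finset.card_insert_of_notMem (by grind)]
        omega) hY hD
      have : j = i ∨ j = u := by
        clear hcon hcon0 ih hn hc h hdom hcu
        grind
      rcases this with rfl | rfl
      · have e : (insert j (insert u Y)).erase j = insert u Y := by 
          clear hcon hcon0 ih hn hc h hdom hcu hloc1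
          grind
        rw [e] at h
        exact h
      · have e : (insert i (insert j Y)).erase j = insert i Y := by 
          clear hcon hcon0 ih hn hc h hdom hcu hloc1
          grind
        rw [e, add_comm (f (insert _ _))] at h
        exact h
    obtain ⟨v, hv, hCv, hk⟩ := key (Finset.insertNone (Y \ X)) (fun v => f (ins (X.erase i) v))
      (fun v => f (er (insert i Y) v))
      (fun v => f (er (insert u Y) v))
      (fun v k => f (er (insert i (er (insert u Y) v)) k))
      (fun v k => k = none ∨ k ≠ v) (f X) (f Y) hX hY
      (by
        rintro (_ | v) hv
        · exact hcon0
        · exact hcon v (mem_T v hv).1 (mem_T v hv).2)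
      hdom (by
        rintro (_ | v) hv (_ | k) hk hkv
        · exact hloc0.trans (le_max_left _ _)
        · have h := hloc1 k (mem_T k hk).1
          have e : (insert i ((insert u Y).erase k)) = (insert i (insert u Y)).erase k := by
            have := mem_T k hk
            clear hcon hcon0 ih hn hc hloc1 hloc0 hdom hcu h
            grind
          rw [e, max_comm] at h
          exact h
        · exact hloc1 v (mem_T v hv).1
        · exact loc2_use hL Y (mem_T v hv).1 (mem_T k hk).1 hi' huY (by grind) hui.symm)
    have hY' : X \ er (insert u Y) v = (X \ Y).erase u := by
      clear hcon hcon0 ih hn hc hloc1 hloc0 hdom hcu hk hCv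
      rcases v with _ | v
      · simp only [er]; grind
      · have := mem_T v hv
        simp only [er]; grind
    have hiY' : i ∉ er (insert u Y) v := by
      clear hcon hcon0 ih hn hc hloc1 hloc0 hdom hcu hk hCv hv
      rcases v with _ | v <;> simp only [er] <;> grind
    have hcY' : (er (insert u Y) v).card ≤ X.card := by
      rcases v with _ | v
      · simp only [er]; omega
      · simp only [er]
        have := Finset.card_erase_le (s := insert u Y) (a := v)
        omega
    rcases ih (er (insert u Y) v) hcY' hiY' hCv
      (by rw [hY', Finset.card_erase_of_mem (by grind)]; omega) with h | ⟨k, hk1, hk2, hk3⟩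
    · exact absurd h (not_le.2 (hk none (by simp) (Or.inl rfl)))
    · refine absurd hk3 (not_le.2 (hk (some k) (T_mem k ?_ hk2) (Or.inr ?_)))
      · rcases v with _ | v <;> simp only [er] at hk1 <;> grind
      · rintro rfl
        simp [er] at hk1

end MnatAux

theorem stmt_2 {α : Type*} [Fintype α] [DecidableEq α] (f : Finset α → WithBot ℝ)
    (hne : ∃ X, f X ≠ ⊥) :
    MnatConcave f ↔
      ((∀ X Y : Finset α, X.card < Y.card →
          f X + f Y ≤ (Y \ X).sup fun j => f (insert j X) + f (Y.erase j)) ∧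
       (∀ X Y : Finset α, X.card = Y.card → ∀ i ∈ X \ Y,
          f X + f Y ≤
            (Y \ X).sup fun j => f (insert j (X.erase i)) + f ((insert i Y).erase j))) := by
  rw [← MnatAux.M_iff, ← MnatAux.P1_iff, ← MnatAux.P2_iff]
  constructor
  · intro h
    exact ⟨MnatAux.P1_of_M h, MnatAux.P2_of_M h⟩
  · rintro ⟨h1, h2⟩ X Y i hi hi' hX hY
    rcases le_total X.card Y.card with hc | hc
    · exact Or.inr (MnatAux.exch_le h1 h2 X Y hc i hi hi' hX hY)
    · exact MnatAux.M_ge h1 h2 X Y hc i hi hi' hX hY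
end

section
/- A set function f : 2^N → ℝ ∪ {-∞} with nonempty effective domain is M♮-concave if and only if it satisfies the three conditions (P2), (P3), (P4): (P2) for |X| = |Y| and i ∈ X\Y, f(X)+f(Y) ≤ max_{j∈Y\X}{f(X−i+j)+f(Y+i−j)}; (P3) for |X| < |Y| and i ∈ X\Y, the same inequality; (P4) for |X| > |Y| and i ∈ X\Y, f(X)+f(Y) ≤ max( f(X−i)+f(Y+i), max_{j∈Y\X}{f(X−i+j)+f(Y+i−j)} ). -/
set_option linter.unusedTactic false
set_option linter.unusedVariables false

/-- Real-valued form of M♮-concavity: `D` is the effective domain, `g` the values on it. -/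
def MN {α : Type*} [DecidableEq α] (D : Finset α → Prop) (g : Finset α → ℝ) : Prop :=
  ∀ X Y : Finset α, D X → D Y → ∀ i ∈ X, i ∉ Y →
    (D (X.erase i) ∧ D (insert i Y) ∧ g X + g Y ≤ g (X.erase i) + g (insert i Y)) ∨
    ∃ j ∈ Y, j ∉ X ∧ D (insert j (X.erase i)) ∧ D ((insert i Y).erase j) ∧
      g X + g Y ≤ g (insert j (X.erase i)) + g ((insert i Y).erase j)

section aux
variable {α : Type*} [DecidableEq α] {D : Finset α → Prop} {g : Finset α → ℝ}

/-- Three-term exchange on sizes 2 and 1. -/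
theorem MN.T1 (h : MN D g) (Z : Finset α) (a b c : α) (ha : a ∉ Z) (hb : b ∉ Z) (hc : c ∉ Z)
    (hab : a ≠ b) (hac : a ≠ c) (hbc : b ≠ c)
    (h1 : D (insert a (insert b Z))) (h2 : D (insert c Z)) :
    (D (insert a Z) ∧ D (insert b (insert c Z)) ∧
      g (insert a (insert b Z)) + g (insert c Z) ≤ g (insert a Z) + g (insert b (insert c Z))) ∨
    (D (insert b Z) ∧ D (insert a (insert c Z)) ∧
      g (insert a (insert b Z)) + g (insert c Z) ≤ g (insert b Z) + g (insert a (insert c Z))) := by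
  rcases h _ _ h1 h2 a (by simp) (by grind) with ⟨p, q, r⟩ | ⟨j, hj, hj', p, q, r⟩
  · right
    have e : (insert a (insert b Z)).erase a = insert b Z := by grind
    rw [e] at p r
    exact ⟨p, q, r⟩
  · left
    have hjc : j = c := by grind
    subst hjc
    have e : insert j ((insert a (insert b Z)).erase a) = insert b (insert j Z) := by grind
    have e2 : (insert a (insert j Z)).erase j = insert a Z := by grind
    rw [e] at p r
    rw [e2] at q r
    exact ⟨q, p, by linarith⟩

theorem MN.P1sv (h : MN D g) (X : Finset α) (c : α → ℝ) (n : ℕ) :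
    ∀ Y : Finset α, (Y \ X).card = n → D X → D Y → X.card < Y.card →
      (∀ j ∈ Y, j ∉ X → (D (insert j X) → g (insert j X) ≤ g X + c j) ∧
        (D (Y.erase j) → g (Y.erase j) < g Y - c j)) → False := by
  induction n with
  | zero =>
    intro Y hn _ _ hlt _
    have : Y ⊆ X := by rwa [Finset.card_eq_zero, Finset.sdiff_eq_empty_iff_subset] at hn
    have := Finset.card_le_card this
    omega
  | succ n ih =>
    intro Y hn hX hY hlt hv
    obtain ⟨j, hj⟩ : (Y \ X).Nonempty := by
      rw [← Finset.card_pos]; omega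
    rw [Finset.mem_sdiff] at hj
    rcases h Y X hY hX j hj.1 hj.2 with ⟨p, q, r⟩ | ⟨k, hk, hk', p, q, r⟩
    · have h1 := (hv j hj.1 hj.2).1 q
      have h2 := (hv j hj.1 hj.2).2 p
      linarith
    · classical
      obtain ⟨v, hvm, hmax⟩ := Finset.exists_max_image
        ((Y \ X).filter fun v => D (insert k (Y.erase v)))
        (fun v => g (insert k (Y.erase v)) + c v) ⟨j, by simp [hj, p]⟩
      simp only [Finset.mem_filter, Finset.mem_sdiff] at hvm hmax
      obtain ⟨⟨hvY, hvX⟩, hvD⟩ := hvm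
      refine ih (insert k (Y.erase v)) ?_ hX hvD ?_ ?_
      · have e : insert k (Y.erase v) \ X = (Y \ X).erase v := by clear ih h hv hn; (try clear hmax); (try clear hlt); (try clear hle); (try clear heq); grind
        rw [e, Finset.card_erase_of_mem (by simp [hvY, hvX])]; omega
      · rw [Finset.card_insert_of_notMem (by clear ih h hv hn; (try clear hmax); (try clear hlt); (try clear hle); (try clear heq); grind), Finset.card_erase_of_mem hvY]; omega
      · intro w hw hwX
        have hwk : w ≠ k := by clear ih h hv hn; (try clear hmax); (try clear hlt); (try clear hle); (try clear heq); grind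
        have hwv : w ≠ v := by clear ih h hv hn; (try clear hmax); (try clear hlt); (try clear hle); (try clear heq); grind
        have hwY : w ∈ Y := by clear ih h hv hn; (try clear hmax); (try clear hlt); (try clear hle); (try clear heq); grind
        refine ⟨(hv w hwY hwX).1, fun hD => ?_⟩
        have e0 : insert w (insert v ((Y.erase v).erase w)) = Y := by clear ih h hv hn; (try clear hmax); (try clear hlt); (try clear hle); (try clear heq); grind
        have e1 : insert k ((Y.erase v).erase w) = (insert k (Y.erase v)).erase w := by clear ih h hv hn; (try clear hmax); (try clear hlt); (try clear hle); (try clear heq); grind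
        have e2 : insert w ((Y.erase v).erase w) = Y.erase v := by clear ih h hv hn; (try clear hmax); (try clear hlt); (try clear hle); (try clear heq); grind
        have e3 : insert v ((Y.erase v).erase w) = Y.erase w := by clear ih h hv hn; (try clear hmax); (try clear hlt); (try clear hle); (try clear heq); grind
        have e4 : insert v (insert k ((Y.erase v).erase w)) = insert k (Y.erase w) := by clear ih h hv hn; (try clear hmax); (try clear hlt); (try clear hle); (try clear heq); grind
        have e5 : insert w (insert k ((Y.erase v).erase w)) = insert k (Y.erase v) := by clear ih h hv hn; (try clear hmax); (try clear hlt); (try clear hle); (try clear heq); grind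
        have t := h.T1 ((Y.erase v).erase w) w v k (by clear ih h hv hn; (try clear hmax); (try clear hlt); (try clear hle); (try clear heq); grind) (by clear ih h hv hn; (try clear hmax); (try clear hlt); (try clear hle); (try clear heq); grind) (by clear ih h hv hn; (try clear hmax); (try clear hlt); (try clear hle); (try clear heq); grind) hwv hwk
          (by clear ih h hv hn; (try clear hmax); (try clear hlt); (try clear hle); (try clear heq); grind) (by rwa [e0]) (by rwa [e1])
        rw [e0, e4, e5, e1, e2, e3] at t
        rcases t with ⟨p, q, r⟩ | ⟨p, q, r⟩
        · have h1 := (hv v hvY hvX).2 p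
          have h2 := hmax w ⟨⟨hwY, hwX⟩, q⟩
          linarith
        · have h1 := (hv w hwY hwX).2 p
          linarith

theorem MN.P1 (h : MN D g) (X Y : Finset α) (hX : D X) (hY : D Y) (hlt : X.card < Y.card) :
    ∃ j ∈ Y, j ∉ X ∧ D (insert j X) ∧ D (Y.erase j) ∧
      g X + g Y ≤ g (insert j X) + g (Y.erase j) := by
  classical
  by_contra hcon
  push Not at hcon
  refine h.P1sv X (fun j => if D (insert j X) then g (insert j X) - g X
    else g Y - g (Y.erase j) - 1) _ Y rfl hX hY hlt ?_
  intro j hj hjX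
  by_cases hd : D (insert j X)
  · simp only [hd, if_true]
    refine ⟨fun _ => by linarith, fun h2 => ?_⟩
    have := hcon j hj hjX hd h2
    linarith
  · simp only [hd, if_false]
    exact ⟨fun h => h.elim, fun _ => by linarith⟩

/-- Covering step in the four-point exchange. -/
theorem MN.cover (h : MN D g) (Z : Finset α) (a b c d : α) (ha : a ∉ Z) (hb : b ∉ Z)
    (hc : c ∉ Z) (hd : d ∉ Z)
    (hab : a ≠ b) (hac : a ≠ c) (had : a ≠ d) (hbc : b ≠ c) (hbd : b ≠ d) (hcd : c ≠ d)
    (S : ℝ) (h1 : D (insert a (insert b Z)))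
    (Dc : D (insert c Z)) (Dd : D (insert d Z))
    (Dacd : D (insert a (insert c (insert d Z))))
    (Dbcd : D (insert b (insert c (insert d Z))))
    (sa : g (insert a Z) + g (insert b (insert c (insert d Z))) = S)
    (sb : g (insert b Z) + g (insert a (insert c (insert d Z))) = S)
    (sc : g (insert c Z) + g (insert a (insert b (insert d Z))) = S)
    (sd : g (insert d Z) + g (insert a (insert b (insert c Z))) = S) :
    (D (insert a (insert c Z)) ∧ D (insert b (insert d Z)) ∧
      2 * g (insert a (insert b Z)) + g (insert c Z) + g (insert d Z) ≤
        g (insert a (insert c Z)) + g (insert b (insert d Z)) + g (insert a Z) + g (insert b Z)) ∨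
    (D (insert a (insert d Z)) ∧ D (insert b (insert c Z)) ∧
      2 * g (insert a (insert b Z)) + g (insert c Z) + g (insert d Z) ≤
        g (insert a (insert d Z)) + g (insert b (insert c Z)) + g (insert a Z) + g (insert b Z)) := by
  have t1 := h.T1 Z a b c ha hb hc hab hac hbc h1 Dc
  have t2 := h.T1 Z a b d ha hb hd hab had hbd h1 Dd
  -- `acd` against `ab`
  have c1 : insert c (insert d (insert a Z)) = insert a (insert c (insert d Z)) := by grind
  have c2 : insert b (insert a Z) = insert a (insert b Z) := by grind
  have c3 : insert c (insert a Z) = insert a (insert c Z) := by grind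
  have c4 : insert d (insert a Z) = insert a (insert d Z) := by grind
  have c5 : insert d (insert a (insert b Z)) = insert a (insert b (insert d Z)) := by grind
  have c6 : insert c (insert a (insert b Z)) = insert a (insert b (insert c Z)) := by grind
  have t3 := h.T1 (insert a Z) c d b (by grind) (by grind) (by grind) hcd hbc.symm hbd.symm
    (by rwa [c1]) (by rwa [c2])
  rw [c1, c2, c3, c4, c5, c6] at t3
  have b1 : insert c (insert d (insert b Z)) = insert b (insert c (insert d Z)) := by grind
  have b3 : insert c (insert b Z) = insert b (insert c Z) := by grind
  have b4 : insert d (insert b Z) = insert b (insert d Z) := by grind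
  have b5 : insert d (insert a (insert b Z)) = insert a (insert b (insert d Z)) := by grind
  have b6 : insert c (insert a (insert b Z)) = insert a (insert b (insert c Z)) := by grind
  have t4 := h.T1 (insert b Z) c d a (by grind) (by grind) (by grind) hcd hac.symm had.symm
    (by rwa [b1]) (by exact h1)
  rw [b1, b3, b4, b5, b6] at t4
  rcases t1 with ⟨_, p1, r1⟩ | ⟨_, p1, r1⟩ <;> rcases t2 with ⟨_, p2, r2⟩ | ⟨_, p2, r2⟩
  · rcases t3 with ⟨p3, _, r3⟩ | ⟨p3, _, r3⟩
    · exact Or.inl ⟨p3, p2, by linarith⟩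
    · exact Or.inr ⟨p3, p1, by linarith⟩
  · exact Or.inr ⟨p2, p1, by linarith⟩
  · exact Or.inl ⟨p1, p2, by linarith⟩
  · rcases t4 with ⟨p3, _, r3⟩ | ⟨p3, _, r3⟩
    · exact Or.inr ⟨p2, p3, by linarith⟩
    · exact Or.inl ⟨p1, p3, by linarith⟩

/-- Moving one element in the four-point configuration. -/
theorem MN.move (h : MN D g) (Z : Finset α) (a b c d : α) (ha : a ∉ Z) (hb : b ∉ Z)
    (hc : c ∉ Z) (hd : d ∉ Z)
    (hab : a ≠ b) (hac : a ≠ c) (had : a ≠ d) (hbc : b ≠ c) (hbd : b ≠ d) (hcd : c ≠ d)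
    (h1 : D (insert a (insert b Z))) (h2 : D (insert c (insert d Z)))
    (n1 : D (insert a (insert c Z)) → D (insert b (insert d Z)) →
      g (insert a (insert c Z)) + g (insert b (insert d Z)) <
      g (insert a (insert b Z)) + g (insert c (insert d Z)))
    (n2 : D (insert a (insert d Z)) → D (insert b (insert c Z)) →
      g (insert a (insert d Z)) + g (insert b (insert c Z)) <
      g (insert a (insert b Z)) + g (insert c (insert d Z))) :
    D (insert b Z) ∧ D (insert a (insert c (insert d Z))) ∧
      g (insert b Z) + g (insert a (insert c (insert d Z))) =
      g (insert a (insert b Z)) + g (insert c (insert d Z)) := by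
  have e : (insert a (insert b Z)).erase a = insert b Z := by grind
  have key : D (insert b Z) ∧ D (insert a (insert c (insert d Z))) ∧
      g (insert a (insert b Z)) + g (insert c (insert d Z)) ≤
      g (insert b Z) + g (insert a (insert c (insert d Z))) := by
    rcases h _ _ h1 h2 a (by simp) (by grind) with ⟨p, q, r⟩ | ⟨j, hj, hj', p, q, r⟩
    · rw [e] at p r
      exact ⟨p, q, r⟩
    · exfalso
      rw [e] at p r
      have : j = c ∨ j = d := by grind
      rcases this with rfl | rfl
      · have e1 : (insert a (insert j (insert d Z))).erase j = insert a (insert d Z) := by grind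
        rw [Finset.insert_comm j b Z] at p r
        rw [e1] at q r
        have := n2 q p
        linarith
      · have e1 : (insert a (insert c (insert j Z))).erase j = insert a (insert c Z) := by grind
        rw [Finset.insert_comm j b Z] at p r
        rw [e1] at q r
        have := n1 q p
        linarith
  obtain ⟨p, q, r⟩ := key
  refine ⟨p, q, le_antisymm ?_ r⟩
  obtain ⟨j, hj, hj', p', q', r'⟩ := h.P1 _ _ p q (by
    rw [Finset.card_insert_of_notMem hb, Finset.card_insert_of_notMem (by grind),
      Finset.card_insert_of_notMem (by grind), Finset.card_insert_of_notMem hd]; omega)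
  have : j = a ∨ j = c ∨ j = d := by grind
  rcases this with rfl | rfl | rfl
  · have e1 : (insert j (insert c (insert d Z))).erase j = insert c (insert d Z) := by grind
    rw [e1] at r'
    exact r'
  · have e1 : (insert a (insert j (insert d Z))).erase j = insert a (insert d Z) := by grind
    rw [Finset.insert_comm j b Z] at p' r'
    rw [e1] at q' r'
    have := n2 q' p'
    linarith
  · have e1 : (insert a (insert c (insert j Z))).erase j = insert a (insert c Z) := by grind
    rw [Finset.insert_comm j b Z] at p' r'
    rw [e1] at q' r'
    have := n1 q' p'
    linarith

/-- Four-point exchange. -/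
theorem MN.T2 (h : MN D g) (Z : Finset α) (a b c d : α) (ha : a ∉ Z) (hb : b ∉ Z)
    (hc : c ∉ Z) (hd : d ∉ Z)
    (hab : a ≠ b) (hac : a ≠ c) (had : a ≠ d) (hbc : b ≠ c) (hbd : b ≠ d) (hcd : c ≠ d)
    (h1 : D (insert a (insert b Z))) (h2 : D (insert c (insert d Z))) :
    (D (insert a (insert c Z)) ∧ D (insert b (insert d Z)) ∧
      g (insert a (insert b Z)) + g (insert c (insert d Z)) ≤
      g (insert a (insert c Z)) + g (insert b (insert d Z))) ∨
    (D (insert a (insert d Z)) ∧ D (insert b (insert c Z)) ∧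
      g (insert a (insert b Z)) + g (insert c (insert d Z)) ≤
      g (insert a (insert d Z)) + g (insert b (insert c Z))) := by
  by_contra hcon
  push Not at hcon
  obtain ⟨n1, n2⟩ := hcon
  obtain ⟨Db, Dacd, sb⟩ := h.move Z a b c d ha hb hc hd hab hac had hbc hbd hcd h1 h2 n1 n2
  have xab : insert b (insert a Z) = insert a (insert b Z) := Finset.insert_comm _ _ _
  have xac : insert c (insert a Z) = insert a (insert c Z) := Finset.insert_comm _ _ _
  have xad : insert d (insert a Z) = insert a (insert d Z) := Finset.insert_comm _ _ _
  have xbc : insert c (insert b Z) = insert b (insert c Z) := Finset.insert_comm _ _ _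
  have xbd : insert d (insert b Z) = insert b (insert d Z) := Finset.insert_comm _ _ _
  have xcd : insert d (insert c Z) = insert c (insert d Z) := Finset.insert_comm _ _ _
  obtain ⟨Da, Dbcd, sa⟩ := h.move Z b a c d hb ha hc hd hab.symm hbc hbd hac had hcd
    (by rwa [xab]) h2
    (by rw [xab]; intro u v; have := n2 v u; linarith)
    (by rw [xab]; intro u v; have := n1 v u; linarith)
  obtain ⟨Dd, Dcab, sd⟩ := h.move Z c d a b hc hd ha hb hcd hac.symm hbc.symm had.symm hbd.symm hab
    h2 h1
    (by rw [xac, xbd]; intro u v; have := n1 u v; linarith)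
    (by rw [xad, xbc]; intro u v; have := n2 v u; linarith)
  obtain ⟨Dc, Ddab, sc⟩ := h.move Z d c a b hd hc ha hb hcd.symm had.symm hbd.symm hac.symm hbc.symm
    hab (by rwa [xcd]) h1
    (by rw [xad, xbc, xcd]; intro u v; have := n2 u v; linarith)
    (by rw [xac, xbd, xcd]; intro u v; have := n1 v u; linarith)
  rw [xab] at sa
  rw [xcd] at sc
  have y1 : insert c (insert a (insert b Z)) = insert a (insert b (insert c Z)) := by grind
  have y2 : insert d (insert a (insert b Z)) = insert a (insert b (insert d Z)) := by grind
  have y3 : insert c (insert d (insert a Z)) = insert a (insert c (insert d Z)) := by grind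
  have y4 : insert c (insert d (insert b Z)) = insert b (insert c (insert d Z)) := by grind
  have k1 := h.cover Z a b c d ha hb hc hd hab hac had hbc hbd hcd
    (g (insert a (insert b Z)) + g (insert c (insert d Z))) h1 Dc Dd Dacd Dbcd sa sb
    (by rw [← y2]; linarith) (by rw [← y1]; linarith)
  have k2 := h.cover Z c d a b hc hd ha hb hcd hac.symm hbc.symm had.symm hbd.symm hab
    (g (insert a (insert b Z)) + g (insert c (insert d Z))) h2 Da Db Dcab Ddab
    (by linarith) (by linarith) (by rw [y4]; linarith) (by rw [y3]; linarith)
  rw [xac, xad, xbc, xbd] at k2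
  rcases k1 with ⟨p1, q1, r1⟩ | ⟨p1, q1, r1⟩ <;> rcases k2 with ⟨p2, q2, r2⟩ | ⟨p2, q2, r2⟩
  · have := n1 p1 q1
    linarith
  · have := n1 p1 q1
    have := n2 q2 p2
    linarith
  · have := n1 p2 q2
    have := n2 p1 q1
    linarith
  · have := n2 p1 q1
    linarith

theorem MN.P23sv (h : MN D g) (X : Finset α) (i : α) (c : α → ℝ) (hiX : i ∈ X) (n : ℕ) :
    ∀ Y : Finset α, (Y \ X).card = n → D X → D Y → X.card ≤ Y.card → i ∉ Y →
      (∀ j ∈ Y, j ∉ X →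
        (D (insert j (X.erase i)) → g (insert j (X.erase i)) ≤ g X + c j) ∧
        (D ((insert i Y).erase j) → g ((insert i Y).erase j) < g Y - c j)) → False := by
  induction n with
  | zero =>
    intro Y hn _ _ hlt hiY _
    have h1 : Y ⊆ X := by rwa [Finset.card_eq_zero, Finset.sdiff_eq_empty_iff_subset] at hn
    have := Finset.eq_of_subset_of_card_le h1 hlt
    subst this
    exact hiY hiX
  | succ n ih =>
    intro Y hn hX hY hle hiY hv
    classical
    rcases hle.lt_or_eq with hlt | heq
    · obtain ⟨j, hj, hjX, -, hjD, -⟩ := h.P1 X Y hX hY hlt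
      obtain ⟨v, hvm, hmax⟩ := Finset.exists_max_image
        ((Y \ X).filter fun v => D (Y.erase v))
        (fun v => g (Y.erase v) + c v) ⟨j, by simp [hj, hjX, hjD]⟩
      simp only [Finset.mem_filter, Finset.mem_sdiff] at hvm hmax
      obtain ⟨⟨hvY, hvX⟩, hvD⟩ := hvm
      refine ih (Y.erase v) ?_ hX hvD ?_ (by clear ih h hv hn; (try clear hmax); (try clear hlt); (try clear hle); (try clear heq); grind) ?_
      · have e : Y.erase v \ X = (Y \ X).erase v := by clear ih h hv hn; (try clear hmax); (try clear hlt); (try clear hle); (try clear heq); grind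
        rw [e, Finset.card_erase_of_mem (by simp [hvY, hvX])]; omega
      · rw [Finset.card_erase_of_mem hvY]; omega
      · intro w hw hwX
        have hwv : w ≠ v := by clear ih h hv hn; (try clear hmax); (try clear hlt); (try clear hle); (try clear heq); grind
        have hwY : w ∈ Y := by clear ih h hv hn; (try clear hmax); (try clear hlt); (try clear hle); (try clear heq); grind
        have hwi : w ≠ i := by clear ih h hv hn; (try clear hmax); (try clear hlt); (try clear hle); (try clear heq); grind
        refine ⟨(hv w hwY hwX).1, fun hD => ?_⟩
        have e0 : insert w (insert v ((Y.erase v).erase w)) = Y := by clear ih h hv hn; (try clear hmax); (try clear hlt); (try clear hle); (try clear heq); grind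
        have e1 : insert i ((Y.erase v).erase w) = (insert i (Y.erase v)).erase w := by clear ih h hv hn; (try clear hmax); (try clear hlt); (try clear hle); (try clear heq); grind
        have e2 : insert w ((Y.erase v).erase w) = Y.erase v := by clear ih h hv hn; (try clear hmax); (try clear hlt); (try clear hle); (try clear heq); grind
        have e3 : insert v ((Y.erase v).erase w) = Y.erase w := by clear ih h hv hn; (try clear hmax); (try clear hlt); (try clear hle); (try clear heq); grind
        have e4 : insert v (insert i ((Y.erase v).erase w)) = (insert i Y).erase w := by clear ih h hv hn; (try clear hmax); (try clear hlt); (try clear hle); (try clear heq); grind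
        have e5 : insert w (insert i ((Y.erase v).erase w)) = (insert i Y).erase v := by clear ih h hv hn; (try clear hmax); (try clear hlt); (try clear hle); (try clear heq); grind
        have t := h.T1 ((Y.erase v).erase w) w v i (by clear ih h hv hn; (try clear hmax); (try clear hlt); (try clear hle); (try clear heq); grind) (by clear ih h hv hn; (try clear hmax); (try clear hlt); (try clear hle); (try clear heq); grind) (by clear ih h hv hn; (try clear hmax); (try clear hlt); (try clear hle); (try clear heq); grind) hwv hwi
          (by clear ih h hv hn; (try clear hmax); (try clear hlt); (try clear hle); (try clear heq); grind) (by rwa [e0]) (by rwa [e1])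
        rw [e0, e4, e5, e1, e2, e3] at t
        rcases t with ⟨p, q, r⟩ | ⟨p, q, r⟩
        · have h1 := (hv w hwY hwX).2 q
          linarith
        · have h1 := (hv v hvY hvX).2 q
          have h2 := hmax w ⟨⟨hwY, hwX⟩, p⟩
          linarith
    · have hex : ∃ k ∈ X, k ∉ Y ∧ k ≠ i ∧ ∃ j ∈ Y, j ∉ X ∧ D (insert k (Y.erase j)) := by
        rcases h X Y hX hY i hiX hiY with ⟨p, q, r⟩ | ⟨j, hj, hj', p, q, r⟩
        · obtain ⟨j, hj, hj', p1, q1, r1⟩ := h.P1 _ _ p hY (by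
            rw [Finset.card_erase_of_mem hiX]
            have := Finset.card_pos.2 ⟨i, hiX⟩
            omega)
          have hji : j ≠ i := by clear ih h hv hn; (try clear hmax); (try clear hlt); (try clear hle); (try clear heq); grind
          have hjX : j ∉ X := by clear ih h hv hn; (try clear hmax); (try clear hlt); (try clear hle); (try clear heq); grind
          obtain ⟨k, hk, hk', p2, q2, r2⟩ := h.P1 _ _ q1 hX (by
            rw [Finset.card_erase_of_mem hj]
            have := Finset.card_pos.2 ⟨i, hiX⟩
            omega)
          by_cases hki : k = i
          · exfalso
            subst hki
            have e : insert k (Y.erase j) = (insert k Y).erase j := by clear ih h hv hn; (try clear hmax); (try clear hlt); (try clear hle); (try clear heq); grind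
            rw [e] at p2 r2
            have h1 := (hv j hj hjX).1 p1
            have h2 := (hv j hj hjX).2 p2
            linarith
          · exact ⟨k, hk, by clear ih h hv hn; (try clear hmax); (try clear hlt); (try clear hle); (try clear heq); grind, hki, j, hj, hjX, p2⟩
        · exfalso
          have h1 := (hv j hj hj').1 p
          have h2 := (hv j hj hj').2 q
          linarith
      obtain ⟨k, hk, hkY, hki, j, hj, hjX, hjD⟩ := hex
      obtain ⟨v, hvm, hmax⟩ := Finset.exists_max_image
        ((Y \ X).filter fun v => D (insert k (Y.erase v)))
        (fun v => g (insert k (Y.erase v)) + c v) ⟨j, by simp [hj, hjX, hjD]⟩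
      simp only [Finset.mem_filter, Finset.mem_sdiff] at hvm hmax
      obtain ⟨⟨hvY, hvX⟩, hvD⟩ := hvm
      refine ih (insert k (Y.erase v)) ?_ hX hvD ?_ (by clear ih h hv hn; (try clear hmax); (try clear hlt); (try clear hle); (try clear heq); grind) ?_
      · have e : insert k (Y.erase v) \ X = (Y \ X).erase v := by clear ih h hv hn; (try clear hmax); (try clear hlt); (try clear hle); (try clear heq); grind
        rw [e, Finset.card_erase_of_mem (by simp [hvY, hvX])]; omega
      · rw [Finset.card_insert_of_notMem (by clear ih h hv hn; (try clear hmax); (try clear hlt); (try clear hle); (try clear heq); grind), Finset.card_erase_of_mem hvY]; omega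
      · intro w hw hwX
        have hwk : w ≠ k := by clear ih h hv hn; (try clear hmax); (try clear hlt); (try clear hle); (try clear heq); grind
        have hwv : w ≠ v := by clear ih h hv hn; (try clear hmax); (try clear hlt); (try clear hle); (try clear heq); grind
        have hwY : w ∈ Y := by clear ih h hv hn; (try clear hmax); (try clear hlt); (try clear hle); (try clear heq); grind
        have hwi : w ≠ i := by clear ih h hv hn; (try clear hmax); (try clear hlt); (try clear hle); (try clear heq); grind
        refine ⟨(hv w hwY hwX).1, fun hD => ?_⟩
        have e0 : insert v (insert w ((Y.erase v).erase w)) = Y := by clear ih h hv hn; (try clear hmax); (try clear hlt); (try clear hle); (try clear heq); grind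
        have e1 : insert i (insert k ((Y.erase v).erase w)) =
          (insert i (insert k (Y.erase v))).erase w := by clear ih h hv hn; (try clear hmax); (try clear hlt); (try clear hle); (try clear heq); grind
        have e2 : insert i (insert v ((Y.erase v).erase w)) = (insert i Y).erase w := by clear ih h hv hn; (try clear hmax); (try clear hlt); (try clear hle); (try clear heq); grind
        have e3 : insert i (insert w ((Y.erase v).erase w)) = (insert i Y).erase v := by clear ih h hv hn; (try clear hmax); (try clear hlt); (try clear hle); (try clear heq); grind
        have e4 : insert k (insert v ((Y.erase v).erase w)) = insert k (Y.erase w) := by clear ih h hv hn; (try clear hmax); (try clear hlt); (try clear hle); (try clear heq); grind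
        have e5 : insert k (insert w ((Y.erase v).erase w)) = insert k (Y.erase v) := by clear ih h hv hn; (try clear hmax); (try clear hlt); (try clear hle); (try clear heq); grind
        have t := h.T2 ((Y.erase v).erase w) i k v w (by clear ih h hv hn; (try clear hmax); (try clear hlt); (try clear hle); (try clear heq); grind) (by clear ih h hv hn; (try clear hmax); (try clear hlt); (try clear hle); (try clear heq); grind) (by clear ih h hv hn; (try clear hmax); (try clear hlt); (try clear hle); (try clear heq); grind) (by clear ih h hv hn; (try clear hmax); (try clear hlt); (try clear hle); (try clear heq); grind)
          (by clear ih h hv hn; (try clear hmax); (try clear hlt); (try clear hle); (try clear heq); grind) (by clear ih h hv hn; (try clear hmax); (try clear hlt); (try clear hle); (try clear heq); grind) (by clear ih h hv hn; (try clear hmax); (try clear hlt); (try clear hle); (try clear heq); grind) (by clear ih h hv hn; (try clear hmax); (try clear hlt); (try clear hle); (try clear heq); grind) (by clear ih h hv hn; (try clear hmax); (try clear hlt); (try clear hle); (try clear heq); grind) (by clear ih h hv hn; (try clear hmax); (try clear hlt); (try clear hle); (try clear heq); grind)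
          (by rwa [e1]) (by rwa [e0])
        rw [e0, e1, e2, e3, e4, e5] at t
        rcases t with ⟨p, q, r⟩ | ⟨p, q, r⟩
        · have h1 := (hv w hwY hwX).2 p
          linarith
        · have h1 := (hv v hvY hvX).2 p
          have h2 := hmax w ⟨⟨hwY, hwX⟩, q⟩
          linarith

theorem MN.P23 (h : MN D g) (X Y : Finset α) (hX : D X) (hY : D Y) (hle : X.card ≤ Y.card)
    (i : α) (hiX : i ∈ X) (hiY : i ∉ Y) :
    ∃ j ∈ Y, j ∉ X ∧ D (insert j (X.erase i)) ∧ D ((insert i Y).erase j) ∧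
      g X + g Y ≤ g (insert j (X.erase i)) + g ((insert i Y).erase j) := by
  classical
  by_contra hcon
  push Not at hcon
  refine h.P23sv X i (fun j => if D (insert j (X.erase i)) then g (insert j (X.erase i)) - g X
    else g Y - g ((insert i Y).erase j) - 1) hiX _ Y rfl hX hY hle hiY ?_
  intro j hj hjX
  by_cases hd : D (insert j (X.erase i))
  · simp only [hd, if_true]
    refine ⟨fun _ => by linarith, fun h2 => ?_⟩
    have := hcon j hj hjX hd h2
    linarith
  · simp only [hd, if_false]
    exact ⟨fun h => h.elim, fun _ => by linarith⟩

theorem withBot_le_iff {a b c d : WithBot ℝ} (ha : a ≠ ⊥) (hb : b ≠ ⊥) :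
    a + b ≤ c + d ↔
      c ≠ ⊥ ∧ d ≠ ⊥ ∧ a.unbotD 0 + b.unbotD 0 ≤ c.unbotD 0 + d.unbotD 0 := by
  induction a with
  | bot => exact absurd rfl ha
  | coe a =>
  induction b with
  | bot => exact absurd rfl hb
  | coe b =>
  induction c with
  | bot => simp [← WithBot.coe_add]
  | coe c =>
  induction d with
  | bot => simp [← WithBot.coe_add]
  | coe d => simp [← WithBot.coe_add, WithBot.coe_le_coe]

theorem MnatConcave.toMN {f : Finset α → WithBot ℝ} (h : MnatConcave f) :
    MN (fun X => f X ≠ ⊥) (fun X => (f X).unbotD 0) := by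
  intro X Y hX hY i hi hi'
  have h1 := h X Y i (by simp [hi, hi'])
  have hb : ⊥ < f X + f Y := by
    rw [bot_lt_iff_ne_bot, Ne, WithBot.add_eq_bot]
    tauto
  rw [le_max_iff, Finset.le_sup_iff hb] at h1
  rcases h1 with h1 | ⟨j, hj, h1⟩
  · exact Or.inl ((withBot_le_iff hX hY).1 h1)
  · rw [Finset.mem_sdiff] at hj
    exact Or.inr ⟨j, hj.1, hj.2, (withBot_le_iff hX hY).1 h1⟩

theorem MnatConcave.P23 {f : Finset α → WithBot ℝ} (h : MnatConcave f) (X Y : Finset α)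
    (hle : X.card ≤ Y.card) (i : α) (hi : i ∈ X \ Y) :
    f X + f Y ≤
      (Y \ X).sup fun j => f (insert j (X.erase i)) + f ((insert i Y).erase j) := by
  rw [Finset.mem_sdiff] at hi
  by_cases hX : f X = ⊥
  · simp [hX]
  by_cases hY : f Y = ⊥
  · simp [hY]
  obtain ⟨j, hj, hj', h1⟩ := h.toMN.P23 X Y hX hY hle i hi.1 hi.2
  exact ((withBot_le_iff hX hY).2 h1).trans
    (Finset.le_sup (f := fun j => f (insert j (X.erase i)) + f ((insert i Y).erase j))
      (Finset.mem_sdiff.2 ⟨hj, hj'⟩))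

end aux


theorem stmt_3 {α : Type*} [Fintype α] [DecidableEq α] (f : Finset α → WithBot ℝ)
    (hne : ∃ X, f X ≠ ⊥) :
    MnatConcave f ↔
      ((∀ X Y : Finset α, X.card = Y.card → ∀ i ∈ X \ Y,
          f X + f Y ≤
            (Y \ X).sup fun j => f (insert j (X.erase i)) + f ((insert i Y).erase j)) ∧
       (∀ X Y : Finset α, X.card < Y.card → ∀ i ∈ X \ Y,
          f X + f Y ≤
            (Y \ X).sup fun j => f (insert j (X.erase i)) + f ((insert i Y).erase j)) ∧
       (∀ X Y : Finset α, X.card > Y.card → ∀ i ∈ X \ Y,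
          f X + f Y ≤
            max (f (X.erase i) + f (insert i Y))
              ((Y \ X).sup fun j =>
                f (insert j (X.erase i)) + f ((insert i Y).erase j)))) := by
  constructor
  · intro h
    exact ⟨fun X Y hc i hi => h.P23 X Y hc.le i hi, fun X Y hc i hi => h.P23 X Y hc.le i hi,
      fun X Y _ i hi => h X Y i hi⟩
  · rintro ⟨h2, h3, h4⟩ X Y i hi
    rcases lt_trichotomy X.card Y.card with hc | hc | hc
    · exact le_max_of_le_right (h3 X Y hc i hi)
    · exact le_max_of_le_right (h2 X Y hc i hi)
    · exact h4 X Y hc i hi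
end

section
/- A set function f : 2^N → ℝ ∪ {-∞} is M♮-concave if and only if its effective domain dom f is an M♮-convex family (satisfies the g-matroid exchange axiom) and f satisfies the three local exchange conditions (L1): f(Z+i+j)+f(Z) ≤ f(Z+i)+f(Z+j) for Z ⊆ N and distinct i,j ∉ Z; (L2): f(Z+i+j)+f(Z+k) ≤ max( f(Z+i+k)+f(Z+j), f(Z+j+k)+f(Z+i) ) for distinct i,j,k ∉ Z; and (L3): f(Z+i+j)+f(Z+k+l) ≤ max( f(Z+i+k)+f(Z+j+l), f(Z+j+k)+f(Z+i+l) ) for distinct i,j,k,l ∉ Z. -/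
/-- The exchange axiom for an M♮-convex family (g-matroid). -/
def MnatFamily {α : Type*} [DecidableEq α] (F : Set (Finset α)) : Prop :=
  ∀ X ∈ F, ∀ Y ∈ F, ∀ i ∈ X \ Y,
    (X.erase i ∈ F ∧ insert i Y ∈ F) ∨
    ∃ j ∈ Y \ X, insert j (X.erase i) ∈ F ∧ (insert i Y).erase j ∈ F

lemma wb_aux (x y q y0 q0 : ℝ) (gXv gYuv gYu0v gYuv0 W z : WithBot ℝ)
    (hz : z = (y0 : WithBot ℝ))
    (h1 : gXv ≤ (q : WithBot ℝ)) (h2 : (q : WithBot ℝ) + gYuv < (x : WithBot ℝ) + y)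
    (h3 : (q0 : WithBot ℝ) + gYuv0 < (x : WithBot ℝ) + y)
    (h4 : gYu0v + (q : WithBot ℝ) ≤ z + q0)
    (hW : W + (y : WithBot ℝ) ≤ max (z + gYuv) (gYu0v + gYuv0)) :
    gXv + W < (x : WithBot ℝ) + z := by
  subst hz
  induction gXv using WithBot.recBotCoe with
  | bot => simp [← WithBot.coe_add]
  | coe a =>
  induction W using WithBot.recBotCoe with
  | bot => simp [← WithBot.coe_add]
  | coe w =>
  have h1' : a ≤ q := by exact_mod_cast h1
  rcases le_max_iff.1 hW with h | h
  · induction gYuv using WithBot.recBotCoe with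
    | bot => simp [← WithBot.coe_add] at h
    | coe b =>
      norm_cast at *
      linarith
  · induction gYu0v using WithBot.recBotCoe with
    | bot => simp [← WithBot.coe_add] at h
    | coe b =>
    induction gYuv0 using WithBot.recBotCoe with
    | bot => simp [← WithBot.coe_add] at h
    | coe c =>
      norm_cast at h h4 h3 ⊢
      linarith

lemma exists_q (a b : WithBot ℝ) (c : ℝ) (h : a + b < (c : WithBot ℝ)) :
    ∃ q : ℝ, a ≤ (q : WithBot ℝ) ∧ (q : WithBot ℝ) + b < (c : WithBot ℝ) := by
  induction a using WithBot.recBotCoe with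
  | coe a => exact ⟨a, le_rfl, h⟩
  | bot =>
    induction b using WithBot.recBotCoe with
    | bot => exact ⟨0, bot_le, by simp⟩
    | coe b => exact ⟨c - b - 1, bot_le, by norm_cast; linarith⟩

lemma loc_set {β : Type*} [DecidableEq β] (g : Finset β → WithBot ℝ)
    (hloc : ∀ (W : Finset β) (a b c d : β), a ∉ W → b ∉ W → c ∉ W → d ∉ W →
      a ≠ b → a ≠ c → a ≠ d → b ≠ c → b ≠ d → c ≠ d →
      g (insert a (insert b W)) + g (insert c (insert d W)) ≤
        max (g (insert a (insert c W)) + g (insert b (insert d W)))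
          (g (insert b (insert c W)) + g (insert a (insert d W))))
    (Y : Finset β) (u u0 v v0 : β) (hu : u ∉ Y) (hu0 : u0 ∉ Y) (hne : u0 ≠ u)
    (hv : v ∈ Y) (hv0 : v0 ∈ Y) (hvv : v ≠ v0) :
    g ((insert u ((insert u0 Y).erase v0)).erase v) + g Y ≤
      max (g ((insert u0 Y).erase v0) + g ((insert u Y).erase v))
        (g ((insert u0 Y).erase v) + g ((insert u Y).erase v0)) := by
  have n1 : u0 ≠ v := by rintro rfl; exact hu0 hv
  have n2 : u0 ≠ v0 := by rintro rfl; exact hu0 hv0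
  have n3 : u ≠ v := by rintro rfl; exact hu hv
  have n4 : u ≠ v0 := by rintro rfl; exact hu hv0
  have hl := hloc ((Y.erase v0).erase v) u0 u v0 v (by simp [hu0]) (by simp [hu]) (by simp)
    (by simp) hne n2 n1 n4 n3 hvv.symm
  clear hloc
  have e1 : (insert u ((insert u0 Y).erase v0)).erase v
      = insert u0 (insert u ((Y.erase v0).erase v)) := by grind
  have e2 : insert v0 (insert v ((Y.erase v0).erase v)) = Y := by grind
  have e3 : (insert u0 Y).erase v0 = insert u0 (insert v ((Y.erase v0).erase v)) := by grind
  have e4 : (insert u Y).erase v = insert u (insert v0 ((Y.erase v0).erase v)) := by grind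
  have e5 : (insert u0 Y).erase v = insert u0 (insert v0 ((Y.erase v0).erase v)) := by grind
  have e6 : (insert u Y).erase v0 = insert u (insert v ((Y.erase v0).erase v)) := by grind
  rw [← e1, e2, ← e3, ← e4, ← e5, ← e6] at hl
  rw [max_comm, add_comm (g ((insert u0 Y).erase v0))]
  exact hl

lemma val_exchange {β : Type*} [DecidableEq β] (g : Finset β → WithBot ℝ)
    (hcard : ∀ S T, g S ≠ ⊥ → g T ≠ ⊥ → S.card = T.card)
    (hdom : ∀ S T, g S ≠ ⊥ → g T ≠ ⊥ → ∀ u ∈ S \ T, ∃ v ∈ T \ S, g ((insert u T).erase v) ≠ ⊥)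
    (hloc : ∀ (W : Finset β) (a b c d : β), a ∉ W → b ∉ W → c ∉ W → d ∉ W →
      a ≠ b → a ≠ c → a ≠ d → b ≠ c → b ≠ d → c ≠ d →
      g (insert a (insert b W)) + g (insert c (insert d W)) ≤
        max (g (insert a (insert c W)) + g (insert b (insert d W)))
          (g (insert b (insert c W)) + g (insert a (insert d W))))
    (X : Finset β) (u : β) (hu : u ∈ X) (hX : g X ≠ ⊥) :
    ∀ (n : ℕ) (Y : Finset β), (Y \ X).card = n → u ∉ Y → g Y ≠ ⊥ →
      ∃ v ∈ Y \ X, g X + g Y ≤ g (insert v (X.erase u)) + g ((insert u Y).erase v) := by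
  intro n
  induction n with
  | zero =>
    intro Y hn huY hY
    exfalso
    have h1 : Y ⊆ X := by
      rw [← Finset.sdiff_eq_empty_iff_subset]; exact Finset.card_eq_zero.1 hn
    have := Finset.eq_of_subset_of_card_le h1 (hcard _ _ hX hY).le
    exact huY (this ▸ hu)
  | succ n ih =>
    intro Y hn huY hY
    by_contra hcon
    push Not at hcon
    obtain ⟨x, hx⟩ := WithBot.ne_bot_iff_exists.1 hX
    obtain ⟨y, hy⟩ := WithBot.ne_bot_iff_exists.1 hY
    have hq : ∀ v, ∃ q : ℝ, v ∈ Y \ X → (g (insert v (X.erase u)) ≤ (q : WithBot ℝ) ∧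
        (q : WithBot ℝ) + g ((insert u Y).erase v) < (x : WithBot ℝ) + y) := by
      intro v
      by_cases hv : v ∈ Y \ X
      · have := hcon v hv
        rw [← hx, ← hy] at this
        obtain ⟨q, hq⟩ := exists_q _ _ (x + y) (by exact_mod_cast this)
        exact ⟨q, fun _ => by exact_mod_cast hq⟩
      · exact ⟨0, fun h => absurd h hv⟩
    choose q hq using hq
    have hXY : (X \ Y).card = n + 1 := by
      rw [← hn]
      exact Finset.card_sdiff_comm (hcard _ _ hX hY)
    by_cases hex : ∃ u0 ∈ X \ Y, u0 ≠ u
    · obtain ⟨u0, hu0, hne⟩ := hex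
      obtain ⟨v1, hv1, hv1'⟩ := hdom X Y hX hY u0 hu0
      obtain ⟨v0, hv0, hmax⟩ := Finset.exists_max_image (Y \ X)
        (fun v => g ((insert u0 Y).erase v) + (q v : WithBot ℝ)) ⟨v1, hv1⟩
      have hY'' : g ((insert u0 Y).erase v0) ≠ ⊥ := by
        intro h
        have := hmax v1 hv1
        simp only [h, WithBot.bot_add, le_bot_iff, WithBot.add_eq_bot, WithBot.coe_ne_bot, or_false] at this
        exact hv1' this
      obtain ⟨y0, hy0⟩ := WithBot.ne_bot_iff_exists.1 hY''
      simp only [Finset.mem_sdiff] at hu0 hv0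
      have hsd : ((insert u0 Y).erase v0) \ X = (Y \ X).erase v0 := by
        ext a
        simp only [Finset.mem_sdiff, Finset.mem_erase, Finset.mem_insert]
        grind
      obtain ⟨v, hv, hle⟩ := ih ((insert u0 Y).erase v0)
        (by rw [hsd, Finset.card_erase_of_mem (by simp [hv0]), hn]; rfl)
        (by simp only [Finset.mem_erase, Finset.mem_insert]; grind) hY''
      rw [hsd] at hv
      obtain ⟨hvv0, hvYX⟩ := Finset.mem_erase.1 hv
      have hv' := Finset.mem_sdiff.1 hvYX
      have hv0' : v0 ∈ Y \ X := by simp [hv0]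
      refine absurd hle (not_le.2 ?_)
      rw [← hx]
      refine wb_aux x y (q v) y0 (q v0) _ (g ((insert u Y).erase v)) (g ((insert u0 Y).erase v))
        (g ((insert u Y).erase v0)) _ _ hy0.symm (hq v hvYX).1 (hq v hvYX).2 (hq v0 hv0').2
        (hmax v hvYX) ?_
      rw [hy]
      exact loc_set g hloc Y u u0 v v0 huY hu0.2 hne hv'.1 hv0.1 hvv0
    · push Not at hex
      have h1 : X \ Y = {u} := by
        ext a
        simp only [Finset.mem_singleton]
        exact ⟨hex a, fun h => by subst h; simp [hu, huY]⟩
      have h2 : (Y \ X).card = 1 := by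
        rw [hn, ← hXY, h1]; simp
      obtain ⟨v, hv⟩ := Finset.card_eq_one.1 h2
      have := hcon v (by simp [hv])
      have e1 : insert v (X.erase u) = Y := by
        ext a
        have a1 := Finset.ext_iff.1 h1 a
        have a2 := Finset.ext_iff.1 hv a
        simp only [Finset.mem_sdiff, Finset.mem_singleton] at a1 a2
        simp only [Finset.mem_insert, Finset.mem_erase]
        tauto
      have e2 : (insert u Y).erase v = X := by
        ext a
        have a1 := Finset.ext_iff.1 h1 a
        have a2 := Finset.ext_iff.1 hv a
        simp only [Finset.mem_sdiff, Finset.mem_singleton] at a1 a2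
        simp only [Finset.mem_insert, Finset.mem_erase]
        tauto
      rw [e1, e2, add_comm] at this
      exact lt_irrefl _ this

lemma fam_drop {α : Type*} [DecidableEq α] (F : Set (Finset α)) (hF : MnatFamily F)
    (Y : Finset α) (hY : Y ∈ F) : ∀ (n : ℕ) (X : Finset α), (X \ Y).card = n → X ∈ F →
      X.card < Y.card → ∃ v ∈ Y \ X, Y.erase v ∈ F := by
  intro n
  induction n with
  | zero =>
    intro X hn hX hc
    obtain ⟨v, hv, hvX⟩ := Finset.exists_mem_notMem_of_card_lt_card hc
    have h0 : X \ Y = ∅ := Finset.card_eq_zero.1 hn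
    rcases hF Y hY X hX v (by simp [hv, hvX]) with h | ⟨j, hj, _⟩
    · exact ⟨v, by simp [hv, hvX], h.1⟩
    · simp [h0] at hj
  | succ n ih =>
    intro X hn hX hc
    obtain ⟨v, hv, hvX⟩ := Finset.exists_mem_notMem_of_card_lt_card hc
    rcases hF Y hY X hX v (by simp [hv, hvX]) with h | ⟨j, hj, h1, h2⟩
    · exact ⟨v, by simp [hv, hvX], h.1⟩
    · have hj' := Finset.mem_sdiff.1 hj
      have hsd : (insert v X).erase j \ Y = (X \ Y).erase j := by
        clear ih hF
        grind
      obtain ⟨w, hw, hwF⟩ := ih ((insert v X).erase j)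
        (by rw [hsd, Finset.card_erase_of_mem hj, hn]; rfl) h2
        (by rw [Finset.card_erase_of_mem (by simp [hj']), Finset.card_insert_of_notMem hvX]; simpa)
      refine ⟨w, ?_, hwF⟩
      simp only [Finset.mem_sdiff, Finset.mem_erase, Finset.mem_insert, not_and, not_or] at hw ⊢
      refine ⟨hw.1, fun hwX => ?_⟩
      have hwj : w ≠ j := by rintro rfl; exact hj'.2 hw.1
      exact (hw.2 hwj).2 hwX

/-- Lift of a set function to an equicardinal one with dummy elements. -/
noncomputable def liftFun {α : Type*} [Fintype α] (f : Finset α → WithBot ℝ)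
    (S : Finset (α ⊕ α)) : WithBot ℝ :=
  if S.card = Fintype.card α then f S.toLeft else ⊥

lemma lift_ne {α : Type*} [Fintype α] {f : Finset α → WithBot ℝ} {S : Finset (α ⊕ α)} :
    liftFun f S ≠ ⊥ ↔ S.card = Fintype.card α ∧ f S.toLeft ≠ ⊥ := by
  unfold liftFun; split_ifs with h <;> simp [h]

lemma lift_dom {α : Type*} [Fintype α] [DecidableEq α] (f : Finset α → WithBot ℝ)
    (hF : MnatFamily {X : Finset α | f X ≠ ⊥}) (S T : Finset (α ⊕ α))
    (hS : liftFun f S ≠ ⊥) (hT : liftFun f T ≠ ⊥) (u : α ⊕ α) (hu : u ∈ S \ T) :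
    ∃ v ∈ T \ S, liftFun f ((insert u T).erase v) ≠ ⊥ := by
  rw [lift_ne] at hS hT
  obtain ⟨cS, hS⟩ := hS
  obtain ⟨cT, hT⟩ := hT
  obtain ⟨huS, huT⟩ := Finset.mem_sdiff.1 hu
  have key : ∀ v ∈ T \ S, f ((insert u T).erase v).toLeft ≠ ⊥ →
      ∃ v ∈ T \ S, liftFun f ((insert u T).erase v) ≠ ⊥ := by
    intro v hv h
    refine ⟨v, hv, lift_ne.2 ⟨?_, h⟩⟩
    have := (Finset.mem_sdiff.1 hv).1
    rw [Finset.card_erase_of_mem (by simp [this]), Finset.card_insert_of_notMem huT]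
    simpa
  have c1 := Finset.card_toLeft_add_card_toRight (u := S)
  have c2 := Finset.card_toLeft_add_card_toRight (u := T)
  rcases u with i | e
  · have eI : ∀ j, ((insert (Sum.inl i) T).erase (Sum.inl j)).toLeft
        = (insert i T.toLeft).erase j := by
      intro j; ext a; simp
    have eR : ∀ j, ((insert (Sum.inl i) T).erase (Sum.inr j)).toLeft
        = (insert i T.toLeft) := by
      intro j; ext a; simp
    rcases hF S.toLeft hS T.toLeft hT i (by simpa using hu) with ⟨_, h⟩ | ⟨j, hj, _, h⟩
    · by_cases hd : ∃ d, Sum.inr d ∈ T \ S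
      · obtain ⟨d, hd⟩ := hd
        exact key _ hd (by rw [eR]; exact h)
      · have hsub : T.toRight ⊆ S.toRight := by
          intro d hdT
          by_contra hdS
          exact hd ⟨d, by simpa using ⟨by simpa using hdT, by simpa using hdS⟩⟩
        have := Finset.card_le_card hsub
        have hi : i ∉ T.toLeft := by simpa using huT
        obtain ⟨v, hv, hvF⟩ := fam_drop _ hF _ h _ S.toLeft rfl hS
          (by rw [Finset.card_insert_of_notMem hi]; omega)
        have hvi : v ≠ i := by
          rintro rfl
          exact (Finset.mem_sdiff.1 hv).2 (by simpa using huS)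
        refine key (Sum.inl v) ?_ (by rw [eI]; exact hvF)
        simpa [hvi] using hv
    · exact key (Sum.inl j) (by simpa using hj) (by rw [eI]; exact h)
  · by_cases hd : ∃ d, Sum.inr d ∈ T \ S
    · obtain ⟨d, hd⟩ := hd
      refine key _ hd ?_
      have : ((insert (Sum.inr e) T).erase (Sum.inr d)).toLeft = T.toLeft := by
        ext a; simp
      rwa [this]
    · have hsub : T.toRight ⊂ S.toRight := by
        refine (Finset.ssubset_iff_of_subset ?_).2 ⟨e, by simpa using huS, by simpa using huT⟩
        intro d hdT
        by_contra hdS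
        exact hd ⟨d, by simpa using ⟨by simpa using hdT, by simpa using hdS⟩⟩
      have := Finset.card_lt_card hsub
      obtain ⟨v, hv, hvF⟩ := fam_drop _ hF _ hT _ S.toLeft rfl hS (by omega)
      refine key (Sum.inl v) (by simpa using hv) ?_
      have : ((insert (Sum.inr e) T).erase (Sum.inl v)).toLeft = T.toLeft.erase v := by
        ext a; simp
      rw [this]; exact hvF

lemma lift_loc {α : Type*} [Fintype α] [DecidableEq α] (f : Finset α → WithBot ℝ)
    (h1 : ∀ Z : Finset α, ∀ i j : α, i ∉ Z → j ∉ Z → i ≠ j →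
          f (insert i (insert j Z)) + f Z ≤ f (insert i Z) + f (insert j Z))
    (h2 : ∀ Z : Finset α, ∀ i j k : α, i ∉ Z → j ∉ Z → k ∉ Z →
          i ≠ j → i ≠ k → j ≠ k →
          f (insert i (insert j Z)) + f (insert k Z) ≤
            max (f (insert i (insert k Z)) + f (insert j Z))
              (f (insert j (insert k Z)) + f (insert i Z)))
    (h3 : ∀ Z : Finset α, ∀ i j k l : α, i ∉ Z → j ∉ Z → k ∉ Z → l ∉ Z →
          i ≠ j → i ≠ k → i ≠ l → j ≠ k → j ≠ l → k ≠ l →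
          f (insert i (insert j Z)) + f (insert k (insert l Z)) ≤
            max (f (insert i (insert k Z)) + f (insert j (insert l Z)))
              (f (insert j (insert k Z)) + f (insert i (insert l Z))))
    (W : Finset (α ⊕ α)) (a b c d : α ⊕ α) (ha : a ∉ W) (hb : b ∉ W) (hc : c ∉ W) (hd : d ∉ W)
    (hab : a ≠ b) (hac : a ≠ c) (had : a ≠ d) (hbc : b ≠ c) (hbd : b ≠ d) (hcd : c ≠ d) :
    liftFun f (insert a (insert b W)) + liftFun f (insert c (insert d W)) ≤
        max (liftFun f (insert a (insert c W)) + liftFun f (insert b (insert d W)))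
          (liftFun f (insert b (insert c W)) + liftFun f (insert a (insert d W))) := by
  have hcard : ∀ a b, a ∉ W → b ∉ W → a ≠ b → (insert a (insert b W)).card = W.card + 2 := by
    intro a b ha hb hab
    rw [Finset.card_insert_of_notMem (by simp [ha, hab]), Finset.card_insert_of_notMem hb]
  unfold liftFun
  rw [hcard a b ha hb hab, hcard c d hc hd hcd, hcard a c ha hc hac, hcard b d hb hd hbd,
    hcard b c hb hc hbc, hcard a d ha hd had]
  split_ifs with h
  swap
  · simp
  have hZ : ∀ i, (Sum.inl i : α ⊕ α) ∉ W → i ∉ W.toLeft := by intro i hi; simpa using hi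
  rcases a with a | a <;> rcases b with b | b <;> rcases c with c | c <;> rcases d with d | d <;>
    simp only [Finset.toLeft_insert_inl, Finset.toLeft_insert_inr, ne_eq, Sum.inl.injEq] at *
  · exact h3 _ a b c d (hZ _ ha) (hZ _ hb) (hZ _ hc) (hZ _ hd) hab hac had hbc hbd hcd
  · exact h2 _ a b c (hZ _ ha) (hZ _ hb) (hZ _ hc) hab hac hbc
  · have := h2 _ a b d (hZ _ ha) (hZ _ hb) (hZ _ hd) hab had hbd
    simpa only [max_comm, add_comm, Finset.insert_comm] using this
  · exact le_max_of_le_left (h1 _ a b (hZ _ ha) (hZ _ hb) hab)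
  · have := h2 _ c d a (hZ _ hc) (hZ _ hd) (hZ _ ha) hcd (Ne.symm hac) (Ne.symm had)
    simpa only [max_comm, add_comm, Finset.insert_comm] using this
  · exact le_max_of_le_right (add_comm _ _).le
  · exact le_max_left _ _
  · exact le_max_left _ _
  · have := h2 _ c d b (hZ _ hc) (hZ _ hd) (hZ _ hb) hcd (Ne.symm hbc) (Ne.symm hbd)
    simpa only [max_comm, add_comm, Finset.insert_comm] using this
  · exact le_max_of_le_left (add_comm _ _).le
  · exact le_max_right _ _
  · exact le_max_of_le_left (add_comm _ _).le
  · have := h1 _ c d (hZ _ hc) (hZ _ hd) hcd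
    rw [add_comm] at this
    exact le_max_of_le_left this
  · exact le_max_of_le_left (add_comm _ _).le
  · exact le_max_left _ _
  · exact le_max_left _ _


lemma wb_aux2 (ij kl fj ikl fi jkl ik il jk jl : WithBot ℝ)
    (A : ij + kl ≤ fj + ikl) (B : ij + kl ≤ fi + jkl)
    (C : ikl + fi ≤ ik + il) (D : jkl + fj ≤ jk + jl)
    (c1 : ik + jl < ij + kl) (c2 : jk + il < ij + kl) : False := by
  have hA : fj + ikl ≠ ⊥ := ne_bot_of_gt (c1.trans_le A)
  have hB : fi + jkl ≠ ⊥ := ne_bot_of_gt (c1.trans_le B)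
  have hS : ij + kl ≠ ⊥ := ne_bot_of_gt c1
  simp only [ne_eq, WithBot.add_eq_bot, not_or] at hA hB hS
  have hC : ik + il ≠ ⊥ := ne_bot_of_le_ne_bot (by simp [WithBot.add_eq_bot, hA, hB]) C
  have hD : jk + jl ≠ ⊥ := ne_bot_of_le_ne_bot (by simp [WithBot.add_eq_bot, hA, hB]) D
  simp only [ne_eq, WithBot.add_eq_bot, not_or] at hC hD
  obtain ⟨hA1, hA2⟩ := hA
  obtain ⟨hB1, hB2⟩ := hB
  obtain ⟨hC1, hC2⟩ := hC
  obtain ⟨hD1, hD2⟩ := hD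
  obtain ⟨hS1, hS2⟩ := hS
  lift ij to ℝ using hS1
  lift kl to ℝ using hS2
  lift fj to ℝ using hA1
  lift ikl to ℝ using hA2
  lift fi to ℝ using hB1
  lift jkl to ℝ using hB2
  lift ik to ℝ using hC1
  lift il to ℝ using hC2
  lift jk to ℝ using hD1
  lift jl to ℝ using hD2
  norm_cast at *
  linarith

theorem stmt_5 {α : Type*} [Fintype α] [DecidableEq α] (f : Finset α → WithBot ℝ)
    (hne : ∃ X, f X ≠ ⊥) :
    MnatConcave f ↔
      (MnatFamily {X : Finset α | f X ≠ ⊥} ∧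
       (∀ Z : Finset α, ∀ i j : α, i ∉ Z → j ∉ Z → i ≠ j →
          f (insert i (insert j Z)) + f Z ≤ f (insert i Z) + f (insert j Z)) ∧
       (∀ Z : Finset α, ∀ i j k : α, i ∉ Z → j ∉ Z → k ∉ Z →
          i ≠ j → i ≠ k → j ≠ k →
          f (insert i (insert j Z)) + f (insert k Z) ≤
            max (f (insert i (insert k Z)) + f (insert j Z))
              (f (insert j (insert k Z)) + f (insert i Z))) ∧
       (∀ Z : Finset α, ∀ i j k l : α, i ∉ Z → j ∉ Z → k ∉ Z → l ∉ Z →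
          i ≠ j → i ≠ k → i ≠ l → j ≠ k → j ≠ l → k ≠ l →
          f (insert i (insert j Z)) + f (insert k (insert l Z)) ≤
            max (f (insert i (insert k Z)) + f (insert j (insert l Z)))
              (f (insert j (insert k Z)) + f (insert i (insert l Z))))) := by
  constructor
  · intro hf
    have L1 : (∀ Z : Finset α, ∀ i j : α, i ∉ Z → j ∉ Z → i ≠ j →
          f (insert i (insert j Z)) + f Z ≤ f (insert i Z) + f (insert j Z)) := by
      intro Z i j hi hj hij
      have := hf (insert i (insert j Z)) Z i (by simp [hi])
      have e1 : (insert i (insert j Z)).erase i = insert j Z := by grind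
      have e2 : Z \ (insert i (insert j Z)) = ∅ := by grind
      rw [e1, e2, Finset.sup_empty, max_eq_left bot_le, add_comm (f (insert j Z))] at this
      exact this
    refine ⟨?_, L1, ?_, ?_⟩
    · intro X hX Y hY i hi
      have := hf X Y i hi
      simp only [Set.mem_ofPred_eq] at *
      rcases le_max_iff.1 this with h | h
      · left
        have h0 : f X + f Y ≠ ⊥ := by simp [WithBot.add_eq_bot, hX, hY]
        have := ne_bot_of_le_ne_bot h0 h
        simpa [WithBot.add_eq_bot, not_or] using this
      · right
        have h0 : f X + f Y ≠ ⊥ := by simp [WithBot.add_eq_bot, hX, hY]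
        have := ne_bot_of_le_ne_bot h0 h
        by_contra hcon
        push Not at hcon
        apply this
        rw [Finset.sup_eq_bot_iff]
        intro j hj
        rw [WithBot.add_eq_bot]
        by_cases hb : f (insert j (X.erase i)) = ⊥
        · exact Or.inl hb
        · exact Or.inr (by simpa using hcon j hj hb)
    · intro Z i j k hi hj hk hij hik hjk
      have := hf (insert i (insert j Z)) (insert k Z) i (by simp [hi, hik])
      have e1 : (insert i (insert j Z)).erase i = insert j Z := by grind
      have e2 : (insert k Z) \ (insert i (insert j Z)) = {k} := by grind
      have e3 : (insert i (insert k Z)).erase k = insert i Z := by grind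
      rw [e1, e2, Finset.sup_singleton, e3, add_comm (f (insert j Z)),
        Finset.insert_comm k j Z] at this
      exact this
    · have half : ∀ Z : Finset α, ∀ i j k l : α, i ∉ Z → j ∉ Z → k ∉ Z → l ∉ Z →
          i ≠ j → i ≠ k → i ≠ l → j ≠ k → j ≠ l → k ≠ l →
          f (insert i (insert j Z)) + f (insert k (insert l Z)) ≤
            max (f (insert j Z) + f (insert i (insert k (insert l Z))))
            (max (f (insert i (insert k Z)) + f (insert j (insert l Z)))
              (f (insert j (insert k Z)) + f (insert i (insert l Z)))) := by
        intro Z i j k l hi hj hk hl hij hik hil hjk hjl hkl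
        have := hf (insert i (insert j Z)) (insert k (insert l Z)) i (by simp [hi, hik, hil])
        have e1 : (insert i (insert j Z)).erase i = insert j Z := by grind
        have e2 : (insert k (insert l Z)) \ (insert i (insert j Z)) = {k, l} := by grind
        have e3 : (insert i (insert k (insert l Z))).erase k = insert i (insert l Z) := by grind
        have e4 : (insert i (insert k (insert l Z))).erase l = insert i (insert k Z) := by grind
        rw [e1, e2, Finset.sup_insert, Finset.sup_singleton, e3, e4,
          Finset.insert_comm k j Z, Finset.insert_comm l j Z,
          add_comm (f (insert j (insert l Z)))] at this
        refine this.trans (max_le_max le_rfl ?_)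
        exact (max_comm _ _).le
      intro Z i j k l hi hj hk hl hij hik hil hjk hjl hkl
      have A := half Z i j k l hi hj hk hl hij hik hil hjk hjl hkl
      have B := half Z j i k l hj hi hk hl hij.symm hjk hjl hik hil hkl
      have C := L1 (insert i Z) k l (by grind) (by grind) hkl
      have D := L1 (insert j Z) k l (by grind) (by grind) hkl
      rw [Finset.insert_comm j i Z, max_comm (f (insert j (insert k Z)) + _)] at B
      rw [Finset.insert_comm l i, Finset.insert_comm k i, Finset.insert_comm k i] at C
      rw [Finset.insert_comm l j, Finset.insert_comm k j, Finset.insert_comm k j] at D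
      by_contra hcon
      have A' := (le_max_iff.1 A).resolve_right hcon
      have B' := (le_max_iff.1 B).resolve_right hcon
      rw [not_le, max_lt_iff] at hcon
      obtain ⟨c1, c2⟩ := hcon
      exact wb_aux2 _ _ _ _ _ _ _ _ _ _ A' B' C D c1 c2
  · rintro ⟨hF, h1, h2, h3⟩ X Y i hi
    by_cases hX : f X = ⊥
    · simp [hX]
    by_cases hY : f Y = ⊥
    · simp [hY]
    obtain ⟨hiX, hiY⟩ := Finset.mem_sdiff.1 hi
    have cX := Finset.card_le_univ X
    have cY := Finset.card_le_univ Y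
    obtain ⟨A, -, hA⟩ := Finset.exists_subset_card_eq (s := (Finset.univ : Finset α))
      (n := Fintype.card α - X.card) (by simp)
    obtain ⟨B, -, hB⟩ := Finset.exists_subset_card_eq (s := (Finset.univ : Finset α))
      (n := Fintype.card α - Y.card) (by simp)
    have eS : liftFun f (X.disjSum A) = f X := by
      unfold liftFun
      rw [if_pos (by rw [Finset.card_disjSum]; omega), Finset.toLeft_disjSum]
    have eT : liftFun f (Y.disjSum B) = f Y := by
      unfold liftFun
      rw [if_pos (by rw [Finset.card_disjSum]; omega), Finset.toLeft_disjSum]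
    have hle : ∀ S, liftFun f S ≤ f S.toLeft := by
      intro S; unfold liftFun; split_ifs <;> simp
    obtain ⟨v, hv, hvle⟩ := val_exchange (liftFun f)
      (fun S T hS hT => (lift_ne.1 hS).1.trans (lift_ne.1 hT).1.symm)
      (fun S T hS hT u hu => lift_dom f hF S T hS hT u hu) (lift_loc f h1 h2 h3)
      (X.disjSum A) (Sum.inl i) (by simpa using hiX) (by rwa [eS]) _ (Y.disjSum B) rfl
      (by simpa using hiY) (by rwa [eT])
    rw [eS, eT] at hvle
    refine hvle.trans ((add_le_add (hle _) (hle _)).trans ?_)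
    rcases v with j | d
    · refine le_max_of_le_right ?_
      have hj : j ∈ Y \ X := by simpa using hv
      refine le_trans (le_of_eq ?_) (Finset.le_sup hj)
      congr 2 <;> (ext a; simp)
    · refine le_max_of_le_left (le_of_eq ?_)
      congr 2 <;> (ext a; simp)
end

section
/- Let f : 2^N → ℝ ∪ {-∞} be a set function whose effective domain is the family of independent sets of a matroid (equivalently, an M♮-convex family containing ∅). Then f is M♮-concave if and only if it satisfies (L1): f(Z+i+j)+f(Z) ≤ f(Z+i)+f(Z+j) for all Z ⊆ N and distinct i, j ∉ Z, and (L2): f(Z+i+j)+f(Z+k) ≤ max( f(Z+i+k)+f(Z+j), f(Z+j+k)+f(Z+i) ) for all Z ⊆ N and distinct i, j, k ∉ Z. -/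
open Finset in
/-- Augmentation lets us exchange. -/
lemma aux_augment {E : Type*} [DecidableEq E] (I : Finset E → Prop)
    (haug : ∀ X Y : Finset E, I X → I Y → X.card < Y.card → ∃ j ∈ Y \ X, I (insert j X))
    (Y : Finset E) (hY : I Y) : ∀ m : ℕ, ∀ X : Finset E, I X → Y.card = X.card + m →
      ∃ X', X ⊆ X' ∧ X' ⊆ X ∪ Y ∧ I X' ∧ X'.card = Y.card := by
  intro m
  induction m with
  | zero => intro X hX h; exact ⟨X, Finset.Subset.refl _, Finset.subset_union_left, hX, by omega⟩
  | succ m ih =>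
    intro X hX h
    obtain ⟨j, hj, hI⟩ := haug X Y hX hY (by omega)
    rw [Finset.mem_sdiff] at hj
    obtain ⟨X', h1, h2, h3, h4⟩ := ih (insert j X) hI (by
      rw [Finset.card_insert_of_notMem hj.2]; omega)
    refine ⟨X', (Finset.subset_insert _ _).trans h1, h2.trans ?_, h3, h4⟩
    intro x hx
    simp only [Finset.mem_union, Finset.mem_insert] at hx ⊢
    rcases hx with (rfl | hx) | hx
    · exact Or.inr hj.1
    · exact Or.inl hx
    · exact Or.inr hx

lemma aux_exchange {E : Type*} [DecidableEq E] (I : Finset E → Prop)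
    (hdown : ∀ X Y : Finset E, X ⊆ Y → I Y → I X)
    (haug : ∀ X Y : Finset E, I X → I Y → X.card < Y.card → ∃ j ∈ Y \ X, I (insert j X))
    (B B' : Finset E) (hB : I B) (hB' : I B') (hc : B.card = B'.card) (u : E) (hu : u ∈ B \ B') :
    ∃ v ∈ B' \ B, I ((insert u B').erase v) := by
  rw [Finset.mem_sdiff] at hu
  have hsub : insert u (B ∩ B') ⊆ B := by
    intro x hx
    simp only [Finset.mem_insert, Finset.mem_inter] at hx
    rcases hx with rfl | hx
    · exact hu.1
    · exact hx.1
  have hle := Finset.card_le_card hsub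
  obtain ⟨X', h1, h2, h3, h4⟩ := aux_augment I haug B' hB' (B'.card - (insert u (B ∩ B')).card)
    (insert u (B ∩ B')) (hdown _ _ hsub hB) (by omega)
  have hX'sub : X' ⊆ insert u B' := by
    intro x hx
    have := h2 hx
    simp only [Finset.mem_union, Finset.mem_insert, Finset.mem_inter] at this ⊢
    tauto
  have huX' : u ∈ X' := h1 (Finset.mem_insert_self _ _)
  have : ∃ v ∈ B', v ∉ X' := by
    by_contra! hcon
    have : insert u B' ⊆ X' := by
      intro x hx
      rcases Finset.mem_insert.1 hx with rfl | hx
      · exact huX'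
      · exact hcon _ hx
    have := Finset.card_le_card this
    rw [Finset.card_insert_of_notMem hu.2] at this
    omega
  obtain ⟨v, hv, hvX⟩ := this
  refine ⟨v, ?_, ?_⟩
  · rw [Finset.mem_sdiff]
    refine ⟨hv, fun hvB => hvX (h1 ?_)⟩
    simp [hv, hvB]
  · have : X' = (insert u B').erase v := by
      apply Finset.eq_of_subset_of_card_le
      · intro x hx
        rw [Finset.mem_erase]
        exact ⟨fun h => hvX (h ▸ hx), hX'sub hx⟩
      · rw [Finset.card_erase_of_mem (Finset.mem_insert_of_mem hv),
          Finset.card_insert_of_notMem hu.2]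
        omega
    rw [← this]; exact h3

lemma aux_price (a b c d : WithBot ℝ) (h : a + b < c + d) :
    ∃ p : ℝ, a + p ≤ c ∧ b < d + p := by
  induction c using WithBot.recBotCoe with
  | bot => simp at h
  | coe c =>
  induction d using WithBot.recBotCoe with
  | bot => simp at h
  | coe d =>
  induction a using WithBot.recBotCoe with
  | bot =>
    induction b using WithBot.recBotCoe with
    | bot => exact ⟨0, by simp, by norm_cast; exact WithBot.bot_lt_coe _⟩
    | coe b => exact ⟨b - d + 1, by simp, by norm_cast; linarith⟩
  | coe a =>
    refine ⟨c - a, by norm_cast; linarith, ?_⟩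
    induction b using WithBot.recBotCoe with
    | bot => norm_cast; exact WithBot.bot_lt_coe _
    | coe b => norm_cast at h ⊢; linarith

lemma aux_case1 (y b b'' w : WithBot ℝ) (p : ℝ) (hb : b ≠ ⊥) (hb'' : b'' ≠ ⊥)
    (h : y + b ≤ b'' + w) (hw : w < b + p) : y < b'' + p := by
  lift b to ℝ using hb
  lift b'' to ℝ using hb''
  induction y using WithBot.recBotCoe with
  | bot => norm_cast; exact WithBot.bot_lt_coe _
  | coe y =>
  induction w using WithBot.recBotCoe with
  | bot => simp at h
  | coe w => norm_cast at *; linarith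

lemma aux_case2 (y b b'' w x : WithBot ℝ) (p q : ℝ) (hb : b ≠ ⊥) (hb'' : b'' ≠ ⊥)
    (h : y + b ≤ x + w) (hx : x + (-p : ℝ) ≤ b'' + (-q : ℝ)) (hw : w < b + q) : y < b'' + p := by
  lift b to ℝ using hb
  lift b'' to ℝ using hb''
  induction y using WithBot.recBotCoe with
  | bot => norm_cast; exact WithBot.bot_lt_coe _
  | coe y =>
  induction w using WithBot.recBotCoe with
  | bot => simp at h
  | coe w =>
  induction x using WithBot.recBotCoe with
  | bot => simp at h
  | coe x => norm_cast at *; linarith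

lemma aux_global {E : Type*} [DecidableEq E] (ω : Finset E → WithBot ℝ) (n : ℕ)
    (hcard : ∀ B, ω B ≠ ⊥ → B.card = n)
    (hex : ∀ B B' : Finset E, ω B ≠ ⊥ → ω B' ≠ ⊥ → ∀ u ∈ B \ B',
      ∃ v ∈ B' \ B, ω ((insert u B').erase v) ≠ ⊥)
    (hloc : ∀ (C : Finset E) (a b c d : E), a ∉ C → b ∉ C → c ∉ C → d ∉ C → a ≠ b → a ≠ c →
      a ≠ d → b ≠ c → b ≠ d → c ≠ d →
      ω (insert a (insert b C)) + ω (insert c (insert d C)) ≤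
        max (ω (insert a (insert c C)) + ω (insert b (insert d C)))
          (ω (insert a (insert d C)) + ω (insert b (insert c C)))) :
    ∀ (m : ℕ) (B B' : Finset E) (u : E) (p : E → ℝ), (B' \ B).card = m →
      ω B ≠ ⊥ → ω B' ≠ ⊥ → u ∈ B \ B' →
      (∀ v ∈ B' \ B, ω (insert v (B.erase u)) + p v ≤ ω B) →
      (∀ v ∈ B' \ B, ω ((insert u B').erase v) < ω B' + p v) → False := by
  intro m
  induction m with
  | zero =>
    intro B B' u p hm hB hB' hu _ _
    obtain ⟨v, hv, _⟩ := hex B B' hB hB' u hu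
    rw [Finset.card_eq_zero] at hm
    simp [hm] at hv
  | succ m ih =>
    intro B B' u p hm hB hB' hu ha hb
    have hcc : (B \ B').card = (B' \ B).card :=
      Finset.card_sdiff_comm ((hcard B hB).trans (hcard B' hB').symm)
    by_cases hone : ∃ u0 ∈ B \ B', u0 ≠ u
    · obtain ⟨u0, hu0, hne⟩ := hone
      obtain ⟨v1, hv1, hv1'⟩ := hex B B' hB hB' u0 hu0
      obtain ⟨v0, hv0, hmax⟩ := Finset.exists_max_image (B' \ B)
        (fun v => ω ((insert u0 B').erase v) + ((-p v : ℝ) : WithBot ℝ)) ⟨v1, hv1⟩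
      have hfin : ω ((insert u0 B').erase v0) ≠ ⊥ := by
        intro h
        have := hmax v1 hv1
        simp only [h, WithBot.bot_add, le_bot_iff, WithBot.add_eq_bot] at this
        rcases this with h | h
        · exact hv1' h
        · exact WithBot.coe_ne_bot h
      rw [Finset.mem_sdiff] at hu hu0 hv0
      have hdiff : ((insert u0 B').erase v0) \ B = (B' \ B).erase v0 := by
        ext x
        simp only [Finset.mem_sdiff, Finset.mem_erase, Finset.mem_insert]
        constructor
        · rintro ⟨⟨h1, rfl | h2⟩, h3⟩
          · exact absurd hu0.1 h3
          · exact ⟨h1, h2, h3⟩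
        · rintro ⟨h1, h2, h3⟩
          exact ⟨⟨h1, Or.inr h2⟩, h3⟩
      refine ih B ((insert u0 B').erase v0) u p ?_ hB hfin ?_ ?_ ?_
      · rw [hdiff, Finset.card_erase_of_mem (Finset.mem_sdiff.2 hv0)]; omega
      · rw [Finset.mem_sdiff]
        refine ⟨hu.1, ?_⟩
        simp only [Finset.mem_erase, Finset.mem_insert, not_and, not_or]
        exact fun _ => ⟨hne.symm, hu.2⟩
      · intro v hv
        rw [hdiff] at hv
        exact ha v (Finset.mem_of_mem_erase hv)
      · intro v hv
        rw [hdiff] at hv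
        have hvB := Finset.mem_of_mem_erase hv
        have hvne := Finset.ne_of_mem_erase hv
        have hmv := hmax v hvB
        have hbv := hb v hvB
        have hbv0 := hb v0 (Finset.mem_sdiff.2 hv0)
        rw [Finset.mem_sdiff] at hvB
        obtain ⟨hvB', hvB⟩ := hvB
        obtain ⟨hu1, hu2⟩ := hu
        obtain ⟨hu01, hu02⟩ := hu0
        obtain ⟨hv01, hv02⟩ := hv0
        have e1 : u ≠ v := fun h => hvB (h ▸ hu1)
        have e2 : u ≠ v0 := fun h => hv02 (h ▸ hu1)
        have e3 : u0 ≠ v := fun h => hvB (h ▸ hu01)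
        have e4 : u0 ≠ v0 := fun h => hv02 (h ▸ hu01)
        have key := hloc ((B'.erase v0).erase v) u u0 v v0
          (by simp [hu2]) (by simp [hu02]) (by simp) (by simp) hne.symm e1 e2 e3 e4 hvne
        have s1 : insert u (insert u0 ((B'.erase v0).erase v)) =
            (insert u ((insert u0 B').erase v0)).erase v := by
          ext x; simp only [Finset.mem_insert, Finset.mem_erase]; grind
        have s2 : insert v (insert v0 ((B'.erase v0).erase v)) = B' := by
          ext x; simp only [Finset.mem_insert, Finset.mem_erase]; grind
        have s3 : insert u (insert v ((B'.erase v0).erase v)) = (insert u B').erase v0 := by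
          ext x; simp only [Finset.mem_insert, Finset.mem_erase]; grind
        have s4 : insert u0 (insert v0 ((B'.erase v0).erase v)) = (insert u0 B').erase v := by
          ext x; simp only [Finset.mem_insert, Finset.mem_erase]; grind
        have s5 : insert u (insert v0 ((B'.erase v0).erase v)) = (insert u B').erase v := by
          ext x; simp only [Finset.mem_insert, Finset.mem_erase]; grind
        have s6 : insert u0 (insert v ((B'.erase v0).erase v)) = (insert u0 B').erase v0 := by
          ext x; simp only [Finset.mem_insert, Finset.mem_erase]; grind
        rw [s1, s2, s3, s4, s5, s6] at key
        rcases le_max_iff.1 key with h | h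
        · rw [add_comm (ω ((insert u B').erase v0))] at h
          exact aux_case2 _ _ _ _ _ _ _ hB' hfin h hmv hbv0
        · rw [add_comm (ω ((insert u B').erase v))] at h
          exact aux_case1 _ _ _ _ _ hB' hfin h hbv
    · push Not at hone
      have h1 : B \ B' = {u} := by
        ext x
        rw [Finset.mem_singleton]
        exact ⟨hone x, fun h => h ▸ hu⟩
      rw [h1, Finset.card_singleton] at hcc
      obtain ⟨v, hv⟩ := Finset.card_eq_one.1 hcc.symm
      have hvm : v ∈ B' \ B := by simp [hv]
      have hav := ha v hvm
      have hbv := hb v hvm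
      have hB1 : ∀ x, (x ∈ B ∧ x ∉ B') ↔ x = u := fun x => by
        rw [← Finset.mem_sdiff, h1, Finset.mem_singleton]
      have hB2 : ∀ x, (x ∈ B' ∧ x ∉ B) ↔ x = v := fun x => by
        rw [← Finset.mem_sdiff, hv, Finset.mem_singleton]
      have s1 : insert v (B.erase u) = B' := by
        ext x; simp only [Finset.mem_insert, Finset.mem_erase]; grind
      have s2 : (insert u B').erase v = B := by
        ext x; simp only [Finset.mem_insert, Finset.mem_erase]; grind
      rw [s1] at hav
      rw [s2] at hbv
      exact absurd hbv (not_lt.2 hav)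

lemma aux_ultra (x y s t r : WithBot ℝ) (P : WithBot ℝ) (a b c : ℝ)
    (hs : s = P + (-(a + b) : ℝ)) (hx : x = s) (h : P + c ≤ max (y + b) (t + a)) :
    x ≤ max (y + (-(a + c) : ℝ)) (t + (-(b + c) : ℝ)) := by
  subst hs hx
  induction P using WithBot.recBotCoe with
  | bot => simp
  | coe P =>
  rw [le_max_iff] at h ⊢
  rcases h with h | h
  · left
    induction y using WithBot.recBotCoe with
    | bot => simp at h
    | coe y => norm_cast at *; linarith
  · right
    induction t using WithBot.recBotCoe with
    | bot => simp at h
    | coe t => norm_cast at *; linarith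

lemma aux_four {G : Type*} [LinearOrder G] [AddCommMonoid G] [IsOrderedAddMonoid G]
    (ij kl ik jl il jk : G)
    (h1 : ij ≤ max ik jk) (h2 : ij ≤ max il jl) (h3 : kl ≤ max ik il) (h4 : kl ≤ max jk jl) :
    ij + kl ≤ max (ik + jl) (il + jk) := by
  rw [le_max_iff] at *
  have A : ij ≤ ik → kl ≤ jl → ij + kl ≤ ik + jl := fun a b => add_le_add a b
  have A' : ij ≤ jl → kl ≤ ik → ij + kl ≤ ik + jl := fun a b => by
    rw [add_comm ik]; exact add_le_add a b
  have C : ij ≤ il → kl ≤ jk → ij + kl ≤ il + jk := fun a b => add_le_add a b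
  have C' : ij ≤ jk → kl ≤ il → ij + kl ≤ il + jk := fun a b => by
    rw [add_comm il]; exact add_le_add a b
  rcases h1 with h1 | h1 <;> rcases h2 with h2 | h2 <;> rcases h3 with h3 | h3 <;>
    rcases h4 with h4 | h4 <;> grind

lemma aux_L3 (ij kl ik jl il jk : WithBot ℝ) (i j k l : ℝ)
    (h1 : ij + k ≤ max (ik + j) (jk + i)) (h2 : ij + l ≤ max (il + j) (jl + i))
    (h3 : kl + i ≤ max (ik + l) (il + k)) (h4 : kl + j ≤ max (jk + l) (jl + k)) :
    ij + kl ≤ max (ik + jl) (il + jk) := by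
  have := aux_four (ij + ((-(i + j) : ℝ) : WithBot ℝ)) (kl + ((-(k + l) : ℝ) : WithBot ℝ))
    (ik + ((-(i + k) : ℝ) : WithBot ℝ)) (jl + ((-(j + l) : ℝ) : WithBot ℝ))
    (il + ((-(i + l) : ℝ) : WithBot ℝ)) (jk + ((-(j + k) : ℝ) : WithBot ℝ))
    (aux_ultra _ _ _ _ 0 _ i j k rfl rfl h1) (aux_ultra _ _ _ _ 0 _ i j l rfl rfl h2)
    (by have := aux_ultra _ _ _ _ 0 _ k l i rfl rfl h3
        rwa [add_comm k i, add_comm l i] at this)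
    (by have := aux_ultra _ _ _ _ 0 _ k l j rfl rfl h4
        rwa [add_comm k j, add_comm l j] at this)
  clear h1 h2 h3 h4
  induction ij using WithBot.recBotCoe with
  | bot => simp
  | coe ij =>
  induction kl using WithBot.recBotCoe with
  | bot => simp
  | coe kl =>
  rw [le_max_iff] at this ⊢
  rcases this with h | h
  · left
    induction ik using WithBot.recBotCoe with
    | bot => simp at h
    | coe ik =>
    induction jl using WithBot.recBotCoe with
    | bot => simp at h
    | coe jl => norm_cast at *; linarith
  · right
    induction il using WithBot.recBotCoe with
    | bot => simp at h
    | coe il =>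
    induction jk using WithBot.recBotCoe with
    | bot => simp at h
    | coe jk => norm_cast at *; linarith

/-- The lift of a set function to a valuated matroid. -/
def auxLift {α : Type*} [Fintype α] (f : Finset α → WithBot ℝ) (B : Finset (α ⊕ α)) :
    WithBot ℝ :=
  if B.card = Fintype.card α then f B.toLeft else ⊥

lemma auxLift_exchange {α : Type*} [Fintype α] [DecidableEq α] (f : Finset α → WithBot ℝ)
    (hdown : ∀ X Y : Finset α, X ⊆ Y → f Y ≠ ⊥ → f X ≠ ⊥)
    (haug : ∀ X Y : Finset α, f X ≠ ⊥ → f Y ≠ ⊥ → X.card < Y.card →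
      ∃ j ∈ Y \ X, f (insert j X) ≠ ⊥)
    (B B' : Finset (α ⊕ α)) (hB : auxLift f B ≠ ⊥) (hB' : auxLift f B' ≠ ⊥)
    (u : α ⊕ α) (hu : u ∈ B \ B') :
    ∃ v ∈ B' \ B, auxLift f ((insert u B').erase v) ≠ ⊥ := by
  unfold auxLift at *
  have c1 : B.card = Fintype.card α := by by_contra h; simp [h] at hB
  have c2 : B'.card = Fintype.card α := by by_contra h; simp [h] at hB'
  rw [if_pos c1] at hB
  rw [if_pos c2] at hB'
  obtain ⟨v, hv, h⟩ := aux_exchange (fun X : Finset (α ⊕ α) => f X.toLeft ≠ ⊥)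
    (fun X Y hXY hY => hdown _ _ (Finset.toLeft_subset_toLeft hXY) hY)
    (by
      intro X Y hX hY hc
      by_cases hl : X.toLeft.card < Y.toLeft.card
      · obtain ⟨j, hj, hj'⟩ := haug _ _ hX hY hl
        refine ⟨Sum.inl j, by simpa using hj, ?_⟩
        rwa [Finset.toLeft_insert_inl]
      · have h1 := Finset.card_toLeft_add_card_toRight (u := X)
        have h2 := Finset.card_toLeft_add_card_toRight (u := Y)
        obtain ⟨j, hj, hj'⟩ := Finset.exists_mem_notMem_of_card_lt_card
          (show X.toRight.card < Y.toRight.card by omega)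
        refine ⟨Sum.inr j, by simp at hj hj' ⊢; exact ⟨hj, hj'⟩, ?_⟩
        rwa [Finset.toLeft_insert_inr])
    B B' hB hB' (c1.trans c2.symm) u hu
  refine ⟨v, hv, ?_⟩
  rw [Finset.mem_sdiff] at hu hv
  rw [if_pos]
  · exact h
  · rw [Finset.card_erase_of_mem (Finset.mem_insert_of_mem hv.1),
      Finset.card_insert_of_notMem hu.2, c2]; rfl

lemma auxLift_local {α : Type*} [Fintype α] [DecidableEq α] (f : Finset α → WithBot ℝ)
    (hdown : ∀ X Y : Finset α, X ⊆ Y → f Y ≠ ⊥ → f X ≠ ⊥)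
    (L1 : ∀ Z : Finset α, ∀ i j : α, i ∉ Z → j ∉ Z → i ≠ j →
          f (insert i (insert j Z)) + f Z ≤ f (insert i Z) + f (insert j Z))
    (L2 : ∀ Z : Finset α, ∀ i j k : α, i ∉ Z → j ∉ Z → k ∉ Z →
          i ≠ j → i ≠ k → j ≠ k →
          f (insert i (insert j Z)) + f (insert k Z) ≤
            max (f (insert i (insert k Z)) + f (insert j Z))
              (f (insert j (insert k Z)) + f (insert i Z)))
    (C : Finset (α ⊕ α)) (a b c d : α ⊕ α) (ha : a ∉ C) (hb : b ∉ C) (hc : c ∉ C) (hd : d ∉ C)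
    (hab : a ≠ b) (hac : a ≠ c) (had : a ≠ d) (hbc : b ≠ c) (hbd : b ≠ d) (hcd : c ≠ d) :
      auxLift f (insert a (insert b C)) + auxLift f (insert c (insert d C)) ≤
        max (auxLift f (insert a (insert c C)) + auxLift f (insert b (insert d C)))
          (auxLift f (insert a (insert d C)) + auxLift f (insert b (insert c C))) := by
  have hcd2 : ∀ x y : α ⊕ α, x ∉ C → y ∉ C → x ≠ y → (insert x (insert y C)).card = C.card + 2 := by
    intro x y hx hy hxy
    rw [Finset.card_insert_of_notMem (by simp [hx, hxy]), Finset.card_insert_of_notMem hy]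
  unfold auxLift
  rw [hcd2 a b ha hb hab, hcd2 c d hc hd hcd, hcd2 a c ha hc hac, hcd2 b d hb hd hbd,
    hcd2 a d ha hd had, hcd2 b c hb hc hbc]
  split_ifs with hn
  swap
  · simp
  clear hcd2 hn
  have mem : ∀ x : α, Sum.inl x ∉ C → x ∉ C.toLeft := by intro x; simp
  rcases a with a | a <;> rcases b with b | b <;> rcases c with c | c <;> rcases d with d | d <;>
    simp only [Finset.toLeft_insert_inl, Finset.toLeft_insert_inr] <;>
    simp only [ne_eq, Sum.inl.injEq] at hab hac had hbc hbd hcd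
  · -- four
    generalize hZ : C.toLeft = Z at *
    replace ha := mem _ ha
    replace hb := mem _ hb
    replace hc := mem _ hc
    replace hd := mem _ hd
    by_cases hX : f (insert a (insert b Z)) = ⊥
    · simp [hX]
    by_cases hY : f (insert c (insert d Z)) = ⊥
    · simp [hY]
    have fa : f (insert a Z) ≠ ⊥ := hdown _ _ (by
      rw [Finset.insert_comm]; exact Finset.subset_insert _ _) hX
    have fb : f (insert b Z) ≠ ⊥ := hdown _ _ (Finset.subset_insert _ _) hX
    have fc : f (insert c Z) ≠ ⊥ := hdown _ _ (by
      rw [Finset.insert_comm]; exact Finset.subset_insert _ _) hY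
    have fd : f (insert d Z) ≠ ⊥ := hdown _ _ (Finset.subset_insert _ _) hY
    obtain ⟨ra, ea⟩ := WithBot.ne_bot_iff_exists.1 fa
    obtain ⟨rb, eb⟩ := WithBot.ne_bot_iff_exists.1 fb
    obtain ⟨rc, ec⟩ := WithBot.ne_bot_iff_exists.1 fc
    obtain ⟨rd, ed⟩ := WithBot.ne_bot_iff_exists.1 fd
    have k1 := L2 Z a b c ha hb hc hab hac hbc
    have k2 := L2 Z a b d ha hb hd hab had hbd
    have k3 := L2 Z c d a hc hd ha hcd (Ne.symm hac) (Ne.symm had)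
    have k4 := L2 Z c d b hc hd hb hcd (Ne.symm hbc) (Ne.symm hbd)
    rw [Finset.insert_comm c a, Finset.insert_comm d a] at k3
    rw [Finset.insert_comm c b, Finset.insert_comm d b] at k4
    rw [← ea, ← eb, ← ec, ← ed] at *
    exact aux_L3 _ _ _ _ _ _ _ _ _ _ k1 k2 k3 k4
  · have := L2 C.toLeft a b c (mem _ ha) (mem _ hb) (mem _ hc) hab hac hbc
    rwa [add_comm (f (insert b (insert c C.toLeft)))] at this
  · have := L2 C.toLeft a b d (mem _ ha) (mem _ hb) (mem _ hd) hab had hbd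
    rw [max_comm]
    rwa [add_comm (f (insert b (insert d C.toLeft)))] at this
  · exact le_max_of_le_left (L1 C.toLeft a b (mem _ ha) (mem _ hb) hab)
  · have := L2 C.toLeft c d a (mem _ hc) (mem _ hd) (mem _ ha) hcd (Ne.symm hac) (Ne.symm had)
    rw [Finset.insert_comm c a, Finset.insert_comm d a] at this
    rwa [add_comm]
  · apply le_max_of_le_right; rfl
  · apply le_max_of_le_left; rfl
  · apply le_max_of_le_left; rfl
  · have := L2 C.toLeft c d b (mem _ hc) (mem _ hd) (mem _ hb) hcd (Ne.symm hbc) (Ne.symm hbd)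
    rw [Finset.insert_comm c b, Finset.insert_comm d b] at this
    rw [add_comm, max_comm, add_comm (f (insert d C.toLeft)), add_comm (f (insert c C.toLeft))]
    exact this
  · apply le_max_of_le_left; rw [add_comm]
  · apply le_max_of_le_right; rw [add_comm]
  · apply le_max_of_le_left; rw [add_comm]
  · have := L1 C.toLeft c d (mem _ hc) (mem _ hd) hcd
    apply le_max_of_le_left; rwa [add_comm]
  · apply le_max_of_le_left; rw [add_comm]
  · apply le_max_of_le_left; rw [add_comm]
  · apply le_max_of_le_left; rw [add_comm]

theorem stmt_6 {α : Type*} [Fintype α] [DecidableEq α] (f : Finset α → WithBot ℝ)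
    (h0 : f ∅ ≠ ⊥)
    (hdown : ∀ X Y : Finset α, X ⊆ Y → f Y ≠ ⊥ → f X ≠ ⊥)
    (haug : ∀ X Y : Finset α, f X ≠ ⊥ → f Y ≠ ⊥ → X.card < Y.card →
      ∃ j ∈ Y \ X, f (insert j X) ≠ ⊥) :
    MnatConcave f ↔
      ((∀ Z : Finset α, ∀ i j : α, i ∉ Z → j ∉ Z → i ≠ j →
          f (insert i (insert j Z)) + f Z ≤ f (insert i Z) + f (insert j Z)) ∧
       (∀ Z : Finset α, ∀ i j k : α, i ∉ Z → j ∉ Z → k ∉ Z →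
          i ≠ j → i ≠ k → j ≠ k →
          f (insert i (insert j Z)) + f (insert k Z) ≤
            max (f (insert i (insert k Z)) + f (insert j Z))
              (f (insert j (insert k Z)) + f (insert i Z)))) := by
  constructor
  · intro hM
    constructor
    · intro Z i j hi hj hij
      have := hM (insert i (insert j Z)) Z i (by simp [hi])
      have e1 : (insert i (insert j Z)).erase i = insert j Z := by
        rw [Finset.erase_insert]; simp [hi, hij]
      have e2 : Z \ (insert i (insert j Z)) = ∅ := by
        rw [Finset.sdiff_eq_empty_iff_subset]
        exact (Finset.subset_insert _ _).trans (Finset.subset_insert _ _)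
      rw [e1, e2, Finset.sup_empty, max_bot_right, add_comm (f (insert j Z))] at this
      exact this
    · intro Z i j k hi hj hk hij hik hjk
      have := hM (insert i (insert j Z)) (insert k Z) i (by simp [hi, hik])
      have e1 : (insert i (insert j Z)).erase i = insert j Z := by
        rw [Finset.erase_insert]; simp [hi, hij]
      have e2 : (insert k Z) \ (insert i (insert j Z)) = {k} := by
        ext x; simp only [Finset.mem_sdiff, Finset.mem_insert, Finset.mem_singleton]; grind
      have e3 : (insert i (insert k Z)).erase k = insert i Z := by
        ext x; simp only [Finset.mem_erase, Finset.mem_insert]; grind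
      rw [e1, e2, Finset.sup_singleton, e3, Finset.insert_comm k j,
        add_comm (f (insert j Z))] at this
      exact this
  · rintro ⟨L1, L2⟩ X Y i hi
    by_contra hcon
    rw [not_le, max_lt_iff] at hcon
    obtain ⟨hc1, hc2⟩ := hcon
    have hX : f X ≠ ⊥ := by intro h; simp [h] at hc1
    have hY : f Y ≠ ⊥ := by intro h; simp [h] at hc1
    have hXY : (⊥ : WithBot ℝ) < f X + f Y := lt_of_le_of_lt bot_le hc1
    rw [Finset.sup_lt_iff hXY] at hc2
    have hcX := Finset.card_le_univ X
    have hcY := Finset.card_le_univ Y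
    -- nested paddings
    obtain ⟨S, T, hS, hT⟩ : ∃ S T : Finset α, S.card + X.card = Fintype.card α ∧
        T.card + Y.card = Fintype.card α := by
      exact ⟨Xᶜ, Yᶜ, by rw [Finset.card_compl]; omega, by rw [Finset.card_compl]; omega⟩
    have cX : (X.disjSum S).card = Fintype.card α := by rw [Finset.card_disjSum]; omega
    have cY : (Y.disjSum T).card = Fintype.card α := by rw [Finset.card_disjSum]; omega
    have lX : auxLift f (X.disjSum S) = f X := by simp [auxLift, cX]
    have lY : auxLift f (Y.disjSum T) = f Y := by simp [auxLift, cY]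
    rw [Finset.mem_sdiff] at hi
    have hp : ∀ v : α ⊕ α, ∃ p : ℝ, v ∈ Y.disjSum T \ X.disjSum S →
        auxLift f (insert v ((X.disjSum S).erase (Sum.inl i))) + p ≤ auxLift f (X.disjSum S) ∧
        auxLift f ((insert (Sum.inl i) (Y.disjSum T)).erase v) < auxLift f (Y.disjSum T) + p := by
      intro v
      by_cases hv : v ∈ Y.disjSum T \ X.disjSum S
      swap
      · exact ⟨0, fun h => absurd h hv⟩
      have := aux_price (auxLift f (insert v ((X.disjSum S).erase (Sum.inl i))))
        (auxLift f ((insert (Sum.inl i) (Y.disjSum T)).erase v))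
        (auxLift f (X.disjSum S)) (auxLift f (Y.disjSum T)) ?_
      · obtain ⟨p, hp⟩ := this
        exact ⟨p, fun _ => hp⟩
      rw [lX, lY]
      have le : ∀ B : Finset (α ⊕ α), auxLift f B ≤ f B.toLeft := by
        intro B; unfold auxLift; split_ifs <;> simp
      refine lt_of_le_of_lt (add_le_add (le _) (le _)) ?_
      rcases v with v | v
      · have hv' : v ∈ Y \ X := by simpa using hv
        have e1 : (insert (Sum.inl v) ((X.disjSum S).erase (Sum.inl i))).toLeft =
            insert v (X.erase i) := by ext x; simp
        have e2 : ((insert (Sum.inl i) (Y.disjSum T)).erase (Sum.inl v)).toLeft =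
            (insert i Y).erase v := by ext x; simp
        rw [e1, e2]
        exact hc2 v hv'
      · have e1 : (insert (Sum.inr v) ((X.disjSum S).erase (Sum.inl i))).toLeft =
            X.erase i := by ext x; simp
        have e2 : ((insert (Sum.inl i) (Y.disjSum T)).erase (Sum.inr v)).toLeft =
            insert i Y := by ext x; simp
        rw [e1, e2]
        exact hc1
    choose p hp using hp
    exact aux_global (auxLift f) (Fintype.card α)
      (by intro B hB; by_contra h; simp [auxLift, h] at hB)
      (auxLift_exchange f hdown haug)
      (auxLift_local f hdown L1 L2) _ (X.disjSum S) (Y.disjSum T) (Sum.inl i) p rfl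
      (by rw [lX]; exact hX) (by rw [lY]; exact hY) (by simp [hi])
      (fun v hv => (hp v hv).1) (fun v hv => (hp v hv).2)
end

section
/- For a set family B ⊆ 2^N, the weak simultaneous exchange property — for any distinct X, Y ∈ B there exist i ∈ X\Y and j ∈ Y\X with (X\{i})∪{j} ∈ B and (Y∪{i})\{j} ∈ B — is equivalent to the basis exchange axiom: for any X, Y ∈ B and every i ∈ X\Y there exists j ∈ Y\X with (X\{i})∪{j} ∈ B and (Y∪{i})\{j} ∈ B. -/
/-- The matroid basis exchange axiom. -/
def BasisExchange {α : Type*} [DecidableEq α] (B : Set (Finset α)) : Prop :=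
  ∀ X ∈ B, ∀ Y ∈ B, ∀ i ∈ X \ Y,
    ∃ j ∈ Y \ X, insert j (X.erase i) ∈ B ∧ (insert i Y).erase j ∈ B

theorem weak_imp_one_sided {α : Type*} [DecidableEq α] (B : Set (Finset α))
    (h : ∀ X ∈ B, ∀ Y ∈ B, X ≠ Y →
        ∃ i ∈ X \ Y, ∃ j ∈ Y \ X, insert j (X.erase i) ∈ B ∧ (insert i Y).erase j ∈ B)
    (n : ℕ) : ∀ X ∈ B, ∀ Y ∈ B, (X \ Y).card = n → ∀ i ∈ X \ Y,
      ∃ j ∈ Y \ X, insert j (X.erase i) ∈ B := by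
  induction n using Nat.strong_induction_on with
  | _ n ih =>
    intro X hX Y hY hn i hi
    obtain ⟨a, ha, b, hb, h1, h2⟩ := h X hX Y hY (by rintro rfl; simp at hi)
    by_cases hai : a = i
    · subst hai
      exact ⟨b, hb, h1⟩
    · have hlt : (X \ ((insert a Y).erase b)).card < n := by
        rw [← hn]
        apply Finset.card_lt_card
        rw [Finset.ssubset_iff_of_subset]
        · exact ⟨a, ha, by grind⟩
        · intro x hx
          grind
      obtain ⟨j, hj, hjB⟩ := ih _ hlt X hX _ h2 rfl i (by grind)
      exact ⟨j, by grind, hjB⟩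

theorem matroid_symm_exchange {α : Type*} (M : Matroid α) {X Y : Set α}
    (hX : M.IsBase X) (hY : M.IsBase Y) {i : α} (hi : i ∈ X \ Y) :
    ∃ j ∈ Y \ X, M.IsBase (insert j (X \ {i})) ∧ M.IsBase (insert i Y \ {j}) := by
  have hiE : i ∈ M.E := hX.subset_ground hi.1
  have hicl : i ∈ M.closure Y := by rw [hY.closure_eq]; exact hiE
  have hC := hY.indep.fundCircuit_isCircuit hicl hi.2
  have hex : ∃ j ∈ M.fundCircuit i Y \ {i}, j ∉ M.closure (X \ {i}) := by
    by_contra! hcon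
    have h1 : i ∈ M.closure (M.fundCircuit i Y \ {i}) :=
      hC.mem_closure_sdiff_singleton_of_mem (M.mem_fundCircuit i Y)
    have h2 := M.closure_subset_closure_of_subset_closure (X := M.fundCircuit i Y \ {i}) hcon h1
    exact hX.indep.notMem_closure_sdiff_of_mem hi.1 h2
  obtain ⟨j, ⟨hjC, hji⟩, hjcl⟩ := hex
  have hjY : j ∈ Y := by
    rcases M.fundCircuit_subset_insert i Y hjC with h | h
    · exact absurd h hji
    · exact h
  have hjX : j ∉ X := fun hjX => hjcl (M.subset_closure (X \ {i})
    (Set.sdiff_subset.trans hX.subset_ground) ⟨hjX, hji⟩)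
  refine ⟨j, ⟨hjY, hjX⟩, hX.exchange_base_of_notMem_closure hi.1 hjcl (hY.subset_ground hjY), ?_⟩
  have hind := (hY.indep.mem_fundCircuit_iff hicl hi.2).1 hjC
  exact hY.exchange_isBase_of_indep' hjY hi.2 hind

theorem stmt_17 {α : Type*} [Fintype α] [DecidableEq α] (B : Set (Finset α))
    (hne : B.Nonempty) :
    (∀ X ∈ B, ∀ Y ∈ B, X ≠ Y →
        ∃ i ∈ X \ Y, ∃ j ∈ Y \ X, insert j (X.erase i) ∈ B ∧ (insert i Y).erase j ∈ B)
      ↔ BasisExchange B := by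
  constructor
  · intro h
    have exch : Matroid.ExchangeProperty (fun S : Set α => ∃ X ∈ B, (X : Set α) = S) := by
      rintro _ _ ⟨X, hX, rfl⟩ ⟨Y, hY, rfl⟩ a ha
      obtain ⟨j, hj, hjB⟩ := weak_imp_one_sided B h _ X hX Y hY rfl a (by simpa using ha)
      exact ⟨j, by simpa using hj, _, hjB, by simp⟩
    let M := Matroid.ofIsBaseOfFinite (E := Set.univ) Set.finite_univ
      (fun S : Set α => ∃ X ∈ B, (X : Set α) = S)
      (by obtain ⟨X, hX⟩ := hne; exact ⟨_, X, hX, rfl⟩) exch (fun _ _ => Set.subset_univ _)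
    intro X hX Y hY i hi
    have hMX : M.IsBase (X : Set α) := ⟨X, hX, rfl⟩
    have hMY : M.IsBase (Y : Set α) := ⟨Y, hY, rfl⟩
    obtain ⟨j, hj, ⟨U, hU, hUe⟩, ⟨V, hV, hVe⟩⟩ :=
      matroid_symm_exchange M hMX hMY (i := i) (by simpa using hi)
    have hj' : j ∈ Y \ X := by simpa using hj
    refine ⟨j, hj', ?_, ?_⟩
    · have : insert j (X.erase i) = U := by
        apply Finset.coe_injective
        rw [hUe]; simp
      rw [this]; exact hU
    · have : (insert i Y).erase j = V := by
        apply Finset.coe_injective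
        rw [hVe]; simp
      rw [this]; exact hV
  · intro h X hX Y hY hXY
    have : ∃ i, i ∈ X \ Y := by
      by_contra! hcon
      have hsub : ∃ k, k ∈ Y \ X := by
        by_contra! hcon2
        apply hXY
        ext x
        have := hcon x
        have := hcon2 x
        grind
      obtain ⟨k, hk⟩ := hsub
      obtain ⟨j, hj, -⟩ := h Y hY X hX k hk
      exact hcon j hj
    obtain ⟨i, hi⟩ := this
    exact ⟨i, hi, h X hX Y hY i hi⟩
end

section
/- Every M♮-concave set function f : 2^N → ℝ ∪ {-∞} has the strong multiple exchange property: for any X, Y ⊆ N and any I ⊆ X \ Y, there exists J ⊆ Y \ X with |J| ≤ |I| such that f(X) + f(Y) ≤ f((X \ I) ∪ J) + f((Y \ J) ∪ I). -/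
/-- Real-valued exchange property. -/
def RM {α : Type*} [DecidableEq α] (f : Finset α → ℝ) : Prop :=
  ∀ X Y : Finset α, ∀ i, i ∈ X → i ∉ Y →
    f X + f Y ≤ f (X.erase i) + f (insert i Y) ∨
    ∃ j, j ∈ Y ∧ j ∉ X ∧ f X + f Y ≤ f (insert j (X.erase i)) + f ((insert i Y).erase j)

section aux
variable {α : Type*} [DecidableEq α]

theorem RM.sub {f : Finset α → ℝ} (hf : RM f) {S T : Finset α} (h : S ⊆ T) {e : α} (he : e ∉ T) :
    f (insert e T) + f S ≤ f T + f (insert e S) := by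
  rcases hf (insert e T) S e (by simp) (fun h' => he (h h')) with h1 | ⟨j, hj, hj', _⟩
  · rwa [Finset.erase_insert he] at h1
  · exact absurd (Finset.mem_insert_of_mem (h hj)) hj'

theorem RM.sub2 {f : Finset α → ℝ} (hf : RM f) (X J : Finset α) (h : Disjoint X J) :
    f (X ∪ J) - f X ≤ ∑ j ∈ J, (f (insert j X) - f X) := by
  induction J using Finset.induction_on with
  | empty => simp
  | insert a J ha ih =>
    rw [Finset.disjoint_insert_right] at h
    rw [Finset.sum_insert ha]
    have h1 := hf.sub (S := X) (T := X ∪ J) Finset.subset_union_left (e := a) (by simp [h.1, ha])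
    have h2 := ih h.2
    rw [Finset.union_insert]
    linarith

theorem RM.sub3 {f : Finset α → ℝ} (hf : RM f) (Y D : Finset α) (h : D ⊆ Y) :
    ∑ j ∈ D, (f Y - f (Y.erase j)) ≤ f Y - f (Y \ D) := by
  induction D using Finset.induction_on with
  | empty => simp
  | insert a D ha ih =>
    rw [Finset.insert_subset_iff] at h
    rw [Finset.sum_insert ha]
    have h1 := hf.sub (S := Y \ insert a D) (T := Y.erase a) (by grind) (e := a) (by simp)
    have h2 := ih h.2
    have e1 : insert a (Y.erase a) = Y := by grind
    have e2 : insert a (Y \ insert a D) = Y \ D := by grind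
    rw [e1, e2] at h1
    linarith

theorem RM.modular {f : Finset α → ℝ} (hf : RM f) (q : α → ℝ) :
    RM (fun Z => f Z - ∑ e ∈ Z, q e) := by
  intro X Y i hX hY
  have e1 := Finset.add_sum_erase X q hX
  have e2 := Finset.sum_insert (f := q) hY
  rcases hf X Y i hX hY with h | ⟨j, hj, hj', h⟩
  · left
    simp only
    linarith
  · right
    refine ⟨j, hj, hj', ?_⟩
    have e3 := Finset.sum_insert (f := q) (s := X.erase i) (a := j) (by simp [hj'])
    have e4 := Finset.add_sum_erase (insert i Y) q (a := j) (by simp [hj])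
    simp only
    linarith

/-- Removing elements of `X` one after the other, keeping optimality and cardinality. -/
theorem RM.chain {g : Finset α → ℝ} (hg : RM g) (W E S : Finset α) (hWS : Disjoint W S)
    (hES : Disjoint E S) (c : ℕ)
    (h0 : ∃ K ⊆ E, (W ∪ S ∪ K).card ≤ c ∧ ∀ K' ⊆ E, g (W ∪ S ∪ K') ≤ g (W ∪ S ∪ K)) :
    ∃ K ⊆ E, (W ∪ K).card ≤ c ∧ ∀ K' ⊆ E, g (W ∪ K') ≤ g (W ∪ K) := by
  induction S using Finset.induction_on with
  | empty => simpa using h0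
  | insert i S hi ih =>
    rw [Finset.disjoint_insert_right] at hWS hES
    apply ih hWS.2 hES.2
    obtain ⟨K, hK, hc, hmax⟩ := h0
    obtain ⟨K', hK', hmax'⟩ := Finset.exists_max_image E.powerset (fun K => g (W ∪ S ∪ K))
      ⟨∅, by simp⟩
    simp only [Finset.mem_powerset] at hK' hmax'
    have eA : (W ∪ insert i S ∪ K).erase i = W ∪ S ∪ K := by grind
    have hiA : i ∈ W ∪ insert i S ∪ K := by simp
    rcases hg (W ∪ insert i S ∪ K) (W ∪ S ∪ K') i hiA (by grind) with h | ⟨j, hj, hj', h⟩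
    · refine ⟨K, hK, ?_, ?_⟩
      · rw [← eA]; exact (Finset.card_erase_le).trans hc
      · intro L hL
        have h1 := hmax' L hL
        have h2 := hmax K' hK'
        have e2 : insert i (W ∪ S ∪ K') = W ∪ insert i S ∪ K' := by grind
        rw [eA, e2] at h
        linarith
    · refine ⟨insert j K, by grind, ?_, ?_⟩
      · have e3 : W ∪ S ∪ insert j K = insert j ((W ∪ insert i S ∪ K).erase i) := by grind
        rw [e3]
        have := Finset.card_insert_le j ((W ∪ insert i S ∪ K).erase i)
        rw [Finset.card_erase_of_mem hiA] at this
        have : 0 < (W ∪ insert i S ∪ K).card := Finset.card_pos.2 ⟨i, hiA⟩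
        omega
      · intro L hL
        have h1 := hmax' L hL
        have h2 := hmax (K'.erase j) (by grind)
        have e2 : (insert i (W ∪ S ∪ K')).erase j = W ∪ insert i S ∪ K'.erase j := by grind
        have e3 : insert j ((W ∪ insert i S ∪ K).erase i) = W ∪ S ∪ insert j K := by grind
        rw [e3, e2] at h
        linarith

/-- Swap exchange when `|X| ≤ |Y|`. -/
theorem RM.swap {f : Finset α → ℝ} (hf : RM f) (X Y : Finset α) (hc : X.card ≤ Y.card) (i : α)
    (hX : i ∈ X) (hY : i ∉ Y) :
    ∃ j, j ∈ Y ∧ j ∉ X ∧ f X + f Y ≤ f (insert j (X.erase i)) + f ((insert i Y).erase j) := by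
  by_contra hcon
  push Not at hcon
  have h0 : f X + f Y ≤ f (X.erase i) + f (insert i Y) := by
    rcases hf X Y i hX hY with h | ⟨j, hj, hj', h⟩
    · exact h
    · exact absurd h (not_le.2 (hcon j hj hj'))
  obtain ⟨X0, hX0⟩ : ∃ X0, X0 = X.erase i := ⟨_, rfl⟩
  obtain ⟨Y0, hY0⟩ : ∃ Y0, Y0 = insert i Y := ⟨_, rfl⟩
  rw [← hX0, ← hY0] at h0
  have hcX : X0.card + 1 = X.card := by rw [hX0]; exact Finset.card_erase_add_one hX
  have hcY : Y0.card = Y.card + 1 := by rw [hY0]; exact Finset.card_insert_of_notMem hY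
  have eX : insert i X0 = X := by grind
  have eY : Y0.erase i = Y := by grind
  -- prices
  let p : α → ℝ := fun j => f (insert j X0) - f X0
  have hg := hf.modular p
  have hstart : ∃ K ⊆ Y0 \ X0, (X0 ∩ Y0 ∪ X0 \ Y0 ∪ K).card ≤ X0.card ∧
      ∀ K' ⊆ Y0 \ X0, (fun Z => f Z - ∑ e ∈ Z, p e) (X0 ∩ Y0 ∪ X0 \ Y0 ∪ K') ≤
        (fun Z => f Z - ∑ e ∈ Z, p e) (X0 ∩ Y0 ∪ X0 \ Y0 ∪ K) := by
    have e1 : X0 ∩ Y0 ∪ X0 \ Y0 = X0 := by grind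
    rw [e1]
    refine ⟨∅, by simp, by simp, ?_⟩
    intro K' hK'
    have hd : Disjoint X0 K' := by
      rw [Finset.disjoint_left]; grind
    have := hf.sub2 X0 K' hd
    simp only [Finset.union_empty]
    rw [Finset.sum_union hd]
    linarith
  obtain ⟨K, hK, hKc, hmax⟩ := hg.chain (X0 ∩ Y0) (Y0 \ X0) (X0 \ Y0)
    (by rw [Finset.disjoint_left]; grind) (by rw [Finset.disjoint_left]; grind) X0.card hstart
  have h1 := hmax (Y0 \ X0) (le_refl _)
  have e2 : X0 ∩ Y0 ∪ Y0 \ X0 = Y0 := by grind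
  rw [e2] at h1
  obtain ⟨B, hB⟩ : ∃ B, B = X0 ∩ Y0 ∪ K := ⟨_, rfl⟩
  rw [← hB] at h1 hKc
  have hBY : B ⊆ Y0 := by grind
  have h2 := hf.sub3 Y0 (Y0 \ B) Finset.sdiff_subset
  rw [Finset.sdiff_sdiff_eq_self hBY] at h2
  have h3 := Finset.sum_sdiff (f := p) hBY
  have hle : ∀ j ∈ Y0 \ B, p j ≤ f Y0 - f (Y0.erase j) := by
    intro j hj
    by_cases hji : j = i
    · subst hji
      simp only [p]
      rw [eX, eY]; linarith
    · have := hcon j (by grind) (by grind)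
      rw [← hX0, ← hY0] at this
      simp only [p]
      linarith
  have hlt : ∃ j ∈ Y0 \ B, p j < f Y0 - f (Y0.erase j) := by
    have : 1 < (Y0 \ B).card := by
      rw [Finset.card_sdiff_of_subset hBY]; omega
    obtain ⟨j, hj, hji⟩ := Finset.exists_mem_ne this i
    refine ⟨j, hj, ?_⟩
    have := hcon j (by grind) (by grind)
    rw [← hX0, ← hY0] at this
    simp only [p]
    linarith
  have h4 := Finset.sum_lt_sum hle hlt
  linarith

/-- Exchange on subsets of `E` of size at most `k`. -/
def ExOn (E : Finset α) (k : ℕ) (v : Finset α → ℝ) : Prop :=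
  ∀ A ⊆ E, ∀ B ⊆ E, A.card ≤ k → B.card ≤ k → ∀ i, i ∈ A → i ∉ B →
    (B.card + 1 ≤ k ∧ v A + v B ≤ v (A.erase i) + v (insert i B)) ∨
    ∃ j, j ∈ B ∧ j ∉ A ∧ v A + v B ≤ v (insert j (A.erase i)) + v ((insert i B).erase j)

theorem RM.exOn {f : Finset α → ℝ} (hf : RM f) (B E : Finset α) (h : Disjoint B E) (k : ℕ) :
    ExOn E k (fun J => f (B ∪ J)) := by
  intro A hA C hC hAk hCk i hiA hiC
  rw [Finset.disjoint_right] at h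
  have hiB := h (hA hiA)
  have key : (C.card + 1 ≤ k ∧ f (B ∪ A) + f (B ∪ C) ≤
      f ((B ∪ A).erase i) + f (insert i (B ∪ C))) ∨
      ∃ j, j ∈ B ∪ C ∧ j ∉ B ∪ A ∧ f (B ∪ A) + f (B ∪ C) ≤ f (insert j ((B ∪ A).erase i))
        + f ((insert i (B ∪ C)).erase j) := by
    by_cases hck : C.card + 1 ≤ k
    · rcases hf (B ∪ A) (B ∪ C) i (by grind) (by grind) with h | h
      · exact Or.inl ⟨hck, h⟩
      · exact Or.inr h
    · right
      apply hf.swap (B ∪ A) (B ∪ C) _ i (by grind) (by grind)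
      rw [Finset.card_union_of_disjoint (by rw [Finset.disjoint_left]; grind),
        Finset.card_union_of_disjoint (by rw [Finset.disjoint_left]; grind)]
      omega
  have e1 : (B ∪ A).erase i = B ∪ A.erase i := by grind
  have e2 : insert i (B ∪ C) = B ∪ insert i C := by grind
  rcases key with ⟨h1, h2⟩ | ⟨j, hj, hj', h2⟩
  · left
    rw [e1, e2] at h2
    exact ⟨h1, h2⟩
  · right
    refine ⟨j, by grind, by grind, ?_⟩
    have e3 : insert j ((B ∪ A).erase i) = B ∪ insert j (A.erase i) := by grind
    have e4 : (insert i (B ∪ C)).erase j = B ∪ (insert i C).erase j := by grind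
    rw [e3, e4] at h2
    exact h2

/-- Demand set. -/
def Dem (E : Finset α) (k : ℕ) (v : Finset α → ℝ) (p : α → ℝ) (A : Finset α) : Prop :=
  A ⊆ E ∧ A.card ≤ k ∧ ∀ B ⊆ E, B.card ≤ k → v B - ∑ e ∈ B, p e ≤ v A - ∑ e ∈ A, p e

theorem exists_dem (E : Finset α) (k : ℕ) (v : Finset α → ℝ) (p : α → ℝ) :
    ∃ A, Dem E k v p A := by
  obtain ⟨A, hA, hmax⟩ := Finset.exists_max_image (E.powerset.filter (fun A => A.card ≤ k))
    (fun A => v A - ∑ e ∈ A, p e) ⟨∅, by simp⟩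
  simp only [Finset.mem_filter, Finset.mem_powerset] at hA hmax
  exact ⟨A, hA.1, hA.2, fun B hB hk => hmax B ⟨hB, hk⟩⟩

/-- Gross substitutes. -/
theorem ExOn.gs {E : Finset α} {k : ℕ} {v : Finset α → ℝ} (hv : ExOn E k v) (p p' : α → ℝ)
    (hp : ∀ e ∈ E, p e ≤ p' e) (A : Finset α) (hA : Dem E k v p A) :
    ∃ B, Dem E k v p' B ∧ ∀ e ∈ A, p' e = p e → e ∈ B := by
  classical
  obtain ⟨B0, hB0⟩ := exists_dem E k v p'
  obtain ⟨B, hB, hmax⟩ := Finset.exists_max_image (E.powerset.filter (fun B => Dem E k v p' B))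
    (fun B => (B ∩ A.filter (fun e => p' e = p e)).card) ⟨B0, by simp [hB0, hB0.1]⟩
  simp only [Finset.mem_filter, Finset.mem_powerset] at hB hmax
  refine ⟨B, hB.2, ?_⟩
  intro i hiA hpi
  by_contra hiB
  obtain ⟨hBE, -, hBk, hBm⟩ := hB
  obtain ⟨hAE, hAk, hAm⟩ := hA
  have s1 := Finset.add_sum_erase A p hiA
  have s2 := Finset.sum_insert (f := p') hiB
  have contra : ∀ C, Dem E k v p' C → insert i (B ∩ A) ⊆ C → False := by
    intro C hC hsub
    have h1 := hmax C ⟨hC.1, hC⟩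
    have h2 : (B ∩ A.filter (fun e => p' e = p e)).card <
        (C ∩ A.filter (fun e => p' e = p e)).card := by
      apply Finset.card_lt_card
      rw [Finset.ssubset_iff_of_subset]
      · refine ⟨i, ?_, ?_⟩
        · simp [hiA, hpi]; exact hsub (by simp)
        · simp [hiB]
      · intro e he
        simp only [Finset.mem_inter, Finset.mem_filter] at he ⊢
        exact ⟨hsub (by simp [he.1, he.2.1]), he.2⟩
    omega
  rcases hv A hAE B hBE hAk hBk i hiA hiB with ⟨hck, h⟩ | ⟨j, hj, hj', h⟩
  · apply contra (insert i B) _ (by grind)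
    refine ⟨by grind, by rw [Finset.card_insert_of_notMem hiB]; exact hck, ?_⟩
    intro C hC hCk
    have h1 := hBm C hC hCk
    have h2 := hAm (A.erase i) (by grind) ((Finset.card_erase_le).trans hAk)
    linarith
  · apply contra ((insert i B).erase j) _ (by grind)
    have c1 : ((insert i B).erase j).card = B.card := by
      rw [Finset.card_erase_of_mem (by grind), Finset.card_insert_of_notMem hiB]; simp
    refine ⟨by grind, by omega, ?_⟩
    intro C hC hCk
    have h1 := hBm C hC hCk
    have hjA : j ∉ A.erase i := by grind
    have c2 : (insert j (A.erase i)).card = A.card := by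
      rw [Finset.card_insert_of_notMem hjA, Finset.card_erase_add_one hiA]
    have h2 := hAm (insert j (A.erase i)) (by grind) (by omega)
    have s3 := Finset.sum_insert (f := p) hjA
    have s4 := Finset.add_sum_erase (insert i B) p' (a := j) (by grind)
    have h3 := hp j (hBE hj)
    linarith

/-- Auction state. -/
def St (E : Finset α) (k₁ k₂ : ℕ) (v₁ v₂ : Finset α → ℝ) (ε : ℝ) (q : α → ℝ)
    (J₁ J₂ : Finset α) : Prop :=
  Disjoint J₁ J₂ ∧ J₁ ∪ J₂ = E ∧
  (∃ D, Dem E k₁ v₁ (fun e => q e + if e ∈ J₁ then 0 else ε) D ∧ J₁ ⊆ D) ∧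
  (∃ D, Dem E k₂ v₂ (fun e => q e + if e ∈ J₂ then 0 else ε) D ∧ J₂ ⊆ D)

theorem St.symm {E : Finset α} {k₁ k₂ : ℕ} {v₁ v₂ : Finset α → ℝ} {ε : ℝ} {q : α → ℝ}
    {J₁ J₂ : Finset α} (h : St E k₁ k₂ v₁ v₂ ε q J₁ J₂) : St E k₂ k₁ v₂ v₁ ε q J₂ J₁ :=
  ⟨h.1.symm, by rw [Finset.union_comm]; exact h.2.1, h.2.2.2, h.2.2.1⟩

theorem St.step {E : Finset α} {k₁ k₂ : ℕ} {v₁ v₂ : Finset α → ℝ} {ε : ℝ} (hε : 0 < ε)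
    {q : α → ℝ} {J₁ J₂ : Finset α} (hv₂ : ExOn E k₂ v₂) (h : St E k₁ k₂ v₁ v₂ ε q J₁ J₂)
    (hn : ¬ Dem E k₁ v₁ (fun e => q e + if e ∈ J₁ then 0 else ε) J₁) :
    ∃ q' J₁' J₂', St E k₁ k₂ v₁ v₂ ε q' J₁' J₂' ∧ ∑ e ∈ E, q e + ε ≤ ∑ e ∈ E, q' e := by
  obtain ⟨hd, hu, ⟨D, hD, hJD⟩, ⟨D₂, hD₂, hJD₂⟩⟩ := h
  have hne : J₁ ≠ D := by rintro rfl; exact hn hD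
  rw [Finset.disjoint_left] at hd
  have hDE := hD.1
  refine ⟨fun e => q e + if e ∈ D ∧ e ∉ J₁ then ε else 0, D, E \ D, ⟨?_, ?_, ⟨D, ?_, le_refl _⟩, ?_⟩,
    ?_⟩
  · exact Finset.disjoint_sdiff
  · exact Finset.union_sdiff_of_subset hDE
  · have e1 : (fun e => (q e + if e ∈ D ∧ e ∉ J₁ then ε else 0) + if e ∈ D then 0 else ε) =
        (fun e => q e + if e ∈ J₁ then 0 else ε) := by
      funext e
      have := @hJD e
      by_cases h1 : e ∈ D <;> by_cases h2 : e ∈ J₁ <;> simp_all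
    rw [e1]; exact hD
  · have hp : ∀ e ∈ E, (fun e => q e + if e ∈ J₂ then 0 else ε) e ≤
        (fun e => (q e + if e ∈ D ∧ e ∉ J₁ then ε else 0) + if e ∈ E \ D then 0 else ε) e := by
      intro e he
      have h1 : e ∈ J₁ ∨ e ∈ J₂ := by grind
      have h2 := @hJD e
      have h3 := @hd e
      have h4 := hε.le
      by_cases ha : e ∈ D <;> by_cases hb : e ∈ J₁ <;> by_cases hc : e ∈ J₂ <;> simp_all
      linarith
    obtain ⟨B, hB, hB'⟩ := hv₂.gs _ _ hp D₂ hD₂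
    refine ⟨B, hB, ?_⟩
    intro e he
    have heE : e ∈ E := by grind
    have heD : e ∉ D := by grind
    have hJ1 : e ∉ J₁ := fun h => heD (hJD h)
    have hJ2 : e ∈ J₂ := by grind
    apply hB' e (hJD₂ hJ2)
    simp [heD, heE, hJ2]
  · rw [Finset.sum_add_distrib]
    have : ∃ a ∈ D, a ∉ J₁ := by
      by_contra hh
      push Not at hh
      exact hne (Finset.Subset.antisymm hJD hh)
    obtain ⟨a, ha, ha'⟩ := this
    have := Finset.single_le_sum (s := E) (f := fun e => if e ∈ D ∧ e ∉ J₁ then ε else 0)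
      (by intro e _; split_ifs <;> linarith) (hDE ha)
    simp only [ha, ha', not_false_eq_true, and_self, if_true] at this
    linarith

theorem Dem.price_le {E : Finset α} {k : ℕ} {v : Finset α → ℝ} {p : α → ℝ} {D : Finset α}
    (h : Dem E k v p D) {C : ℝ} (hC : ∀ A ⊆ E, |v A| ≤ C) {e : α} (he : e ∈ D) : p e ≤ 2 * C := by
  have h1 := h.2.2 (D.erase e) ((Finset.erase_subset _ _).trans h.1)
    ((Finset.card_erase_le).trans h.2.1)
  have h2 := Finset.add_sum_erase D p he
  have h3 := abs_le.1 (hC D h.1)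
  have h4 := abs_le.1 (hC (D.erase e) ((Finset.erase_subset _ _).trans h.1))
  linarith

theorem St.bound {E : Finset α} {k₁ k₂ : ℕ} {v₁ v₂ : Finset α → ℝ} {ε : ℝ}
    {q : α → ℝ} {J₁ J₂ : Finset α} (h : St E k₁ k₂ v₁ v₂ ε q J₁ J₂) {C : ℝ}
    (hC₁ : ∀ A ⊆ E, |v₁ A| ≤ C) (hC₂ : ∀ A ⊆ E, |v₂ A| ≤ C) :
    ∑ e ∈ E, q e ≤ E.card * (2 * C) := by
  rw [← nsmul_eq_mul]
  apply Finset.sum_le_card_nsmul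
  obtain ⟨hd, hu, ⟨D, hD, hJD⟩, ⟨D₂, hD₂, hJD₂⟩⟩ := h
  intro e he
  have h1 : e ∈ J₁ ∨ e ∈ J₂ := by grind
  rcases h1 with h1 | h1
  · simpa [h1] using hD.price_le hC₁ (hJD h1)
  · simpa [h1] using hD₂.price_le hC₂ (hJD₂ h1)

theorem auction {E : Finset α} {k₁ : ℕ} {v₁ v₂ : Finset α → ℝ} {ε : ℝ} (hε : 0 < ε)
    (hv₁ : ExOn E k₁ v₁) (hv₂ : ExOn E E.card v₂) :
    ∃ (q : α → ℝ) (J₁ J₂ : Finset α), Disjoint J₁ J₂ ∧ J₁ ∪ J₂ = E ∧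
      Dem E k₁ v₁ (fun e => q e + if e ∈ J₁ then 0 else ε) J₁ ∧
      Dem E E.card v₂ (fun e => q e + if e ∈ J₂ then 0 else ε) J₂ := by
  by_contra hcon
  obtain ⟨C, hC⟩ : ∃ C, ∀ A ⊆ E, |v₁ A| ≤ C ∧ |v₂ A| ≤ C := by
    refine ⟨∑ A ∈ E.powerset, (|v₁ A| + |v₂ A|), fun A hA => ?_⟩
    have := Finset.single_le_sum (s := E.powerset) (f := fun A => |v₁ A| + |v₂ A|)
      (fun _ _ => by positivity) (Finset.mem_powerset.2 hA)
    have h1 := abs_nonneg (v₁ A)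
    have h2 := abs_nonneg (v₂ A)
    constructor <;> linarith
  have hC0 : 0 ≤ C := (abs_nonneg _).trans (hC ∅ (by simp)).1
  have hall : ∀ m : ℕ, ∃ q J₁ J₂, St E k₁ E.card v₁ v₂ ε q J₁ J₂ ∧
      E.card * (-(2 * C)) + m * ε ≤ ∑ e ∈ E, q e := by
    intro m
    induction m with
    | zero =>
      refine ⟨fun _ => -(2 * C), ∅, E, ⟨by simp, by simp, ?_, ?_⟩, by simp⟩
      · obtain ⟨D, hD⟩ := exists_dem E k₁ v₁
          (fun e => -(2 * C) + if e ∈ (∅ : Finset α) then 0 else ε)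
        exact ⟨D, hD, by simp⟩
      · refine ⟨E, ⟨le_refl _, le_refl _, ?_⟩, le_refl _⟩
        intro B hB _
        have e1 : ∀ A ⊆ E, ∑ e ∈ A, (-(2 * C) + if e ∈ E then 0 else ε) = - (A.card * (2 * C)) := by
          intro A hA
          rw [Finset.sum_congr rfl (g := fun _ => -(2 * C))]
          · simp
          · intro x hx; simp [hA hx]
        rw [e1 B hB, e1 E (le_refl _)]
        by_cases hBE : B = E
        · rw [hBE]
        · have hlt : B.card < E.card := Finset.card_lt_card (hB.ssubset_of_ne hBE)
          have hlt' : (B.card : ℝ) + 1 ≤ E.card := by exact_mod_cast hlt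
          have h1 := abs_le.1 (hC B hB).2
          have h2 := abs_le.1 (hC E (le_refl _)).2
          nlinarith
    | succ m ih =>
      obtain ⟨q, J₁, J₂, hS, hq⟩ := ih
      by_cases hn₁ : Dem E k₁ v₁ (fun e => q e + if e ∈ J₁ then 0 else ε) J₁
      · by_cases hn₂ : Dem E E.card v₂ (fun e => q e + if e ∈ J₂ then 0 else ε) J₂
        · exact absurd ⟨q, J₁, J₂, hS.1, hS.2.1, hn₁, hn₂⟩ hcon
        · obtain ⟨q', J₁', J₂', hS', hq'⟩ := hS.symm.step hε hv₁ hn₂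
          refine ⟨q', J₂', J₁', hS'.symm, ?_⟩
          push_cast; linarith
      · obtain ⟨q', J₁', J₂', hS', hq'⟩ := hS.step hε hv₂ hn₁
        refine ⟨q', J₁', J₂', hS', ?_⟩
        push_cast; linarith
  obtain ⟨m, hm⟩ := exists_nat_gt ((E.card * (4 * C)) / ε)
  obtain ⟨q, J₁, J₂, hS, hq⟩ := hall m
  have h1 := hS.bound (fun A hA => (hC A hA).1) (fun A hA => (hC A hA).2)
  rw [div_lt_iff₀ hε] at hm
  linarith

theorem Dem.approx {E : Finset α} {k : ℕ} {v : Finset α → ℝ} {ε : ℝ} (hε : 0 < ε) {q : α → ℝ}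
    {J : Finset α} (h : Dem E k v (fun e => q e + if e ∈ J then 0 else ε) J)
    {B : Finset α} (hB : B ⊆ E) (hk : B.card ≤ k) :
    v B - ∑ e ∈ B, q e - E.card * ε ≤ v J - ∑ e ∈ J, q e := by
  have h1 := h.2.2 B hB hk
  rw [Finset.sum_add_distrib, Finset.sum_add_distrib] at h1
  have h2 : ∑ e ∈ J, (if e ∈ J then 0 else ε) = 0 := by
    apply Finset.sum_eq_zero; intro x hx; simp [hx]
  have h3 : ∑ e ∈ B, (if e ∈ J then 0 else ε) ≤ B.card • ε := by
    apply Finset.sum_le_card_nsmul; intro x _; split_ifs <;> linarith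
  have h4 : (B.card : ℝ) ≤ E.card := by exact_mod_cast Finset.card_le_card hB
  rw [nsmul_eq_mul] at h3
  have h5 : (B.card : ℝ) * ε ≤ E.card * ε := mul_le_mul_of_nonneg_right h4 hε.le
  linarith

theorem RM.weak {f : Finset α → ℝ} (hf : RM f) (W B E I : Finset α) (hWB : W ⊆ B)
    (hBI : Disjoint B I) (hEI : Disjoint E I) (K0 : Finset α) (hK0 : K0 ⊆ E) (K2 : Finset α)
    (hK2 : K2 ⊆ E) :
    ∃ K1 ⊆ E, ∃ K ⊆ E, K1.card ≤ K0.card + I.card ∧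
      f (B ∪ I ∪ K0) + f (W ∪ K2) ≤ f (B ∪ K1) + f (W ∪ I ∪ K) := by
  induction I using Finset.induction_on generalizing K0 with
  | empty => exact ⟨K0, hK0, K2, hK2, by simp, by simp⟩
  | insert i I hi ih =>
    rw [Finset.disjoint_insert_right] at hBI hEI
    obtain ⟨C, hC, hmax⟩ := Finset.exists_max_image E.powerset (fun K => f (W ∪ I ∪ K))
      ⟨∅, by simp⟩
    simp only [Finset.mem_powerset] at hC hmax
    have step : ∃ K0' ⊆ E, ∃ K ⊆ E, K0'.card ≤ K0.card + 1 ∧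
        f (B ∪ insert i I ∪ K0) + f (W ∪ I ∪ C) ≤ f (B ∪ I ∪ K0') + f (W ∪ insert i I ∪ K) := by
      have eA : (B ∪ insert i I ∪ K0).erase i = B ∪ I ∪ K0 := by grind
      rcases hf (B ∪ insert i I ∪ K0) (W ∪ I ∪ C) i (by simp) (by grind) with h | ⟨j, hj, hj', h⟩
      · refine ⟨K0, hK0, C, hC, by omega, ?_⟩
        have e2 : insert i (W ∪ I ∪ C) = W ∪ insert i I ∪ C := by grind
        rwa [eA, e2] at h
      · refine ⟨insert j K0, by grind, C.erase j, by grind, Finset.card_insert_le _ _, ?_⟩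
        have e2 : (insert i (W ∪ I ∪ C)).erase j = W ∪ insert i I ∪ C.erase j := by grind
        have e3 : insert j (B ∪ I ∪ K0) = B ∪ I ∪ insert j K0 := by grind
        rwa [eA, e2, e3] at h
    obtain ⟨K0', hK0', K, hK, hcard, h⟩ := step
    obtain ⟨K1, hK1, K', hK', hc', h'⟩ := ih hBI.2 hEI.2 K0' hK0'
    refine ⟨K1, hK1, K, hK, ?_, ?_⟩
    · rw [Finset.card_insert_of_notMem hi]; omega
    · have := hmax K' hK'
      linarith

theorem RM.main {f : Finset α → ℝ} (hf : RM f) (X Y I : Finset α) (hI : I ⊆ X \ Y) :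
    ∃ J ⊆ Y \ X, J.card ≤ I.card ∧ f X + f Y ≤ f ((X \ I) ∪ J) + f ((Y \ J) ∪ I) := by
  obtain ⟨E, hE⟩ : ∃ E, E = Y \ X := ⟨_, rfl⟩
  obtain ⟨W, hW⟩ : ∃ W, W = X ∩ Y := ⟨_, rfl⟩
  obtain ⟨B, hB⟩ : ∃ B, B = X \ I := ⟨_, rfl⟩
  have hBI : Disjoint B I := by rw [Finset.disjoint_left]; grind
  have hEI : Disjoint E I := by rw [Finset.disjoint_left]; grind
  have hBE : Disjoint B E := by rw [Finset.disjoint_left]; grind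
  have hWI : Disjoint W I := by rw [Finset.disjoint_left]; grind
  have hWE : Disjoint W E := by rw [Finset.disjoint_left]; grind
  have hWIE : Disjoint (W ∪ I) E := by rw [Finset.disjoint_left]; grind
  have eX : B ∪ I = X := by grind
  have eY : W ∪ E = Y := by grind
  have approx : ∀ ε : ℝ, 0 < ε → ∃ J ⊆ E, J.card ≤ I.card ∧
      f X + f Y - 2 * E.card * ε ≤ f (B ∪ J) + f ((Y \ J) ∪ I) := by
    intro ε hε
    obtain ⟨q, J₁, J₂, hd, hu, hD₁, hD₂⟩ := auction hε (hf.exOn B E hBE I.card)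
      (hf.exOn (W ∪ I) E hWIE E.card)
    refine ⟨J₁, hD₁.1, hD₁.2.1, ?_⟩
    obtain ⟨K1, hK1, K, hK, hc, h⟩ := (hf.modular q).weak W B E I (by grind) hBI hEI ∅ (by simp)
      E (le_refl _)
    have h1 := hD₁.approx hε hK1 (by simpa using hc)
    have h2 := hD₂.approx hε hK (Finset.card_le_card hK)
    have e1 : (Y \ J₁) ∪ I = W ∪ I ∪ J₂ := by
      rw [Finset.disjoint_left] at hd
      grind
    have dBK : Disjoint B K1 := hBE.mono_right hK1
    have dWK : Disjoint (W ∪ I) K := hWIE.mono_right hK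
    have s := Finset.sum_union (f := q) hd
    rw [hu] at s
    simp only [Finset.union_empty] at h
    rw [Finset.sum_union hBI, Finset.sum_union hWE, Finset.sum_union dBK, Finset.sum_union dWK,
      Finset.sum_union hWI, eX, eY] at h
    rw [e1]
    linarith
  rw [← hE, ← hB]
  by_contra hcon
  push Not at hcon
  obtain ⟨J0, hJ0, hmin⟩ := Finset.exists_max_image
    (E.powerset.filter (fun J => J.card ≤ I.card)) (fun J => f (B ∪ J) + f ((Y \ J) ∪ I))
    ⟨∅, by simp⟩
  simp only [Finset.mem_filter, Finset.mem_powerset] at hJ0 hmin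
  have hlt := hcon J0 hJ0.1 hJ0.2
  obtain ⟨δ, hδ⟩ : ∃ δ, δ = f X + f Y - (f (B ∪ J0) + f ((Y \ J0) ∪ I)) := ⟨_, rfl⟩
  have hδ0 : 0 < δ := by linarith
  have hpos : (0 : ℝ) < 2 * E.card + 1 := by positivity
  obtain ⟨J, hJ, hJc, h⟩ := approx (δ / (2 * E.card + 1)) (by positivity)
  have h1 := hmin J ⟨hJ, hJc⟩
  have h2 : 2 * (E.card : ℝ) * (δ / (2 * E.card + 1)) < δ := by
    rw [mul_div_assoc', div_lt_iff₀ hpos]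
    nlinarith
  linarith

/-- Exchange property with values in `WithBot ℝ`. -/
def BM (f : Finset α → WithBot ℝ) : Prop :=
  ∀ X Y : Finset α, ∀ i, i ∈ X → i ∉ Y →
    f X + f Y ≤ f (X.erase i) + f (insert i Y) ∨
    ∃ j, j ∈ Y ∧ j ∉ X ∧ f X + f Y ≤ f (insert j (X.erase i)) + f ((insert i Y).erase j)

theorem MnatConcave.bm {f : Finset α → WithBot ℝ} (hf : MnatConcave f) : BM f := by
  intro X Y i hX hY
  by_cases hb : f X + f Y = ⊥
  · left; rw [hb]; exact bot_le
  · have h := hf X Y i (by simp [hX, hY])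
    rcases le_max_iff.1 h with h | h
    · exact Or.inl h
    · right
      rw [Finset.le_sup_iff (bot_lt_iff_ne_bot.2 hb)] at h
      obtain ⟨j, hj, h⟩ := h
      rw [Finset.mem_sdiff] at hj
      exact ⟨j, hj.1, hj.2, h⟩

/-- Flip membership of `e`. -/
def flip1 (e : α) (Z : Finset α) : Finset α := if e ∈ Z then Z.erase e else insert e Z

theorem mem_flip1 (e a : α) (Z : Finset α) :
    a ∈ flip1 e Z ↔ (a = e ∧ a ∉ Z) ∨ (a ≠ e ∧ a ∈ Z) := by
  unfold flip1; split_ifs <;> grind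

/-- Allow flipping `e` at cost `M`. -/
noncomputable def relax (f : Finset α → WithBot ℝ) (e : α) (M : ℝ) (Z : Finset α) : WithBot ℝ :=
  max (f Z) (f (flip1 e Z) + ((-M : ℝ) : WithBot ℝ))

/-- `Z₀` is `Z` up to a flip of `e`, with `c` the cost. -/
def FlipRel (e : α) (m : WithBot ℝ) (Z Z₀ : Finset α) (c : WithBot ℝ) : Prop :=
  (∀ a, a ≠ e → (a ∈ Z ↔ a ∈ Z₀)) ∧ (((e ∈ Z ↔ e ∈ Z₀) ∧ c = 0) ∨ (¬ (e ∈ Z ↔ e ∈ Z₀) ∧ c = m))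

theorem FlipRel.le {f : Finset α → WithBot ℝ} {e : α} {M : ℝ} {Z Z₀ : Finset α} {c : WithBot ℝ}
    (h : FlipRel e ((-M : ℝ) : WithBot ℝ) Z Z₀ c) : f Z₀ + c ≤ relax f e M Z := by
  obtain ⟨h1, ⟨h2, rfl⟩ | ⟨h2, rfl⟩⟩ := h
  · have : Z₀ = Z := by ext a; by_cases ha : a = e <;> grind
    rw [this, add_zero]; exact le_max_left _ _
  · have : Z₀ = flip1 e Z := by ext a; rw [mem_flip1]; by_cases ha : a = e <;> grind
    rw [this]; exact le_max_right _ _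

theorem exists_rel (f : Finset α → WithBot ℝ) (e : α) (M : ℝ) (Z : Finset α) :
    ∃ Z₀ c, FlipRel e ((-M : ℝ) : WithBot ℝ) Z Z₀ c ∧ relax f e M Z = f Z₀ + c := by
  rcases max_choice (f Z) (f (flip1 e Z) + ((-M : ℝ) : WithBot ℝ)) with h | h
  · exact ⟨Z, 0, ⟨by simp, by simp⟩, by rw [relax, h, add_zero]⟩
  · refine ⟨flip1 e Z, ((-M : ℝ) : WithBot ℝ), ⟨?_, Or.inr ⟨?_, rfl⟩⟩, by rw [relax, h]⟩
    · intro a ha; rw [mem_flip1]; simp [ha]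
    · rw [mem_flip1]; simp

theorem BM.relax {f : Finset α → WithBot ℝ} (hf : BM f) (e : α) {M : ℝ} (hM : 0 ≤ M) :
    BM (relax f e M) := by
  intro X Y i hX hY
  obtain ⟨X₀, c, hXc, eX⟩ := exists_rel f e M X
  obtain ⟨Y₀, d, hYd, eY⟩ := exists_rel f e M Y
  obtain ⟨m, hm⟩ : ∃ m, m = ((-M : ℝ) : WithBot ℝ) := ⟨_, rfl⟩
  have hm0 : m ≤ 0 := by rw [hm]; exact_mod_cast neg_nonpos.2 hM
  have hmm : m + m ≤ 0 := by simpa using add_le_add hm0 hm0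
  have hc0 : c + d ≤ 0 := by
    obtain ⟨-, ⟨-, rfl⟩ | ⟨-, rfl⟩⟩ := hXc <;> obtain ⟨-, ⟨-, rfl⟩ | ⟨-, rfl⟩⟩ := hYd <;>
      rw [← hm] at * <;> simp [hm0, hmm]
  -- the transfer principle
  have key : ∀ X' Y' X₁ Y₁ c' d', FlipRel e ((-M : ℝ) : WithBot ℝ) X' X₁ c' →
      FlipRel e ((-M : ℝ) : WithBot ℝ) Y' Y₁ d' → f X₀ + f Y₀ ≤ f X₁ + f Y₁ → c + d ≤ c' + d' →
      _root_.relax f e M X + _root_.relax f e M Y ≤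
        _root_.relax f e M X' + _root_.relax f e M Y' := by
    intro X' Y' X₁ Y₁ c' d' h1 h2 h3 h4
    rw [eX, eY]
    calc f X₀ + c + (f Y₀ + d) = (f X₀ + f Y₀) + (c + d) := by ac_rfl
      _ ≤ (f X₁ + f Y₁) + (c' + d') := add_le_add h3 h4
      _ = (f X₁ + c') + (f Y₁ + d') := by ac_rfl
      _ ≤ _ := add_le_add h1.le h2.le
  rw [← hm] at hXc hYd key
  by_cases hie : i = e
  · subst hie
    obtain ⟨hX1, hX2⟩ := hXc
    obtain ⟨hY1, hY2⟩ := hYd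
    rcases hX2 with ⟨hX2, hce⟩ | ⟨hX2, hce⟩ <;> rcases hY2 with ⟨hY2, hde⟩ | ⟨hY2, hde⟩ <;>
      rw [hce, hde] at key
    · rcases hf X₀ Y₀ i (by grind) (by grind) with h | ⟨j, hj, hj', h⟩
      · left
        exact key _ _ _ _ 0 0 ⟨by grind, by grind⟩ ⟨by grind, by grind⟩ h le_rfl
      · right
        refine ⟨j, by grind, by grind, ?_⟩
        exact key _ _ _ _ 0 0 ⟨by grind, by grind⟩ ⟨by grind, by grind⟩ h le_rfl
    · left
      exact key _ _ X₀ Y₀ m 0 ⟨by grind, by grind⟩ ⟨by grind, by grind⟩ le_rfl (by simp)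
    · left
      exact key _ _ X₀ Y₀ 0 m ⟨by grind, by grind⟩ ⟨by grind, by grind⟩ le_rfl (by simp)
    · left
      exact key _ _ X₀ Y₀ 0 0 ⟨by grind, by grind⟩ ⟨by grind, by grind⟩ le_rfl (by rw [add_zero]; exact hmm)
  · have hX1 := hXc.1
    have hY1 := hYd.1
    have hX2 := hXc.2
    have hY2 := hYd.2
    rcases hf X₀ Y₀ i (by grind) (by grind) with h | ⟨j, hj, hj', h⟩
    · left
      exact key _ _ _ _ c d ⟨by grind, by grind⟩ ⟨by grind, by grind⟩ h le_rfl
    · by_cases hje : j = e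
      · subst hje
        rcases hX2 with ⟨hX2, hce⟩ | ⟨hX2, hce⟩ <;> rcases hY2 with ⟨hY2, hde⟩ | ⟨hY2, hde⟩ <;>
      rw [hce, hde] at key
        · right
          refine ⟨j, by grind, by grind, ?_⟩
          exact key _ _ _ _ 0 0 ⟨by grind, by grind⟩ ⟨by grind, by grind⟩ h le_rfl
        · left
          exact key _ _ _ _ m 0 ⟨by grind, by grind⟩ ⟨by grind, by grind⟩ h (by simp)
        · left
          exact key _ _ _ _ 0 m ⟨by grind, by grind⟩ ⟨by grind, by grind⟩ h (by simp)
        · left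
          exact key _ _ _ _ 0 0 ⟨by grind, by grind⟩ ⟨by grind, by grind⟩ h (by rw [add_zero]; exact hmm)
      · right
        refine ⟨j, by grind, by grind, ?_⟩
        exact key _ _ _ _ c d ⟨by grind, by grind⟩ ⟨by grind, by grind⟩ h le_rfl

theorem BM.finite {f : Finset α → WithBot ℝ} (hf : BM f) (Z₀ : Finset α) (hZ₀ : f Z₀ ≠ ⊥)
    (c : ℝ) (hc : ∀ Z, f Z ≤ (c : WithBot ℝ)) {M : ℝ} (hM : 0 ≤ M) (S : Finset α) :
    ∃ g : Finset α → WithBot ℝ, BM g ∧ (∀ Z, f Z ≤ g Z) ∧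
      (∀ Z, g Z = f Z ∨ g Z ≤ ((c - M : ℝ) : WithBot ℝ)) ∧
      ∀ Z, (∀ a, a ∉ S → (a ∈ Z ↔ a ∈ Z₀)) → g Z ≠ ⊥ := by
  induction S using Finset.induction_on with
  | empty =>
    refine ⟨f, hf, fun _ => le_rfl, fun _ => Or.inl rfl, fun Z hZ => ?_⟩
    have : Z = Z₀ := by ext a; exact hZ a (by simp)
    rw [this]; exact hZ₀
  | insert e S he ih =>
    obtain ⟨g, hg, h1, h2, h3⟩ := ih
    have hgc : ∀ Z, g Z ≤ (c : WithBot ℝ) := by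
      intro Z
      rcases h2 Z with h | h
      · rw [h]; exact hc Z
      · exact h.trans (by exact_mod_cast (by linarith : c - M ≤ c))
    refine ⟨_root_.relax g e M, hg.relax e hM, fun Z => (h1 Z).trans (le_max_left _ _), ?_, ?_⟩
    · intro Z
      rcases max_choice (g Z) (g (flip1 e Z) + ((-M : ℝ) : WithBot ℝ)) with h | h
      · rw [_root_.relax, h]; exact h2 Z
      · right
        rw [_root_.relax, h, sub_eq_add_neg, WithBot.coe_add]
        exact add_le_add (hgc _) le_rfl
    · intro Z hZ
      by_cases hez : e ∈ Z ↔ e ∈ Z₀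
      · have := h3 Z (by intro a ha; by_cases hae : a = e <;> grind)
        exact ne_bot_of_le_ne_bot this (le_max_left _ _)
      · have := h3 (flip1 e Z) (by
          intro a ha; rw [mem_flip1]; by_cases hae : a = e <;> grind)
        refine ne_bot_of_le_ne_bot ?_ (le_max_right _ _)
        rw [Ne, WithBot.add_eq_bot]
        simp [this]

end aux

theorem stmt_18 {α : Type*} [Fintype α] [DecidableEq α] (f : Finset α → WithBot ℝ)
    (hne : ∃ X, f X ≠ ⊥) (hf : MnatConcave f) :
    ∀ X Y : Finset α, ∀ I ⊆ X \ Y,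
      ∃ J ⊆ Y \ X, J.card ≤ I.card ∧
        f X + f Y ≤ f ((X \ I) ∪ J) + f ((Y \ J) ∪ I) := by
  intro X Y I hI
  by_cases hb : f X + f Y = ⊥
  · exact ⟨∅, by simp, by simp, by rw [hb]; exact bot_le⟩
  rw [WithBot.add_eq_bot, not_or] at hb
  obtain ⟨x, hx⟩ := WithBot.ne_bot_iff_exists.1 hb.1
  obtain ⟨y, hy⟩ := WithBot.ne_bot_iff_exists.1 hb.2
  obtain ⟨Z₁, -, hZ₁⟩ := Finset.exists_max_image (Finset.univ : Finset (Finset α)) f ⟨∅, by simp⟩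
  have hc1 : f Z₁ ≠ ⊥ := ne_bot_of_le_ne_bot hb.1 (hZ₁ X (by simp))
  obtain ⟨c, hc⟩ := WithBot.ne_bot_iff_exists.1 hc1
  have hcf : ∀ Z, f Z ≤ (c : WithBot ℝ) := fun Z => by rw [hc]; exact hZ₁ Z (by simp)
  have hxc : x ≤ c := by have := hcf X; rw [← hx] at this; exact_mod_cast this
  have hyc : y ≤ c := by have := hcf Y; rw [← hy] at this; exact_mod_cast this
  obtain ⟨M, hM⟩ : ∃ M, M = 2 * c - (x + y) + 1 := ⟨_, rfl⟩
  have hM0 : 0 ≤ M := by linarith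
  obtain ⟨g, hg, h1, h2, h3⟩ := hf.bm.finite X hb.1 c hcf hM0 Finset.univ
  have h3' : ∀ Z, ∃ r : ℝ, (r : WithBot ℝ) = g Z := fun Z =>
    WithBot.ne_bot_iff_exists.1 (h3 Z (by simp))
  choose r hr using h3'
  have hrm : RM r := by
    intro X Y i hX hY
    rcases hg X Y i hX hY with h | ⟨j, hj, hj', h⟩
    · left
      simp only [← hr] at h
      exact_mod_cast h
    · right
      refine ⟨j, hj, hj', ?_⟩
      simp only [← hr] at h
      exact_mod_cast h
  obtain ⟨J, hJ, hJc, h⟩ := hrm.main X Y I hI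
  refine ⟨J, hJ, hJc, ?_⟩
  have hxr : x ≤ r X := by have := h1 X; rw [← hx, ← hr] at this; exact_mod_cast this
  have hyr : y ≤ r Y := by have := h1 Y; rw [← hy, ← hr] at this; exact_mod_cast this
  have hrc : ∀ Z, (r Z : WithBot ℝ) = f Z ∨ r Z ≤ c - M := by
    intro Z
    rcases h2 Z with h | h
    · left; rw [hr, h]
    · right; rw [← hr] at h; exact_mod_cast h
  have hrc' : ∀ Z, r Z ≤ c := by
    intro Z
    rcases hrc Z with h | h
    · have := hcf Z; rw [← h] at this; exact_mod_cast this
    · linarith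
  rcases hrc ((X \ I) ∪ J) with h4 | h4
  · rcases hrc ((Y \ J) ∪ I) with h5 | h5
    · rw [← h4, ← h5, ← hx, ← hy]
      exact_mod_cast (by linarith : x + y ≤ r ((X \ I) ∪ J) + r ((Y \ J) ∪ I))
    · have := hrc' ((X \ I) ∪ J)
      linarith
  · have := hrc' ((Y \ J) ∪ I)
    linarith
end
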